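/- Let N be a finite group of odd order and let α be an automorphism of N of order 2. Suppose the subgroup M = [N, α] has Fitting height h ≥ 2. Then [N : F(N)] < |C_{F_{h-2}(M)}(α)| · |C_M(α)| · |C_N(α)| / 2^{h-3}, and this quantity is at most (2/3) · |C_N(α)|^3 / 2^{h-2}. -/

import Mathlib

/-!
Write `C_Q` for the fixed points of an involutory automorphism `σ` in a `σ`-invariant group `Q` of
odd order, and `I_Q` for the set of elements of `Q` inverted by `σ`. Since square roots are unique
in `Q`, every coset of `C_Q` contains exactly one inverted element, so `|Q| = |I_Q|·|C_Q|`
(`ii_mul_cc`; the two cardinalities are called `ii σ Q` and `cc σ Q`).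

The core is a statement on linear groups (`stmtL`). Let `V` be a finite abelian group of odd order,
`α` an automorphism of `V` with `α² = 1`, and `Q` a nilpotent group of automorphisms of `V`, of odd
order prime to `|V|` and normalized by `α`. Then `|I_Q|` is `1` or at most `|C_V(α)|² / 2`, and
`|I_Q| ≤ |C_V(α)|·|C_Q|`. The proof is by induction on `|V|`, with `Q = [Q, α]`. If `V` is
indecomposable, then (`block_trichotomy`) `V` is the sum of two `Q`-invariant subgroups swapped by
`α`, or it is induced from a normal subgroup of prime index in `Q`, or the `α`-invariant abelian
normal subgroups of `Q` act fixed-point-freely, hence are cyclic, which forces `Q` to be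
abelian and inverted by `α`. The first two cases use the bound `2|Q| ≤ |V|` (`stmtS`), proved in the same way.

Let `M = [M, σ]` have odd order, with Fitting series `F_i`. The group `F_{i+2}` acts as a nilpotent
group on each `M⟨σ⟩`-chief factor between `F_i` and `F_{i+1}`, so `stmtL` bounds the inverted
elements of `F_{i+2}` by those of the centralizer of this factor (`chief_step`). The subgroup
centralizing all these factors is `F_{i+1}`, by maximality of the latter; multiplying the bounds
along a chief series gives (`layer`), with `c_i = |C_{F_i}|` and `n_i = |I_{F_i}|`,
`n_{i+2} = n_{i+1}` or `2 n_{i+2} c_i² ≤ c_{i+1}² n_{i+1}`, and `n_{i+2} c_i ≤ c_{i+2} n_{i+1}`.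
Moreover `3 c_i ≤ c_{i+1}` for `i + 1 < h` (`FitLike.cc_lt`): otherwise `σ` inverts
`F_{i+1}/F_i`, so `[M, σ] = M` centralizes it and the series stops there. The product of the first
inequalities for `i < h - 2` and of the second one for `i = h - 2` is
`2^(h-2) [M : F_1(M)] ≤ c_{h-2} c_h²` (`FitLike.index_le`).

Finally, `M = [N, α]` contains all elements of `N` inverted by `α`, so `[N : M] = |C_N|/|C_M|`, and
`F_1(M) ≤ F(N)` (`FitLike.map_le_fitting`). This gives the first inequality, with a factor `2` to
spare; the second one follows from `3 c_{h-2} ≤ |C_M| ≤ |C_N|`.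
-/

/-- The Fitting subgroup of a group: the join of all nilpotent normal subgroups.
For a finite group this is the unique largest nilpotent normal subgroup. -/
def Fitting (G : Type*) [Group G] : Subgroup G :=
  ⨆ (N : Subgroup G) (_ : N.Normal ∧ Group.IsNilpotent N), N

theorem Fitting.normal (G : Type*) [Group G] : (Fitting G).Normal := by
  have key : ∀ g : G, Subgroup.map (MulAut.conj g).toMonoidHom (Fitting G) ≤ Fitting G := by
    intro g
    rw [Fitting, Subgroup.map_iSup]
    refine iSup_le fun N => ?_
    rw [Subgroup.map_iSup]
    refine iSup_le fun hN => ?_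
    have h1 : (Subgroup.map (MulAut.conj g).toMonoidHom N).Normal :=
      hN.1.map _ (MulEquiv.surjective _)
    have h2 : Group.IsNilpotent (Subgroup.map (MulAut.conj g).toMonoidHom N) := by
      haveI := hN.2
      exact nilpotent_of_surjective
        ((MulAut.conj g).toMonoidHom.subgroupMap N)
        ((MulAut.conj g).toMonoidHom.subgroupMap_surjective N)
    exact le_iSup₂ (f := fun (N : Subgroup G) (_ : N.Normal ∧ Group.IsNilpotent N) => N)
      (Subgroup.map (MulAut.conj g).toMonoidHom N) ⟨h1, h2⟩
  constructor
  intro x hx g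
  exact key g ⟨x, hx, rfl⟩

/-- The Fitting series of a group, together with the proof of normality of each term:
`F_0 = 1` and `F_{i+1}/F_i = F(G/F_i)`. -/
def fittingSeries (G : Type*) [Group G] : ℕ → {H : Subgroup G // H.Normal}
  | 0 => ⟨⊥, inferInstance⟩
  | n + 1 =>
    let p := fittingSeries G n
    letI : p.1.Normal := p.2
    ⟨Subgroup.comap (QuotientGroup.mk' p.1) (Fitting (G ⧸ p.1)),
      Subgroup.Normal.comap (Fitting.normal _) _⟩

/-- The Fitting height of a group: the least `n` with `F_n(G) = G`
(defined as `sInf` of the set of such `n`). -/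
noncomputable def fittingHeight (G : Type*) [Group G] : ℕ :=
  sInf {n : ℕ | (fittingSeries G n).1 = ⊤}

/-! ### Fixed and inverted elements -/

namespace OddInvolution

section Basics

variable {G : Type*} [Group G]

/-- The subgroup of fixed points of `σ`. -/
def fixSub (σ : MulAut G) : Subgroup G where
  carrier := {x | σ x = x}
  one_mem' := map_one σ
  mul_mem' := by
    intro a b ha hb
    simp only [Set.mem_ofPred_eq] at *
    rw [map_mul, ha, hb]
  inv_mem' := by
    intro a ha
    simp only [Set.mem_ofPred_eq] at *
    rw [map_inv, ha]

@[simp] lemma mem_fixSub {σ : MulAut G} {x : G} : x ∈ fixSub σ ↔ σ x = x := Iff.rfl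

/-- The number `|C_Q(σ)|` of elements of `Q` fixed by `σ`. -/
noncomputable def cc (σ : MulAut G) (Q : Subgroup G) : ℕ := Nat.card {x : G // x ∈ Q ∧ σ x = x}

/-- The number of elements of `Q` inverted by `σ`. -/
noncomputable def ii (σ : MulAut G) (Q : Subgroup G) : ℕ := Nat.card {x : G // x ∈ Q ∧ σ x = x⁻¹}

/-- `Q` is mapped into itself by `σ`. -/
def SInv (σ : MulAut G) (Q : Subgroup G) : Prop := ∀ x ∈ Q, σ x ∈ Q

lemma cc_eq (σ : MulAut G) (Q : Subgroup G) : cc σ Q = Nat.card ↥(Q ⊓ fixSub σ) := rfl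

lemma cc_pos [Finite G] (σ : MulAut G) (Q : Subgroup G) : 0 < cc σ Q := by
  rw [cc_eq]; exact Nat.card_pos

lemma ii_pos [Finite G] (σ : MulAut G) (Q : Subgroup G) : 0 < ii σ Q := by
  have : Nonempty {x : G // x ∈ Q ∧ σ x = x⁻¹} := ⟨⟨1, Q.one_mem, by simp⟩⟩
  exact Nat.card_pos

lemma cc_mono [Finite G] (σ : MulAut G) {P Q : Subgroup G} (h : P ≤ Q) : cc σ P ≤ cc σ Q := by
  rw [cc_eq, cc_eq]
  exact Subgroup.card_le_of_le (inf_le_inf_right _ h)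

lemma ii_mono [Finite G] (σ : MulAut G) {P Q : Subgroup G} (h : P ≤ Q) : ii σ P ≤ ii σ Q :=
  Nat.card_le_card_of_injective (fun x => ⟨x.1, h x.2.1, x.2.2⟩)
    (fun x y hxy => Subtype.ext (congrArg (fun z => z.1) hxy))

lemma odd_of_le [Finite G] {P Q : Subgroup G} (h : P ≤ Q) (hQ : Odd (Nat.card Q)) :
    Odd (Nat.card P) := hQ.of_dvd_nat (Subgroup.card_dvd_of_le h)

lemma cc_odd [Finite G] (σ : MulAut G) {Q : Subgroup G} (hQ : Odd (Nat.card Q)) :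
    Odd (cc σ Q) := by
  rw [cc_eq]; exact odd_of_le inf_le_left hQ

lemma invol_apply {σ : MulAut G} (hσ : σ * σ = 1) (x : G) : σ (σ x) = x := by
  rw [← MulAut.mul_apply, hσ, MulAut.one_apply]

/-- An involution of a set of odd size has a fixed point. -/
lemma exists_fixed_of_odd {T : Type*} [Finite T] (hT : Odd (Nat.card T)) (f : T → T)
    (hf : ∀ t, f (f t) = t) : ∃ t, f t = t := by
  classical
  have := Fintype.ofFinite T
  haveI : Fact (Nat.Prime 2) := ⟨Nat.prime_two⟩
  let s : Equiv.Perm T := ⟨f, f, hf, hf⟩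
  have hs : s ^ 2 ^ 1 = 1 := by
    ext t
    simp [s, pow_two, hf]
  have h2 : ¬ 2 ∣ Fintype.card T := by
    rw [← Nat.card_eq_fintype_card]
    exact fun h => (Nat.not_even_iff_odd.mpr hT) (even_iff_two_dvd.mpr h)
  exact Equiv.Perm.exists_fixed_point_of_prime h2 hs

lemma coset_fixed {σ : MulAut G} (hσ : σ * σ = 1) {K : Subgroup G} [Finite K]
    (hK : Odd (Nat.card K)) (hKσ : SInv σ K) {x : G} (hx : x⁻¹ * σ x ∈ K) :
    ∃ k ∈ K, σ (x * k) = x * k := by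
  obtain ⟨k, hk⟩ := exists_fixed_of_odd hK
    (fun k : K => ⟨x⁻¹ * σ x * σ k, K.mul_mem hx (hKσ _ k.2)⟩) (by
      intro k
      ext
      simp [invol_apply hσ]
      group)
  refine ⟨k, k.2, ?_⟩
  have := congrArg (fun z : K => x * (z : G)) hk
  simpa [mul_assoc] using this

/-- In a subgroup of odd order every element has a square root which is a power of it. -/
lemma exists_half [Finite G] {Q : Subgroup G} (hQ : Odd (Nat.card Q)) :
    ∃ m : ℕ, ∀ x ∈ Q, x ^ (2 * m) = x := by
  obtain ⟨k, hk⟩ := hQ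
  refine ⟨k + 1, fun x hx => ?_⟩
  have h1 : x ^ Nat.card Q = 1 := by
    exact congrArg Subtype.val (pow_card_eq_one' (x := (⟨x, hx⟩ : Q)))
  rw [show 2 * (k + 1) = Nat.card Q + 1 by omega, pow_succ, h1, one_mul]

lemma eq_one_of_sq [Finite G] {Q : Subgroup G} (hQ : Odd (Nat.card Q)) {x : G} (hx : x ∈ Q)
    (h : x * x = 1) : x = 1 := by
  obtain ⟨m, hm⟩ := exists_half hQ
  rw [← hm x hx, pow_mul, pow_two, h, one_pow]

lemma eq_of_sq_eq [Finite G] {Q : Subgroup G} (hQ : Odd (Nat.card Q)) {x y : G} (hx : x ∈ Q)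
    (hy : y ∈ Q) (h : x * x = y * y) : x = y := by
  obtain ⟨m, hm⟩ := exists_half hQ
  rw [← hm x hx, ← hm y hy, pow_mul, pow_mul, pow_two, pow_two, h]

/-- Each element of an odd-order `σ`-invariant group is the product of an element
fixed by `σ` and an element inverted by `σ`. -/
lemma exists_fix_mul_inv [Finite G] {σ : MulAut G} (hσ : σ * σ = 1) {Q : Subgroup G}
    (hQ : Odd (Nat.card Q)) (hQσ : SInv σ Q) {q : G} (hq : q ∈ Q) :
    ∃ c ∈ Q, ∃ y ∈ Q, σ c = c ∧ σ y = y⁻¹ ∧ c * y = q := by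
  obtain ⟨m, hm⟩ := exists_half hQ
  have hx : q⁻¹ * σ q ∈ Q := Q.mul_mem (Q.inv_mem hq) (hQσ q hq)
  have hxσ : σ (q⁻¹ * σ q) = (q⁻¹ * σ q)⁻¹ := by simp [invol_apply hσ]
  set x := q⁻¹ * σ q with hxdef
  have hy : ((x ^ m)⁻¹)⁻¹ * x ^ m = x := by
    rw [inv_inv, ← pow_add, ← two_mul, hm x hx]
  have hσq : σ q = q * x := by rw [hxdef]; group
  refine ⟨q * x ^ m, Q.mul_mem hq (Q.pow_mem hx m), (x ^ m)⁻¹, Q.inv_mem (Q.pow_mem hx m),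
    ?_, ?_, by group⟩
  · rw [map_mul, map_pow, hxσ, hσq, mul_assoc]
    congr 1
    rw [inv_pow]
    nth_rewrite 1 [← hy]
    group
  · rw [map_inv, map_pow, hxσ, inv_pow]

lemma ii_mul_cc [Finite G] {σ : MulAut G} (hσ : σ * σ = 1) {Q : Subgroup G}
    (hQ : Odd (Nat.card Q)) (hQσ : SInv σ Q) : ii σ Q * cc σ Q = Nat.card Q := by
  rw [mul_comm, cc, ii, ← Nat.card_prod]
  refine Nat.card_congr (Equiv.ofBijective
    (fun p => (⟨p.1.1 * p.2.1, Q.mul_mem p.1.2.1 p.2.2.1⟩ : Q)) ⟨?_, ?_⟩)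
  · rintro ⟨⟨c, hc, hcσ⟩, ⟨y, hy, hyσ⟩⟩ ⟨⟨c', hc', hcσ'⟩, ⟨y', hy', hyσ'⟩⟩ h
    have h1 : c * y = c' * y' := congrArg Subtype.val h
    have h2 : c * y⁻¹ = c' * y'⁻¹ := by
      have := congrArg σ h1
      rwa [map_mul, map_mul, hcσ, hcσ', hyσ, hyσ'] at this
    have h3 : y * y = y' * y' := by
      calc y * y = (c * y⁻¹)⁻¹ * (c * y) := by group
        _ = y' * y' := by rw [h1, h2]; group
    have h4 := eq_of_sq_eq hQ hy hy' h3
    subst h4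
    have h5 : c = c' := mul_right_cancel h1
    subst h5
    rfl
  · rintro ⟨q, hq⟩
    obtain ⟨c, hc, y, hy, hcσ, hyσ, h⟩ := exists_fix_mul_inv hσ hQ hQσ hq
    exact ⟨⟨⟨c, hc, hcσ⟩, ⟨y, hy, hyσ⟩⟩, Subtype.ext h⟩

lemma ii_odd [Finite G] {σ : MulAut G} (hσ : σ * σ = 1) {Q : Subgroup G}
    (hQ : Odd (Nat.card Q)) (hQσ : SInv σ Q) : Odd (ii σ Q) :=
  hQ.of_dvd_nat ⟨_, (ii_mul_cc hσ hQ hQσ).symm⟩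

lemma SInv.inf {σ : MulAut G} {P Q : Subgroup G} (hP : SInv σ P) (hQ : SInv σ Q) :
    SInv σ (P ⊓ Q) := fun x hx => ⟨hP x hx.1, hQ x hx.2⟩

lemma SInv.sup {σ : MulAut G} {P Q : Subgroup G} (hP : SInv σ P) (hQ : SInv σ Q) :
    SInv σ (P ⊔ Q) := by
  intro x hx
  have : P ⊔ Q ≤ (P ⊔ Q).comap σ.toMonoidHom :=
    sup_le (fun y hy => Subgroup.mem_sup_left (hP y hy))
      (fun y hy => Subgroup.mem_sup_right (hQ y hy))
  exact this hx

/-- If `σ` inverts no nontrivial element of an odd-order group, it fixes everything; dually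
if it fixes no nontrivial element it inverts everything. -/
lemma inverts_of_cc_eq_one [Finite G] {σ : MulAut G} (hσ : σ * σ = 1) {Q : Subgroup G}
    (hQ : Odd (Nat.card Q)) (hQσ : SInv σ Q) (h : cc σ Q = 1) : ∀ q ∈ Q, σ q = q⁻¹ := by
  intro q hq
  obtain ⟨c, hc, y, hy, hcσ, hyσ, rfl⟩ := exists_fix_mul_inv hσ hQ hQσ hq
  have : c = 1 := by
    obtain ⟨hs, -⟩ := Nat.card_eq_one_iff_unique.mp h
    exact congrArg Subtype.val
      (hs.elim (⟨c, hc, hcσ⟩ : {x : G // x ∈ Q ∧ σ x = x}) ⟨1, Q.one_mem, map_one σ⟩)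
  subst this
  simpa using hyσ

end Basics

section Hom

variable {G G' : Type*} [Group G] [Group G'] [Finite G]

lemma card_map_mul_card_ker (φ : G →* G') (Q : Subgroup G) :
    Nat.card (Q.map φ) * Nat.card ↥(Q ⊓ φ.ker) = Nat.card Q := by
  have h1 := (φ.comp Q.subtype).ker.index_mul_card
  rw [Subgroup.index_ker] at h1
  rw [← h1]
  congr 1
  · rw [MonoidHom.range_comp, Subgroup.range_subtype]
  · refine Nat.card_congr ⟨fun x => ⟨⟨x.1, x.2.1⟩, x.2.2⟩, fun x => ⟨x.1.1, x.1.2, x.2⟩,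
      fun _ => rfl, fun _ => rfl⟩

variable {σ : MulAut G} {σ' : MulAut G'} {φ : G →* G'} {Q : Subgroup G}

lemma sinv_ker (hφ : ∀ x, φ (σ x) = σ' (φ x)) : SInv σ φ.ker := by
  intro x hx
  rw [MonoidHom.mem_ker] at *
  rw [hφ, hx, map_one]

lemma sinv_map (hφ : ∀ x ∈ Q, φ (σ x) = σ' (φ x)) (hQσ : SInv σ Q) : SInv σ' (Q.map φ) := by
  rintro _ ⟨x, hx, rfl⟩
  exact ⟨σ x, hQσ x hx, hφ x hx⟩

lemma cc_map_mul (hσ : σ * σ = 1) (hφ : ∀ x, φ (σ x) = σ' (φ x)) (hQ : Odd (Nat.card Q))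
    (hQσ : SInv σ Q) : cc σ' (Q.map φ) * cc σ (Q ⊓ φ.ker) = cc σ Q := by
  rw [cc_eq σ Q, ← card_map_mul_card_ker φ (Q ⊓ fixSub σ)]
  congr 1
  · rw [cc_eq]
    congr! 2
    apply le_antisymm
    · rintro _ ⟨⟨x, hx, rfl⟩, h⟩
      have h0 : x⁻¹ * σ x ∈ Q ⊓ φ.ker := by
        refine ⟨Q.mul_mem (Q.inv_mem hx) (hQσ x hx), ?_⟩
        have h' : σ' (φ x) = φ x := h
        change φ _ = 1
        rw [map_mul, hφ, h', map_inv, inv_mul_cancel]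
      obtain ⟨k, hk, hk2⟩ := coset_fixed hσ (odd_of_le inf_le_left hQ)
        (hQσ.inf (sinv_ker hφ)) h0
      refine ⟨x * k, ⟨Q.mul_mem hx hk.1, hk2⟩, ?_⟩
      rw [map_mul, MonoidHom.mem_ker.mp hk.2, mul_one]
    · rintro _ ⟨x, ⟨hx, hx2⟩, rfl⟩
      refine ⟨⟨x, hx, rfl⟩, ?_⟩
      have hx2' : σ x = x := hx2
      change σ' (φ x) = φ x
      rw [← hφ, hx2']
  · rw [cc_eq, inf_right_comm]

lemma ii_map_mul [Finite G'] (hσ : σ * σ = 1) (hσ' : σ' * σ' = 1)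
    (hφ : ∀ x, φ (σ x) = σ' (φ x)) (hQ : Odd (Nat.card Q))
    (hQσ : SInv σ Q) : ii σ' (Q.map φ) * ii σ (Q ⊓ φ.ker) = ii σ Q := by
  have hmap : Odd (Nat.card (Q.map φ)) :=
    hQ.of_dvd_nat ⟨_, (card_map_mul_card_ker φ Q).symm⟩
  have h1 := ii_mul_cc hσ' hmap (sinv_map (fun x _ => hφ x) hQσ)
  have h2 := ii_mul_cc hσ (odd_of_le inf_le_left hQ : Odd (Nat.card ↥(Q ⊓ φ.ker)))
    (hQσ.inf (sinv_ker hφ))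
  have h3 := ii_mul_cc hσ hQ hQσ
  have h4 := cc_map_mul hσ hφ hQ hQσ
  have h5 := card_map_mul_card_ker φ Q
  have h6 := cc_pos σ Q
  refine Nat.eq_of_mul_eq_mul_right h6 ?_
  rw [h3, ← h5, ← h1, ← h2, ← h4]
  ring

end Hom

end OddInvolution

/-! ### Normalized subgroups and the commutator `[Q, σ]` -/

namespace OddInvolution

section Normalization

variable {G : Type*} [Group G]

/-- Conjugation by elements of `Q` maps `H` into itself. -/
def NormBy (Q H : Subgroup G) : Prop := ∀ q ∈ Q, ∀ h ∈ H, q * h * q⁻¹ ∈ H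

lemma NormBy.inv_conj {Q H : Subgroup G} (h : NormBy Q H) {q x : G} (hq : q ∈ Q) (hx : x ∈ H) :
    q⁻¹ * x * q ∈ H := by
  simpa using h q⁻¹ (Q.inv_mem hq) x hx

lemma NormBy.mono {Q Q' H : Subgroup G} (h : NormBy Q H) (hQ : Q' ≤ Q) : NormBy Q' H :=
  fun q hq => h q (hQ hq)

lemma NormBy.inf {Q H H' : Subgroup G} (h : NormBy Q H) (h' : NormBy Q H') :
    NormBy Q (H ⊓ H') := fun q hq x hx => ⟨h q hq x hx.1, h' q hq x hx.2⟩

lemma NormBy.refl (Q : Subgroup G) : NormBy Q Q :=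
  fun q hq x hx => Q.mul_mem (Q.mul_mem hq hx) (Q.inv_mem hq)

lemma normBy_closure {Q : Subgroup G} {s : Set G}
    (h : ∀ q ∈ Q, ∀ x ∈ s, q * x * q⁻¹ ∈ Subgroup.closure s) : NormBy Q (Subgroup.closure s) := by
  intro q hq x hx
  have : Subgroup.closure s ≤ (Subgroup.closure s).comap (MulAut.conj q).toMonoidHom :=
    (Subgroup.closure_le _).mpr fun y hy => h q hq y hy
  exact this hx

lemma NormBy.sup {Q H H' : Subgroup G} (h : NormBy Q H) (h' : NormBy Q H') :
    NormBy Q (H ⊔ H') := by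
  intro q hq x hx
  have : H ⊔ H' ≤ (H ⊔ H').comap (MulAut.conj q).toMonoidHom :=
    sup_le (fun y hy => Subgroup.mem_sup_left (h q hq y hy))
      (fun y hy => Subgroup.mem_sup_right (h' q hq y hy))
  exact this hx

/-- In a nilpotent group `Q`, a normal subgroup `D` not contained in `A` has an element outside
`A` which is central modulo `A`. -/
lemma exists_central_mod {Q D A : Subgroup G} (hnil : Group.IsNilpotent Q) (hDQ : D ≤ Q)
    (hD : NormBy Q D) (hDA : ¬ D ≤ A) :
    ∃ x ∈ D, x ∉ A ∧ ∀ q ∈ Q, x * q * x⁻¹ * q⁻¹ ∈ A := by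
  classical
  obtain ⟨n, hn⟩ := (Subgroup.isNilpotent_iff_lowerCentralSeries Q).mp hnil
  have hex : ∃ k, D ⊓ Q.lowerCentralSeries k ≤ A := ⟨n, by rw [hn]; simp⟩
  obtain ⟨k, hk, hmin⟩ : ∃ k, D ⊓ Q.lowerCentralSeries k ≤ A ∧
      ∀ j < k, ¬ D ⊓ Q.lowerCentralSeries j ≤ A :=
    ⟨Nat.find hex, Nat.find_spec hex, fun j hj => Nat.find_min hex hj⟩
  cases k with
  | zero => exact absurd (fun x hx => hk ⟨hx, hDQ hx⟩) hDA
  | succ k =>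
    obtain ⟨x, hx, hxA⟩ := SetLike.not_le_iff_exists.mp (hmin k (Nat.lt_succ_self k))
    refine ⟨x, hx.1, hxA, fun q hq => hk ⟨?_, ?_⟩⟩
    · have := D.mul_mem hx.1 (hD q hq x⁻¹ (D.inv_mem hx.1))
      simpa [mul_assoc] using this
    · rw [Subgroup.lowerCentralSeries_succ]
      exact Subgroup.commutator_mem_commutator hx.2 hq

/-- The subgroup `[Q, σ]`. -/
def comSub (σ : MulAut G) (Q : Subgroup G) : Subgroup G :=
  Subgroup.closure {x | ∃ q ∈ Q, x = q⁻¹ * σ q}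

variable {σ : MulAut G} {Q : Subgroup G}

lemma comSub_le (hQσ : SInv σ Q) : comSub σ Q ≤ Q := by
  rw [comSub, Subgroup.closure_le]
  rintro _ ⟨q, hq, rfl⟩
  exact Q.mul_mem (Q.inv_mem hq) (hQσ q hq)

lemma mem_comSub {q : G} (hq : q ∈ Q) : q⁻¹ * σ q ∈ comSub σ Q :=
  Subgroup.subset_closure ⟨q, hq, rfl⟩

lemma sinv_closure {s : Set G} (h : ∀ x ∈ s, σ x ∈ Subgroup.closure s) :
    SInv σ (Subgroup.closure s) := by
  intro x hx
  have : Subgroup.closure s ≤ (Subgroup.closure s).comap σ.toMonoidHom :=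
    (Subgroup.closure_le _).mpr fun y hy => h y hy
  exact this hx

lemma comSub_sinv (hσ : σ * σ = 1) : SInv σ (comSub σ Q) := by
  apply sinv_closure
  rintro _ ⟨q, hq, rfl⟩
  have := (comSub σ Q).inv_mem (mem_comSub (σ := σ) hq)
  change σ _ ∈ comSub σ Q
  simpa [invol_apply hσ] using this

lemma comSub_normBy : NormBy Q (comSub σ Q) := by
  apply normBy_closure
  rintro r hr _ ⟨q, hq, rfl⟩
  have h1 := mem_comSub (σ := σ) (Q.mul_mem hq (Q.inv_mem hr))
  have h2 := mem_comSub (σ := σ) (Q.inv_mem hr)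
  have h3 := (comSub σ Q).mul_mem h1 ((comSub σ Q).inv_mem h2)
  have h4 : r * (q⁻¹ * σ q) * r⁻¹ =
      (q * r⁻¹)⁻¹ * σ (q * r⁻¹) * (r⁻¹⁻¹ * σ r⁻¹)⁻¹ := by
    simp only [map_mul, map_inv]; group
  rw [h4]; exact h3

lemma inverted_mem_comSub [Finite G] (hQ : Odd (Nat.card Q)) {y : G} (hy : y ∈ Q)
    (hyσ : σ y = y⁻¹) : y ∈ comSub σ Q := by
  obtain ⟨m, hm⟩ := exists_half hQ
  have h := mem_comSub (σ := σ) (Q.inv_mem (Q.pow_mem hy m))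
  have h2 : (y ^ m)⁻¹⁻¹ * σ (y ^ m)⁻¹ = y := by
    rw [map_inv, map_pow, hyσ, inv_pow, inv_inv, ← pow_add, ← two_mul, hm y hy]
  rwa [h2] at h

lemma comSub_idem [Finite G] (hσ : σ * σ = 1) (hQ : Odd (Nat.card Q)) (hQσ : SInv σ Q) :
    comSub σ (comSub σ Q) = comSub σ Q := by
  apply le_antisymm (comSub_le (comSub_sinv hσ))
  conv_lhs => rw [comSub]
  rw [Subgroup.closure_le]
  rintro _ ⟨q, hq, rfl⟩
  apply inverted_mem_comSub (odd_of_le (comSub_le hQσ) hQ) (mem_comSub hq)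
  simp [invol_apply hσ]

lemma ii_comSub [Finite G] (hQ : Odd (Nat.card Q)) (hQσ : SInv σ Q) :
    ii σ (comSub σ Q) = ii σ Q := by
  apply le_antisymm (ii_mono σ (comSub_le hQσ))
  exact Nat.card_le_card_of_injective
    (fun x : {x : G // x ∈ Q ∧ σ x = x⁻¹} =>
      (⟨x.1, inverted_mem_comSub hQ x.2.1 x.2.2, x.2.2⟩ :
        {x : G // x ∈ comSub σ Q ∧ σ x = x⁻¹}))
    (fun x y hxy => Subtype.ext (congrArg (fun z => z.1) hxy))

/-- If `Q = [Q, σ]` then `σ` inverts every abelian quotient of `Q`. -/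
lemma mul_sigma_mem (hσ : σ * σ = 1) (hQσ : SInv σ Q) (hQ : comSub σ Q = Q) {H : Subgroup G}
    (hab : ∀ q ∈ Q, ∀ r ∈ Q, q * r * q⁻¹ * r⁻¹ ∈ H) (hHQ : H ≤ Q) :
    ∀ q ∈ Q, q * σ q ∈ H := by
  have hn : NormBy Q H := by
    intro q hq x hx
    have := H.mul_mem (hab q hq x (hHQ hx)) hx
    simpa using this
  have key : ∀ q ∈ comSub σ Q, q ∈ Q ∧ q * σ q ∈ H := by
    intro q hq
    induction hq using Subgroup.closure_induction with
    | mem x hx =>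
      obtain ⟨q, hq, rfl⟩ := hx
      refine ⟨Q.mul_mem (Q.inv_mem hq) (hQσ q hq), ?_⟩
      simp [invol_apply hσ, H.one_mem]
    | one => exact ⟨Q.one_mem, by simp⟩
    | mul x y _ _ hx hy =>
      refine ⟨Q.mul_mem hx.1 hy.1, ?_⟩
      have h1 := hn x hx.1 _ (hab y hy.1 (σ x) (hQσ x hx.1))
      have h2 := H.mul_mem (H.mul_mem h1 hx.2) hy.2
      have h3 : x * y * σ (x * y) =
          x * (y * σ x * y⁻¹ * (σ x)⁻¹) * x⁻¹ * (x * σ x) * (y * σ y) := by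
        rw [map_mul]; group
      rw [h3]; exact h2
    | inv x _ hx =>
      refine ⟨Q.inv_mem hx.1, ?_⟩
      have h1 := hab _ (Q.inv_mem hx.1) _ (Q.inv_mem (hQσ x hx.1))
      have h2 := H.mul_mem h1 (H.inv_mem hx.2)
      have h3 : x⁻¹ * σ x⁻¹ = x⁻¹ * (σ x)⁻¹ * x⁻¹⁻¹ * (σ x)⁻¹⁻¹ * (x * σ x)⁻¹ := by
        rw [map_inv]; group
      rw [h3]; exact h2
  intro q hq
  exact (key q (hQ.symm ▸ hq)).2

lemma sinv_of_abelian_quotient (hσ : σ * σ = 1) (hQσ : SInv σ Q) (hQ : comSub σ Q = Q)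
    {H : Subgroup G} (hab : ∀ q ∈ Q, ∀ r ∈ Q, q * r * q⁻¹ * r⁻¹ ∈ H) (hHQ : H ≤ Q) :
    SInv σ H := by
  intro x hx
  have := H.mul_mem (H.inv_mem hx) (mul_sigma_mem hσ hQσ hQ hab hHQ x (hHQ hx))
  simpa using this

end Normalization

end OddInvolution

/-! ### Nilpotent groups all of whose abelian normal subgroups are cyclic -/

namespace OddInvolution

section AbelianNormal

variable {G : Type*} [Group G]

/-- Any two elements of `A` commute. -/
def IsComm (A : Subgroup G) : Prop := ∀ a ∈ A, ∀ b ∈ A, a * b = b * a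

/-- Joining an element `x` that commutes with an abelian subgroup. -/
lemma isComm_sup_zpowers {A : Subgroup G} (hA : IsComm A) {x : G}
    (hx : ∀ a ∈ A, x * a = a * x) : IsComm (A ⊔ Subgroup.zpowers x) := by
  have h1 : A ⊔ Subgroup.zpowers x ≤ Subgroup.centralizer (A ⊔ Subgroup.zpowers x : Subgroup G) := by
    apply sup_le
    · rw [Subgroup.le_centralizer_iff]
      apply sup_le
      · intro a ha
        exact Subgroup.mem_centralizer_iff.mpr fun b hb => hA b hb a ha
      · rw [Subgroup.zpowers_le]
        exact Subgroup.mem_centralizer_iff.mpr fun b hb => (hx b hb).symm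
    · rw [Subgroup.le_centralizer_iff]
      apply sup_le
      · intro a ha
        refine Subgroup.mem_centralizer_iff.mpr fun b hb => ?_
        obtain ⟨k, rfl⟩ := Subgroup.mem_zpowers_iff.mp hb
        exact (Commute.zpow_left (hx a ha) k)
      · rw [Subgroup.zpowers_le]
        refine Subgroup.mem_centralizer_iff.mpr fun b hb => ?_
        obtain ⟨k, rfl⟩ := Subgroup.mem_zpowers_iff.mp hb
        exact ((Commute.refl x).zpow_left k)
  intro a ha b hb
  exact (Subgroup.mem_centralizer_iff.mp (h1 hb)) a ha

lemma normBy_sup_zpowers {Q A : Subgroup G} (hA : NormBy Q A) {x : G}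
    (hx : ∀ q ∈ Q, q * x * q⁻¹ ∈ A ⊔ Subgroup.zpowers x) :
    NormBy Q (A ⊔ Subgroup.zpowers x) := by
  intro q hq y hy
  have : A ⊔ Subgroup.zpowers x ≤
      (A ⊔ Subgroup.zpowers x).comap (MulAut.conj q).toMonoidHom := by
    apply sup_le
    · exact fun y hy => Subgroup.mem_sup_left (hA q hq y hy)
    · rw [Subgroup.zpowers_le]
      exact hx q hq
  exact this hy

lemma conj_mem_sup_of_comm_mem {A : Subgroup G} {x q : G} (h : x * q * x⁻¹ * q⁻¹ ∈ A) :
    q * x * q⁻¹ ∈ A ⊔ Subgroup.zpowers x := by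
  have h1 : q * x * q⁻¹ = (x * q * x⁻¹ * q⁻¹)⁻¹ * x := by group
  rw [h1]
  exact Subgroup.mul_mem_sup (A.inv_mem h) (Subgroup.mem_zpowers x)

lemma exists_maximal_subgroup [Finite G] (P : Subgroup G → Prop) (h : ∃ A, P A) :
    ∃ A, P A ∧ ∀ B, P B → A ≤ B → B = A := by
  obtain ⟨A, hA⟩ := (Set.toFinite {A | P A}).exists_maximal h
  exact ⟨A, hA.1, fun B hB hAB => le_antisymm (hA.2 hB hAB) hAB⟩

/-- Second-order expansion of a geometric sum around `m = 1`. -/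
lemma sq_expansion (m : ℤ) (N : ℕ) :
    ∃ k : ℤ, 2 * ∑ i ∈ Finset.range N, m ^ i = 2 * N + (m - 1) * N * (N - 1) + 2 * (m - 1) ^ 2 * k := by
  have h1 : ∀ i : ℕ, ∃ k : ℤ, m ^ i = 1 + i * (m - 1) + (m - 1) ^ 2 * k := by
    intro i
    induction i with
    | zero => exact ⟨0, by simp⟩
    | succ i ih =>
      obtain ⟨k, hk⟩ := ih
      refine ⟨k * m + i, ?_⟩
      rw [pow_succ, hk]
      push_cast
      ring
  induction N with
  | zero => exact ⟨0, by simp⟩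
  | succ N ih =>
    obtain ⟨k, hk⟩ := ih
    obtain ⟨k', hk'⟩ := h1 N
    refine ⟨k + k', ?_⟩
    rw [Finset.sum_range_succ, mul_add, hk, hk']
    push_cast
    ring

lemma mem_zpowers_of_cyclic [Finite G] {D : Subgroup G} (hD : IsCyclic D) {r : ℕ} (hr : r.Prime)
    {t y : G} (ht : t ∈ D) (hy : y ∈ D) (htr : t ^ r = 1) (ht1 : t ≠ 1) (hyr : y ^ r = 1) :
    y ∈ Subgroup.zpowers t := by
  classical
  have := Fintype.ofFinite D
  have ho : orderOf (⟨t, ht⟩ : D) = r := by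
    have h1 : (⟨t, ht⟩ : D) ^ r = 1 := Subtype.ext htr
    exact orderOf_eq_prime_iff (hp := ⟨hr⟩) |>.mpr ⟨h1, fun h => ht1 (congrArg Subtype.val h)⟩
  have h1 := IsCyclic.card_pow_eq_one_le (α := D) hr.pos
  have h2 : (Subgroup.zpowers (⟨t, ht⟩ : D) : Set D).toFinset ⊆
      Finset.univ.filter (fun a : D => a ^ r = 1) := by
    intro z hz
    simp only [Set.mem_toFinset, SetLike.mem_coe] at hz
    obtain ⟨k, rfl⟩ := Subgroup.mem_zpowers_iff.mp hz
    simp only [Finset.mem_filter, Finset.mem_univ, true_and]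
    rw [← zpow_natCast, ← zpow_mul, mul_comm, zpow_mul, zpow_natCast]
    have : (⟨t, ht⟩ : D) ^ r = 1 := Subtype.ext htr
    rw [this, one_zpow]
  have h3 : (Subgroup.zpowers (⟨t, ht⟩ : D) : Set D).toFinset.card = r := by
    rw [Set.toFinset_card]
    rw [← ho, ← Nat.card_zpowers, Nat.card_eq_fintype_card]
    rfl
  have h4 := Finset.eq_of_subset_of_card_le h2 (by rw [h3]; exact h1)
  have h5 : (⟨y, hy⟩ : D) ∈ (Subgroup.zpowers (⟨t, ht⟩ : D) : Set D).toFinset := by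
    rw [h4]
    simp only [Finset.mem_filter, Finset.mem_univ, true_and]
    exact Subtype.ext hyr
  simp only [Set.mem_toFinset, SetLike.mem_coe] at h5
  obtain ⟨k, hk⟩ := Subgroup.mem_zpowers_iff.mp h5
  exact Subgroup.mem_zpowers_iff.mpr ⟨k, congrArg Subtype.val hk⟩

lemma isCoprime_of_primes {n : ℕ} {T : ℤ} (h : ∀ p : ℕ, p.Prime → p ∣ n → ¬ (p : ℤ) ∣ T) :
    IsCoprime (n : ℤ) T := by
  rw [Int.isCoprime_iff_gcd_eq_one]
  by_contra hne
  obtain ⟨p, hp, hpd⟩ := Nat.exists_prime_and_dvd hne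
  have h1 : p ∣ n := by
    have := (Int.natCast_dvd_natCast.mpr hpd).trans (Int.gcd_dvd_left (n : ℤ) T)
    exact_mod_cast this
  exact h p hp h1 ((Int.natCast_dvd_natCast.mpr hpd).trans (Int.gcd_dvd_right (n : ℤ) T))

lemma pow_comm_mem {Q A : Subgroup G} (hA : NormBy Q A) {x q : G} (hxQ : x ∈ Q)
    (hx : x * q * x⁻¹ * q⁻¹ ∈ A) (k : ℕ) : x ^ k * q * (x ^ k)⁻¹ * q⁻¹ ∈ A := by
  induction k with
  | zero => simp
  | succ k ih =>
    have h1 := A.mul_mem (hA x hxQ _ ih) hx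
    have h2 : x ^ (k + 1) * q * (x ^ (k + 1))⁻¹ * q⁻¹ =
        x * (x ^ k * q * (x ^ k)⁻¹ * q⁻¹) * x⁻¹ * (x * q * x⁻¹ * q⁻¹) := by
      rw [pow_succ']; group
    rw [h2]; exact h1

end AbelianNormal

end OddInvolution

namespace OddInvolution

section CyclicNormal

open scoped commutatorElement

variable {G : Type*} [Group G]

/-- A maximal abelian normal subgroup of a nilpotent group is its own centralizer. -/
lemma self_centralizing {Q A : Subgroup G} (hnil : Group.IsNilpotent Q)
    (hAQ : A ≤ Q) (hAn : NormBy Q A) (hAc : IsComm A)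
    (hmax : ∀ B ≤ Q, NormBy Q B → IsComm B → A ≤ B → B = A) {x : G} (hxQ : x ∈ Q)
    (hx : ∀ a ∈ A, x * a = a * x) : x ∈ A := by
  by_contra hxA
  have hD : NormBy Q (Q ⊓ Subgroup.centralizer (A : Set G)) := by
    intro q hq y hy
    refine ⟨NormBy.refl Q q hq y hy.1, ?_⟩
    refine Subgroup.mem_centralizer_iff.mpr fun a ha => ?_
    have h1 := (Subgroup.mem_centralizer_iff.mp hy.2) _ (hAn.inv_conj hq ha)
    calc a * (q * y * q⁻¹) = q * ((q⁻¹ * a * q) * y) * q⁻¹ := by group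
      _ = q * (y * (q⁻¹ * a * q)) * q⁻¹ := by rw [h1]
      _ = q * y * q⁻¹ * a := by group
  obtain ⟨y, hy, hyA, hyc⟩ := exists_central_mod (A := A) hnil inf_le_left hD
    (fun h => hxA (h ⟨hxQ, Subgroup.mem_centralizer_iff.mpr fun a ha => (hx a ha).symm⟩))
  have h1 := hmax (A ⊔ Subgroup.zpowers y)
    (sup_le hAQ ((Subgroup.zpowers_le).mpr hy.1))
    (normBy_sup_zpowers hAn fun q hq => conj_mem_sup_of_comm_mem (hyc q hq))
    (isComm_sup_zpowers hAc fun a ha => ((Subgroup.mem_centralizer_iff.mp hy.2) a ha).symm)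
    le_sup_left
  exact hyA (h1 ▸ Subgroup.mem_sup_right (Subgroup.mem_zpowers y))

lemma conj_zpow_eq {a x : G} {m : ℤ} (h : x * a * x⁻¹ = a ^ m) (k : ℤ) :
    x * a ^ k = a ^ (m * k) * x := by
  have : x * a ^ k * x⁻¹ = a ^ (m * k) := by
    rw [← conj_zpow, h, ← zpow_mul]
  rw [← this]; group

lemma pow_conj_zpow_eq {a x : G} {m : ℤ} (h : x * a * x⁻¹ = a ^ m) (N : ℕ) (k : ℤ) :
    x ^ N * a ^ k = a ^ (m ^ N * k) * x ^ N := by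
  induction N with
  | zero => simp
  | succ N ih =>
    rw [pow_succ', mul_assoc, ih, ← mul_assoc, conj_zpow_eq h]
    rw [mul_assoc, ← mul_assoc m, ← pow_succ']

lemma mul_pow_eq {a x : G} {m : ℤ} (h : x * a * x⁻¹ = a ^ m) (i : ℤ) (N : ℕ) :
    (a ^ i * x) ^ N = a ^ (i * ∑ k ∈ Finset.range N, m ^ k) * x ^ N := by
  induction N with
  | zero => simp
  | succ N ih =>
    rw [pow_succ, ih, Finset.sum_range_succ, mul_add, zpow_add, pow_succ]
    have := pow_conj_zpow_eq h N i
    calc a ^ (i * ∑ k ∈ Finset.range N, m ^ k) * x ^ N * (a ^ i * x)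
        = a ^ (i * ∑ k ∈ Finset.range N, m ^ k) * (x ^ N * a ^ i) * x := by group
      _ = _ := by rw [this, mul_comm i (m ^ N)]; simp only [mul_assoc]

lemma dvd_of_nilpotent {Q : Subgroup G} (hnil : Group.IsNilpotent Q) {a x : G} (ha : a ∈ Q)
    (hx : x ∈ Q) {m : ℤ} (h : x * a * x⁻¹ = a ^ m) : ∃ k, (orderOf a : ℤ) ∣ (m - 1) ^ k := by
  obtain ⟨k, hk⟩ := (Subgroup.isNilpotent_iff_lowerCentralSeries Q).mp hnil
  have h1 : ∀ j, a ^ ((m - 1) ^ j) ∈ Q.lowerCentralSeries j := by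
    intro j
    induction j with
    | zero => simpa using ha
    | succ j ih =>
      rw [Subgroup.lowerCentralSeries_succ]
      have h2 := Subgroup.inv_mem _ (Subgroup.commutator_mem_commutator ih hx)
      have h3 : ⁅a ^ ((m - 1) ^ j), x⁆⁻¹ = a ^ ((m - 1) ^ (j + 1)) := by
        rw [commutatorElement_inv, commutatorElement_def, conj_zpow_eq h, mul_assoc _ x, mul_inv_cancel,
          mul_one, ← zpow_neg, ← zpow_add]
        congr 1
        ring
      rwa [h3] at h2
  refine ⟨k, orderOf_dvd_iff_zpow_eq_one.mpr ?_⟩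
  have := h1 k
  rw [hk] at this
  exact Subgroup.mem_bot.mp this

/-- The number-theoretic core: with `u = m - 1`, `n ∣ u ^ k`, `n ∣ m ^ r - 1`, either `n ∣ u`,
or `r ∣ n`, `r ∣ u`, `n ∣ u * r` and `1 + m + ⋯ + m ^ (r - 1) ≡ r` modulo `n`. -/
lemma arith_core {n r : ℕ} (hr : r.Prime) (hodd : Odd r) {m : ℤ} {k : ℕ}
    (hk : (n : ℤ) ∣ (m - 1) ^ k) (hm : (n : ℤ) ∣ m ^ r - 1) :
    (n : ℤ) ∣ m - 1 ∨ (r ∣ n ∧ (r : ℤ) ∣ m - 1 ∧ (n : ℤ) ∣ (m - 1) * r ∧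
      (n : ℤ) ∣ (∑ i ∈ Finset.range r, m ^ i) - r) := by
  have hpu : ∀ p : ℕ, p.Prime → p ∣ n → (p : ℤ) ∣ m - 1 := fun p hp hpn =>
    (Nat.prime_iff_prime_int.mp hp).dvd_of_dvd_pow
      ((Int.natCast_dvd_natCast.mpr hpn).trans hk)
  obtain ⟨s, hs⟩ := hodd
  obtain ⟨c, hc⟩ := sq_expansion m r
  have hT : ∑ i ∈ Finset.range r, m ^ i = r + (m - 1) * (r * s + (m - 1) * c) := by
    have : (r : ℤ) - 1 = 2 * s := by rw [hs]; push_cast; ring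
    rw [this] at hc
    have h2 : 2 * ∑ i ∈ Finset.range r, m ^ i = 2 * (r + (m - 1) * (r * s + (m - 1) * c)) := by
      rw [hc]; ring
    linarith
  have hg : (∑ i ∈ Finset.range r, m ^ i) * (m - 1) = m ^ r - 1 := geom_sum_mul m r
  by_cases hrn : r ∣ n
  · have hru := hpu r hr hrn
    obtain ⟨w, hw⟩ := hru
    have hT2 : ∑ i ∈ Finset.range r, m ^ i = r * (1 + (m - 1) * (s + w * c)) := by
      rw [hT, hw]; ring
    have hcop : IsCoprime (n : ℤ) (1 + (m - 1) * (s + w * c)) := by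
      apply isCoprime_of_primes
      intro p hp hpn hd
      have h1 := hpu p hp hpn
      have h2 : (p : ℤ) ∣ 1 := by
        have := dvd_sub hd (h1.mul_right (s + w * c))
        simpa using this
      exact (Nat.prime_iff_prime_int.mp hp).not_dvd_one h2
    have h3 : (n : ℤ) ∣ (m - 1) * r := by
      apply hcop.dvd_of_dvd_mul_right
      rw [← hg, hT2] at hm
      have e : (m - 1) * r * (1 + (m - 1) * (s + w * c)) =
        r * (1 + (m - 1) * (s + w * c)) * (m - 1) := by ring
      rw [e]; exact hm
    refine Or.inr ⟨hrn, ⟨w, hw⟩, h3, ?_⟩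
    rw [hT2]
    have e : r * (1 + (m - 1) * (s + w * c)) - r = (m - 1) * r * (s + w * c) := by ring
    rw [e]; exact h3.mul_right _
  · left
    have hcop : IsCoprime (n : ℤ) (∑ i ∈ Finset.range r, m ^ i) := by
      apply isCoprime_of_primes
      intro p hp hpn hd
      rw [hT] at hd
      have h1 := (Int.dvd_add_left ((hpu p hp hpn).mul_right _)).mp hd
      have h2 : p ∣ r := by exact_mod_cast h1
      rw [Nat.prime_dvd_prime_iff_eq hp hr] at h2
      exact hrn (h2 ▸ hpn)
    rw [← hg] at hm
    exact hcop.dvd_of_dvd_mul_left hm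

/-- A nilpotent group of odd order all of whose abelian normal subgroups are cyclic is abelian. -/
lemma isComm_of_cyclic_normal [Finite G] {Q : Subgroup G} (hnil : Group.IsNilpotent Q)
    (hodd : Odd (Nat.card Q))
    (hcyc : ∀ A ≤ Q, NormBy Q A → IsComm A → IsCyclic A) : IsComm Q := by
  classical
  obtain ⟨A, ⟨hAQ, hAn, hAc⟩, hmax⟩ := exists_maximal_subgroup
    (fun A : Subgroup G => A ≤ Q ∧ NormBy Q A ∧ IsComm A)
    ⟨⊥, bot_le, by intro q _ x hx; simp_all [Subgroup.mem_bot],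
      by intro a ha b hb; simp_all [Subgroup.mem_bot]⟩
  have hself : ∀ x ∈ Q, (∀ a ∈ A, x * a = a * x) → x ∈ A := fun x hxQ hx =>
    self_centralizing hnil hAQ hAn hAc (fun B h1 h2 h3 h4 => hmax B ⟨h1, h2, h3⟩ h4) hxQ hx
  by_cases hQA : Q ≤ A
  · exact fun a ha b hb => hAc a (hQA ha) b (hQA hb)
  exfalso
  -- an element outside `A`, central modulo `A`, of minimal order
  obtain ⟨x, ⟨hxQ, hxA, hxc⟩, hxmin⟩ : ∃ x, (x ∈ Q ∧ x ∉ A ∧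
      ∀ q ∈ Q, x * q * x⁻¹ * q⁻¹ ∈ A) ∧ ∀ y, (y ∈ Q ∧ y ∉ A ∧
      ∀ q ∈ Q, y * q * y⁻¹ * q⁻¹ ∈ A) → orderOf x ≤ orderOf y := by
    have hne := exists_central_mod hnil le_rfl (NormBy.refl Q) hQA
    obtain ⟨x, hx, hmin⟩ := (Set.toFinite {x | x ∈ Q ∧ x ∉ A ∧
      ∀ q ∈ Q, x * q * x⁻¹ * q⁻¹ ∈ A}).exists_minimalFor orderOf _ hne
    exact ⟨x, hx, fun y hy => (le_total (orderOf x) (orderOf y)).elim id (fun h => hmin hy h)⟩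
  have hx1 : orderOf x ≠ 1 := fun h => hxA ((orderOf_eq_one_iff.mp h).symm ▸ A.one_mem)
  obtain ⟨r, hr, hrx⟩ := Nat.exists_prime_and_dvd hx1
  have hxr : x ^ r ∈ A := by
    by_contra hcon
    have h1 := hxmin (x ^ r) ⟨Q.pow_mem hxQ r, hcon,
      fun q hq => pow_comm_mem hAn hxQ (hxc q hq) r⟩
    rw [orderOf_pow_of_dvd hr.ne_zero hrx] at h1
    have h2 := Nat.div_lt_self (orderOf_pos x) hr.one_lt
    omega
  have hrodd : Odd r := by
    refine (hodd.of_dvd_nat ?_ : Odd r)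
    have : orderOf x ∣ Nat.card Q := by
      have := orderOf_dvd_natCard (⟨x, hxQ⟩ : Q)
      rwa [← Subgroup.orderOf_coe] at this
    exact hrx.trans this
  -- a generator of `A`
  obtain ⟨⟨a, haA⟩, hagen⟩ := (hcyc A hAQ hAn hAc).exists_generator
  have hgen : ∀ b ∈ A, ∃ k : ℤ, a ^ k = b := by
    intro b hb
    obtain ⟨k, hk⟩ := Subgroup.mem_zpowers_iff.mp (hagen ⟨b, hb⟩)
    exact ⟨k, congrArg Subtype.val hk⟩
  have hapow : ∀ k : ℤ, a ^ k ∈ A := fun k => A.zpow_mem haA k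
  have hacomm : ∀ x : G, x * a = a * x → ∀ b ∈ A, x * b = b * x := by
    intro x hx b hb
    obtain ⟨k, rfl⟩ := hgen b hb
    exact Commute.zpow_right hx k
  obtain ⟨m, hm⟩ := hgen _ (hAn x hxQ a haA)
  obtain ⟨j, hj⟩ := hgen _ hxr
  obtain ⟨k, hk⟩ := dvd_of_nilpotent hnil (hAQ haA) hxQ hm.symm
  have hmr : (orderOf a : ℤ) ∣ m ^ r - 1 := by
    rw [orderOf_dvd_iff_zpow_eq_one]
    have h1 := pow_conj_zpow_eq hm.symm r 1
    rw [← hj, ← zpow_add, mul_one, ← zpow_add] at h1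
    rw [zpow_sub, zpow_one]
    have h2 : a ^ (j + 1) = a ^ (j + m ^ r) := by rw [h1, add_comm]
    rw [zpow_add, zpow_add, zpow_one] at h2
    rw [← mul_left_cancel h2, mul_inv_cancel]
  have hnu : ¬ (orderOf a : ℤ) ∣ m - 1 := by
    intro h
    apply hxA
    apply hself x hxQ
    apply hacomm
    rw [orderOf_dvd_iff_zpow_eq_one, zpow_sub, zpow_one, mul_inv_eq_one] at h
    have h2 := hm.symm
    rw [h] at h2
    exact mul_inv_eq_iff_eq_mul.mp h2
  obtain ⟨hrn, hru, hnur, hT⟩ := (arith_core hr hrodd hk hmr).resolve_left hnu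
  have hTpow : ∀ i : ℤ, a ^ (i * ∑ k ∈ Finset.range r, m ^ k) = a ^ (i * r) := by
    intro i
    have : (orderOf a : ℤ) ∣ i * ∑ k ∈ Finset.range r, m ^ k - i * r := by
      rw [← mul_sub]; exact hT.mul_left i
    rw [orderOf_dvd_iff_zpow_eq_one, zpow_sub, mul_inv_eq_one] at this
    exact this
  -- `r ∣ j`, so `x` can be corrected by a power of `a` to have `r`-th power `1`
  have hju : (orderOf a : ℤ) ∣ (m - 1) * j := by
    rw [orderOf_dvd_iff_zpow_eq_one]
    have h1 := conj_zpow_eq hm.symm j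
    have h2 : x * a ^ j = a ^ j * x := by rw [hj]; exact (pow_succ' x r).symm.trans (pow_succ x r)
    rw [h2] at h1
    have h3 := mul_right_cancel h1
    rw [sub_mul, one_mul, zpow_sub, ← h3, mul_inv_cancel]
  have hrj : (r : ℤ) ∣ j := by
    by_contra hcon
    have hcop : IsCoprime (r : ℤ) j := ((Nat.prime_iff_prime_int.mp hr).coprime_iff_not_dvd).mpr hcon
    obtain ⟨c, d, hcd⟩ := hcop
    apply hnu
    have h1 := dvd_add (hnur.mul_left c) (hju.mul_left d)
    have e : m - 1 = c * ((m - 1) * r) + d * ((m - 1) * j) := by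
      linear_combination (m - 1) * (- hcd)
    rw [e]; exact h1
  obtain ⟨l, hl⟩ := hrj
  set y := a ^ (-l) * x with hy
  have hyr : y ^ r = 1 := by
    rw [hy, mul_pow_eq hm.symm, hTpow, ← hj, ← zpow_add]
    rw [hl]
    convert zpow_zero a using 2; ring
  have hyA : y ∉ A := fun h => hxA (by
    have := A.mul_mem (hapow l) h
    rwa [hy, ← mul_assoc, ← zpow_add, add_neg_cancel, zpow_zero, one_mul] at this)
  have hyQ : y ∈ Q := Q.mul_mem (hAQ (hapow _)) hxQ
  have hya : y * a * y⁻¹ = a ^ m := by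
    have h1 : x * a = a ^ m * x := by simpa using conj_zpow_eq hm.symm 1
    rw [mul_inv_eq_iff_eq_mul, hy, mul_assoc, h1, ← mul_assoc, ← mul_assoc, ← zpow_add, ← zpow_add,
      add_comm]
  have hyc : ∀ q ∈ Q, y * q * y⁻¹ * q⁻¹ ∈ A := by
    intro q hq
    have h1 := hapow (-l)
    have h2 := A.mul_mem h1 (hxc q hq)
    have h3 := A.mul_mem h2 (hAn q hq _ (A.inv_mem h1))
    have h4 : y * q * y⁻¹ * q⁻¹ =
        a ^ (-l) * (x * q * x⁻¹ * q⁻¹) * (q * (a ^ (-l))⁻¹ * q⁻¹) := by rw [hy]; group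
    rw [h4]; exact h3
  -- the `r`-torsion of `A` together with `y` is an abelian normal subgroup
  let Z : Subgroup G :=
    { carrier := {t | t ∈ A ∧ t ^ r = 1}
      one_mem' := ⟨A.one_mem, one_pow r⟩
      mul_mem' := by
        rintro s t ⟨hs, hs'⟩ ⟨ht, ht'⟩
        exact ⟨A.mul_mem hs ht, by rw [Commute.mul_pow (hAc s hs t ht), hs', ht', one_mul]⟩
      inv_mem' := by
        rintro s ⟨hs, hs'⟩
        exact ⟨A.inv_mem hs, by rw [inv_pow, hs', inv_one]⟩ }
  have hZ : ∀ t, t ∈ Z ↔ t ∈ A ∧ t ^ r = 1 := fun t => Iff.rfl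
  have hZn : NormBy Q Z := by
    intro q hq t ht
    rw [hZ] at ht ⊢
    exact ⟨hAn q hq t ht.1, by rw [conj_pow, ht.2]; group⟩
  have hZc : IsComm Z := fun s hs t ht => hAc s hs.1 t ht.1
  have hZy : ∀ t ∈ Z, y * t = t * y := by
    intro t ht
    rw [hZ] at ht
    obtain ⟨i, rfl⟩ := hgen t ht.1
    rw [conj_zpow_eq hya]
    congr 1
    obtain ⟨w, hw⟩ := hru
    have : m * i = i + i * r * w := by
      have : m = 1 + r * w := by rw [← hw]; ring
      rw [this]; ring
    rw [this, zpow_add, zpow_mul, zpow_mul, zpow_natCast, ht.2, one_zpow, mul_one]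
  have hDn : NormBy Q (Z ⊔ Subgroup.zpowers y) := by
    refine normBy_sup_zpowers hZn fun q hq => conj_mem_sup_of_comm_mem ?_
    rw [hZ]
    refine ⟨hyc q hq, ?_⟩
    have h1 := hyc q hq
    have h1' := A.inv_mem h1
    obtain ⟨i, hi⟩ := hgen _ h1'
    have h2 : a ^ i * y = q * y * q⁻¹ := by rw [hi]; group
    have h3 : (a ^ i * y) ^ r = 1 := by rw [h2, conj_pow, hyr]; group
    rw [mul_pow_eq hya, hTpow, hyr, mul_one, zpow_mul, zpow_natCast, hi, inv_pow, inv_eq_one] at h3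
    exact h3
  have hDcyc := hcyc _ (sup_le (fun t ht => hAQ ((hZ t).mp ht).1) ((Subgroup.zpowers_le).mpr hyQ)) hDn
    (isComm_sup_zpowers hZc hZy)
  obtain ⟨e, he⟩ := hrn
  have hepos : 0 < orderOf a := orderOf_pos a
  have htr : (a ^ e) ^ r = 1 := by rw [← pow_mul, mul_comm, ← he, pow_orderOf_eq_one]
  have ht1 : a ^ e ≠ 1 := by
    intro h
    have h1 := orderOf_dvd_of_pow_eq_one h
    have he0 : 0 < e := by
      rcases Nat.eq_zero_or_pos e with h0 | h0
      · rw [h0, mul_zero] at he; omega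
      · exact h0
    have h2 := Nat.le_of_dvd he0 h1
    rw [he] at h2
    nlinarith [hr.two_le]
  have htZ : a ^ e ∈ Z := ⟨A.pow_mem haA e, htr⟩
  have := mem_zpowers_of_cyclic hDcyc hr (Subgroup.mem_sup_left htZ)
    (Subgroup.mem_sup_right (Subgroup.mem_zpowers y)) htr ht1 hyr
  exact hyA ((Subgroup.zpowers_le.mpr htZ.1) this)

end CyclicNormal

end OddInvolution

/-! ### Linear groups and restriction to invariant subgroups -/

namespace OddInvolution

section Linear

/-- The group of additive automorphisms of `V`, as units of the endomorphism ring. -/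
abbrev GLV (V : Type*) [AddCommGroup V] := (AddMonoid.End V)ˣ

variable {V : Type*} [AddCommGroup V]

instance [Finite V] : Finite (AddMonoid.End V) := DFunLike.finite _

lemma glv_ext {g h : GLV V} (H : ∀ v : V, g • v = h • v) : g = h :=
  Units.ext (AddMonoidHom.ext H)

lemma glv_apply (g : GLV V) (v : V) : (g : AddMonoid.End V) v = g • v := rfl

/-- Only the identity of `A` has nonzero fixed vectors. -/
def Fpf (A : Subgroup (GLV V)) : Prop := ∀ a ∈ A, a ≠ 1 → ∀ v : V, a • v = v → v = 0

/-- An abelian fixed-point-free group of automorphisms is cyclic: it embeds into the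
multiplicative group of a residue field of the commutative ring it generates. -/
lemma isCyclic_of_fpf [Finite V] [Nontrivial V] {A : Subgroup (GLV V)} (hA : IsComm A)
    (hf : Fpf A) : IsCyclic A := by
  classical
  let s : Set (AddMonoid.End V) := {x | ∃ a ∈ A, x = (a : AddMonoid.End V)}
  have hcomm : ∀ x ∈ s, ∀ y ∈ s, x * y = y * x := by
    rintro _ ⟨a, ha, rfl⟩ _ ⟨b, hb, rfl⟩
    rw [← Units.val_mul, ← Units.val_mul, hA a ha b hb]
  letI : CommRing (Subring.closure s) := Subring.closureCommRingOfComm hcomm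
  obtain ⟨v0, hv0⟩ := exists_ne (0 : V)
  haveI : Nontrivial (Subring.closure s) := by
    refine ⟨⟨0, 1, fun h => hv0 ?_⟩⟩
    have h1 : (0 : AddMonoid.End V) = 1 := congrArg Subtype.val h
    have h2 := congrArg (fun f : AddMonoid.End V => f v0) h1
    exact h2.symm
  obtain ⟨m, hm⟩ := Ideal.exists_maximal (Subring.closure s)
  let f : A →* Subring.closure s :=
    { toFun := fun a => ⟨(a : GLV V), Subring.subset_closure ⟨a, a.2, rfl⟩⟩
      map_one' := rfl
      map_mul' := fun _ _ => rfl }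
  letI := Ideal.Quotient.field m
  refine isCyclic_of_injective_ringHom (R := Subring.closure s ⧸ m)
    (f := ((Ideal.Quotient.mk m : Subring.closure s →* _)).comp f) ?_
  rw [injective_iff_map_eq_one]
  intro a ha
  by_contra hne
  have h1 : f a - 1 ∈ m := by
    rw [← Ideal.Quotient.eq_zero_iff_mem, map_sub, map_one, sub_eq_zero]
    exact ha
  have hreg : f a - 1 ∈ nonZeroDivisors (Subring.closure s) := by
    rw [mem_nonZeroDivisors_iff_left]
    intro x hx
    have hx' : (((a : GLV V) : AddMonoid.End V) - 1) * (x : AddMonoid.End V) = 0 :=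
      congrArg Subtype.val hx
    ext v
    have h2 := congrArg (fun f : AddMonoid.End V => f v) hx'
    have h3 : (a : GLV V) • ((x : AddMonoid.End V) v) - (x : AddMonoid.End V) v = 0 := h2
    exact hf a a.2 (fun h => hne (Subtype.ext h)) _ (sub_eq_zero.mp h3)
  have hu := IsArtinianRing.isUnit_of_mem_nonZeroDivisors hreg
  exact hm.ne_top (Ideal.eq_top_of_isUnit_mem m h1 hu)

/-- The automorphisms leaving the subgroup `X` invariant. -/
def stab (X : AddSubgroup V) : Subgroup (GLV V) where
  carrier := {g | ∀ v, g • v ∈ X ↔ v ∈ X}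
  one_mem' := by intro v; rw [one_smul]
  mul_mem' := by
    intro g h hg hh v
    rw [mul_smul, hg, hh]
  inv_mem' := by
    intro g hg v
    rw [← hg (g⁻¹ • v), smul_inv_smul]

lemma stab_smul {X : AddSubgroup V} {g : GLV V} (hg : g ∈ stab X) {v : V} (hv : v ∈ X) :
    g • v ∈ X := (hg v).mpr hv

lemma mem_stab [Finite V] {X : AddSubgroup V} {g : GLV V} (h : ∀ v ∈ X, g • v ∈ X) :
    g ∈ stab X := by
  intro v
  refine ⟨fun hv => ?_, h v⟩
  have hb : Function.Surjective (fun x : X => (⟨g • (x : V), h x x.2⟩ : X)) := by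
    apply Finite.surjective_of_injective
    intro x y hxy
    exact Subtype.ext (smul_left_cancel g (congrArg Subtype.val hxy))
  obtain ⟨x, hx⟩ := hb ⟨g • v, hv⟩
  have : (x : V) = v := smul_left_cancel g (congrArg Subtype.val hx)
  exact this ▸ x.2

/-- The automorphisms fixing every element of `X`. -/
def cen (X : AddSubgroup V) : Subgroup (GLV V) where
  carrier := {g | ∀ v ∈ X, g • v = v}
  one_mem' := by intro v _; rw [one_smul]
  mul_mem' := by
    intro g h hg hh v hv
    rw [mul_smul, hh v hv, hg v hv]
  inv_mem' := by
    intro g hg v hv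
    rw [inv_smul_eq_iff, hg v hv]

lemma mem_cen {X : AddSubgroup V} {g : GLV V} : g ∈ cen X ↔ ∀ v ∈ X, g • v = v := Iff.rfl

/-- Restriction of automorphisms to an invariant subgroup. -/
def res (X : AddSubgroup V) : stab X →* GLV X :=
  MonoidHom.toHomUnits
    { toFun := fun g =>
        ({ toFun := fun x => ⟨(g : GLV V) • (x : V), stab_smul g.2 x.2⟩
           map_zero' := Subtype.ext (smul_zero _)
           map_add' := fun x y => Subtype.ext (smul_add _ _ _) } : X →+ X)
      map_one' := by
        apply AddMonoidHom.ext
        intro x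
        exact Subtype.ext (one_smul _ _)
      map_mul' := by
        intro g h
        apply AddMonoidHom.ext
        intro x
        exact Subtype.ext (mul_smul _ _ _) }

lemma res_smul (X : AddSubgroup V) (g : stab X) (x : X) :
    ((res X g • x : X) : V) = (g : GLV V) • (x : V) := rfl

lemma res_eq_one (X : AddSubgroup V) (g : stab X) : res X g = 1 ↔ (g : GLV V) ∈ cen X := by
  constructor
  · intro h v hv
    have := res_smul X g ⟨v, hv⟩
    rw [h, one_smul] at this
    exact this.symm
  · intro h
    apply glv_ext
    intro x
    apply Subtype.ext
    rw [res_smul, one_smul]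
    exact h x x.2

/-- The group of automorphisms of `X` induced by `Q`. -/
def img (X : AddSubgroup V) (Q : Subgroup (GLV V)) : Subgroup (GLV X) :=
  (Q.subgroupOf (stab X)).map (res X)

/-- The number of vectors of `X` fixed by `α`. -/
noncomputable def cV (α : GLV V) (X : AddSubgroup V) : ℕ := Nat.card {v : V // v ∈ X ∧ α • v = v}

lemma cV_res (X : AddSubgroup V) (a : stab X) : cV (res X a) ⊤ = cV (a : GLV V) X := by
  refine Nat.card_congr ⟨fun x => ⟨x.1.1, x.1.2, ?_⟩, fun v => ⟨⟨v.1, v.2.1⟩, trivial, ?_⟩,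
    fun _ => rfl, fun _ => rfl⟩
  · rw [← res_smul, x.2.2]
  · exact Subtype.ext v.2.2

lemma conj_sq {G : Type*} [Group G] {α : G} (hα : α * α = 1) :
    MulAut.conj α * MulAut.conj α = 1 := by
  rw [← map_mul, hα, map_one]

section transfer

variable {X : AddSubgroup V} {Q : Subgroup (GLV V)}

lemma card_subgroupOf' {G : Type*} [Group G] {Q S : Subgroup G} (h : Q ≤ S) :
    Nat.card (Q.subgroupOf S) = Nat.card Q :=
  Nat.card_congr (Subgroup.subgroupOfEquivOfLe h).toEquiv

lemma card_img [Finite V] (hX : Q ≤ stab X) :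
    Nat.card (img X Q) * Nat.card ↥(Q ⊓ cen X) = Nat.card Q := by
  have h1 := card_map_mul_card_ker (res X) (Q.subgroupOf (stab X))
  rw [card_subgroupOf' hX] at h1
  rw [← h1, img]
  congr 1
  refine Nat.card_congr ⟨fun x => ⟨⟨x.1, hX x.2.1⟩, x.2.1, (res_eq_one X _).mpr x.2.2⟩,
    fun x => ⟨x.1.1, x.2.1, (res_eq_one X _).mp x.2.2⟩, fun _ => rfl, fun _ => rfl⟩

lemma img_nilpotent (hX : Q ≤ stab X) (hQ : Group.IsNilpotent Q) :
    Group.IsNilpotent (img X Q) := by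
  have : Group.IsNilpotent (Q.subgroupOf (stab X)) :=
    Group.nilpotent_of_mulEquiv (Subgroup.subgroupOfEquivOfLe hX).symm
  exact Group.nilpotent_of_surjective ((res X).subgroupMap (Q.subgroupOf (stab X)))
    ((res X).subgroupMap_surjective _)

lemma img_odd [Finite V] (hX : Q ≤ stab X) (hQ : Odd (Nat.card Q)) : Odd (Nat.card (img X Q)) :=
  hQ.of_dvd_nat ⟨_, (card_img hX).symm⟩

lemma img_coprime [Finite V] (hX : Q ≤ stab X) (hQ : (Nat.card Q).Coprime (Nat.card V)) :
    (Nat.card (img X Q)).Coprime (Nat.card X) :=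
  (hQ.coprime_dvd_left ⟨_, (card_img hX).symm⟩).coprime_dvd_right
    (AddSubgroup.card_addSubgroup_dvd_card X)

variable {α : GLV V}

lemma cc_subgroupOf {S Q : Subgroup (GLV V)} (hX : Q ≤ S) (hα : α ∈ S) :
    cc (MulAut.conj (⟨α, hα⟩ : S)) (Q.subgroupOf S) = cc (MulAut.conj α) Q :=
  Nat.card_congr ⟨fun x => ⟨x.1.1, x.2.1, congrArg Subtype.val x.2.2⟩,
    fun x => ⟨⟨x.1, hX x.2.1⟩, x.2.1, Subtype.ext x.2.2⟩, fun _ => rfl, fun _ => rfl⟩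

lemma ii_subgroupOf {S Q : Subgroup (GLV V)} (hX : Q ≤ S) (hα : α ∈ S) :
    ii (MulAut.conj (⟨α, hα⟩ : S)) (Q.subgroupOf S) = ii (MulAut.conj α) Q :=
  Nat.card_congr ⟨fun x => ⟨x.1.1, x.2.1, congrArg Subtype.val x.2.2⟩,
    fun x => ⟨⟨x.1, hX x.2.1⟩, x.2.1, Subtype.ext x.2.2⟩, fun _ => rfl, fun _ => rfl⟩

lemma subgroupOf_inf_ker (hX : Q ≤ stab X) :
    Q.subgroupOf (stab X) ⊓ (res X).ker = (Q ⊓ cen X).subgroupOf (stab X) := by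
  ext g
  simp only [Subgroup.mem_inf, Subgroup.mem_subgroupOf, MonoidHom.mem_ker, res_eq_one]

lemma cc_img [Finite V] (hα2 : α * α = 1) (hα : α ∈ stab X) (hX : Q ≤ stab X)
    (hQ : Odd (Nat.card Q)) (hQα : SInv (MulAut.conj α) Q) :
    cc (MulAut.conj (res X ⟨α, hα⟩)) (img X Q) * cc (MulAut.conj α) (Q ⊓ cen X) =
      cc (MulAut.conj α) Q := by
  have h := cc_map_mul (σ := MulAut.conj (⟨α, hα⟩ : stab X))
    (σ' := MulAut.conj (res X ⟨α, hα⟩)) (φ := res X) (Q := Q.subgroupOf (stab X))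
    (conj_sq (Subtype.ext hα2)) (by intro x; simp) (by rw [card_subgroupOf' hX]; exact hQ)
    (fun x hx => hQα x.1 hx)
  rwa [subgroupOf_inf_ker hX, cc_subgroupOf (inf_le_left.trans hX), cc_subgroupOf hX] at h

lemma ii_img [Finite V] (hα2 : α * α = 1) (hα : α ∈ stab X) (hX : Q ≤ stab X)
    (hQ : Odd (Nat.card Q)) (hQα : SInv (MulAut.conj α) Q) :
    ii (MulAut.conj (res X ⟨α, hα⟩)) (img X Q) * ii (MulAut.conj α) (Q ⊓ cen X) =
      ii (MulAut.conj α) Q := by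
  have h := ii_map_mul (σ := MulAut.conj (⟨α, hα⟩ : stab X))
    (σ' := MulAut.conj (res X ⟨α, hα⟩)) (φ := res X) (Q := Q.subgroupOf (stab X))
    (conj_sq (Subtype.ext hα2)) (conj_sq (by rw [← map_mul]; exact
      (congrArg (res X) (Subtype.ext hα2)).trans (map_one _)))
    (by intro x; simp) (by rw [card_subgroupOf' hX]; exact hQ)
    (fun x hx => hQα x.1 hx)
  rwa [subgroupOf_inf_ker hX, ii_subgroupOf (inf_le_left.trans hX), ii_subgroupOf hX] at h

lemma img_sinv (hα : α ∈ stab X) (hQα : SInv (MulAut.conj α) Q) :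
    SInv (MulAut.conj (res X ⟨α, hα⟩)) (img X Q) := by
  rintro _ ⟨x, hx, rfl⟩
  exact ⟨MulAut.conj (⟨α, hα⟩ : stab X) x, hQα x.1 hx, by simp⟩

end transfer

/-- A nilpotent group of odd order coprime to `|V|`. -/
structure Good (Q : Subgroup (GLV V)) : Prop where
  nil : Group.IsNilpotent Q
  odd : Odd (Nat.card Q)
  cop : (Nat.card Q).Coprime (Nat.card V)

lemma Good.mono [Finite V] {Q P : Subgroup (GLV V)} (hQ : Good Q) (h : P ≤ Q) : Good P where
  nil := by
    have := hQ.nil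
    have : Group.IsNilpotent (P.subgroupOf Q) := inferInstance
    exact Group.nilpotent_of_mulEquiv (Subgroup.subgroupOfEquivOfLe h)
  odd := odd_of_le h hQ.odd
  cop := hQ.cop.coprime_dvd_left (Subgroup.card_dvd_of_le h)

lemma Good.img [Finite V] {Q : Subgroup (GLV V)} (hQ : Good Q) {X : AddSubgroup V}
    (hX : Q ≤ stab X) : Good (img X Q) :=
  ⟨img_nilpotent hX hQ.nil, img_odd hX hQ.odd, img_coprime hX hQ.cop⟩

/-- The bound `2|Q| ≤ |V|` for nilpotent odd-order coprime linear groups. -/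
def StmtS (V : Type*) [AddCommGroup V] : Prop :=
  ∀ Q : Subgroup (GLV V), Good Q → 2 * Nat.card Q ≤ Nat.card V

/-- The two bounds for the number of elements of `Q` inverted by an involution `α`. -/
def StmtL (V : Type*) [AddCommGroup V] : Prop :=
  ∀ α : GLV V, α * α = 1 → ∀ Q : Subgroup (GLV V), Good Q → SInv (MulAut.conj α) Q →
    (ii (MulAut.conj α) Q = 1 ∨ 2 * ii (MulAut.conj α) Q ≤ cV α ⊤ ^ 2) ∧
    ii (MulAut.conj α) Q ≤ cV α ⊤ * cc (MulAut.conj α) Q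

/-- `StmtS` for an invariant subgroup `X`, read off in `Q` rather than in its image on `X`. -/
lemma StmtS.rel [Finite V] {X : AddSubgroup V} (h : StmtS X) {Q : Subgroup (GLV V)} (hQ : Good Q)
    (hX : Q ≤ stab X) : 2 * Nat.card Q ≤ Nat.card X * Nat.card ↥(Q ⊓ cen X) := by
  have h1 := h _ (hQ.img hX)
  rw [← card_img hX, ← mul_assoc]
  exact Nat.mul_le_mul_right _ h1

/-- The first bound of `StmtL` on an invariant subgroup `X`, read off in `Q`. -/
lemma StmtL.relA [Finite V] {X : AddSubgroup V} (h : StmtL X) {α : GLV V} (hα : α * α = 1)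
    {Q : Subgroup (GLV V)} (hQ : Good Q) (hQα : SInv (MulAut.conj α) Q)
    (hαX : α ∈ stab X) (hX : Q ≤ stab X) :
    ii (MulAut.conj α) Q = ii (MulAut.conj α) (Q ⊓ cen X) ∨
    2 * ii (MulAut.conj α) Q ≤ cV α X ^ 2 * ii (MulAut.conj α) (Q ⊓ cen X) := by
  have h1 := (h (res X ⟨α, hαX⟩) (by rw [← map_mul]; exact
      (congrArg (res X) (Subtype.ext hα)).trans (map_one _)) _ (hQ.img hX) (img_sinv hαX hQα)).1
  rw [cV_res] at h1
  rw [← ii_img hα hαX hX hQ.odd hQα]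
  rcases h1 with h1 | h1
  · left; rw [h1, one_mul]
  · right; rw [← mul_assoc]; exact Nat.mul_le_mul_right _ h1

/-- The second bound of `StmtL` on an invariant subgroup `X`, read off in `Q`. -/
lemma StmtL.relB [Finite V] {X : AddSubgroup V} (h : StmtL X) {α : GLV V} (hα : α * α = 1)
    {Q : Subgroup (GLV V)} (hQ : Good Q) (hQα : SInv (MulAut.conj α) Q)
    (hαX : α ∈ stab X) (hX : Q ≤ stab X) :
    ii (MulAut.conj α) Q * cc (MulAut.conj α) (Q ⊓ cen X) ≤
      cV α X * cc (MulAut.conj α) Q * ii (MulAut.conj α) (Q ⊓ cen X) := by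
  have h1 := (h (res X ⟨α, hαX⟩) (by rw [← map_mul]; exact
      (congrArg (res X) (Subtype.ext hα)).trans (map_one _)) _ (hQ.img hX) (img_sinv hαX hQα)).2
  rw [cV_res] at h1
  rw [← ii_img hα hαX hX hQ.odd hQα, ← cc_img hα hαX hX hQ.odd hQα]
  calc _ = ii _ (OddInvolution.img X Q) * (ii (MulAut.conj α) (Q ⊓ cen X) * cc (MulAut.conj α) (Q ⊓ cen X)) := by ring
    _ ≤ _ := Nat.mul_le_mul_right _ h1
    _ = _ := by ring

end Linear

end OddInvolution

/-! ### Orthogonal conjugates of idempotents -/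

namespace OddInvolution

section Idem

variable {R : Type*} [Ring R]

/-- Conjugation by a unit. -/
def cj (g : Rˣ) : R →+* R where
  toFun e := g * e * (g⁻¹ : Rˣ)
  map_one' := by simp
  map_zero' := by simp
  map_mul' x y := by simp [mul_assoc]
  map_add' x y := by rw [mul_add, add_mul]

lemma cj_apply (g : Rˣ) (e : R) : cj g e = g * e * (g⁻¹ : Rˣ) := rfl

lemma cj_mul (g h : Rˣ) (e : R) : cj (g * h) e = cj g (cj h e) := by
  simp only [cj_apply, mul_inv_rev, Units.val_mul, mul_assoc]

@[simp] lemma cj_one (e : R) : cj 1 e = e := by simp [cj_apply]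

lemma cj_inv_cj (g : Rˣ) (e : R) : cj g⁻¹ (cj g e) = e := by
  rw [← cj_mul, inv_mul_cancel, cj_one]

lemma cj_cj_inv (g : Rˣ) (e : R) : cj g (cj g⁻¹ e) = e := by
  rw [← cj_mul, mul_inv_cancel, cj_one]

lemma cj_injective (g : Rˣ) : Function.Injective (cj g : R → R) :=
  Function.LeftInverse.injective (cj_inv_cj g)

lemma cj_eq_iff (g : Rˣ) (e : R) : cj g e = e ↔ g * e = e * g := by
  rw [cj_apply, Units.mul_inv_eq_iff_eq_mul]

/-- An idempotent whose distinct conjugates under `Γ` are orthogonal. -/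
structure BlockIdem (Γ : Subgroup Rˣ) (e : R) : Prop where
  idem : e * e = e
  dich : ∀ g ∈ Γ, cj g e = e ∨ (cj g e * e = 0 ∧ e * cj g e = 0)

variable {Γ : Subgroup Rˣ} {e : R}

lemma BlockIdem.conj (he : BlockIdem Γ e) {g : Rˣ} (hg : g ∈ Γ) : BlockIdem Γ (cj g e) where
  idem := by rw [← map_mul, he.idem]
  dich := by
    intro k hk
    have hc : g⁻¹ * k * g ∈ Γ := Γ.mul_mem (Γ.mul_mem (Γ.inv_mem hg) hk) hg
    have h2 : cj k (cj g e) = cj g (cj (g⁻¹ * k * g) e) := by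
      rw [← cj_mul, ← cj_mul]; congr 2; group
    rw [h2]
    rcases he.dich _ hc with h | h
    · left; rw [h]
    · right; rw [← map_mul, ← map_mul, h.1, h.2, map_zero]; simp

lemma BlockIdem.mono (he : BlockIdem Γ e) {Δ : Subgroup Rˣ} (h : Δ ≤ Γ) : BlockIdem Δ e :=
  ⟨he.idem, fun g hg => he.dich g (h hg)⟩

lemma BlockIdem.mul_eq (he : BlockIdem Γ e) {g k : Rˣ} (hg : g ∈ Γ) (hk : k ∈ Γ)
    (hne : cj g e ≠ cj k e) : cj g e * cj k e = 0 := by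
  have hc : k⁻¹ * g ∈ Γ := Γ.mul_mem (Γ.inv_mem hk) hg
  rcases he.dich _ hc with h | h
  · exfalso; apply hne
    rw [cj_mul] at h
    rw [← h, cj_cj_inv, h]
  · have h2 : cj g e = cj k (cj (k⁻¹ * g) e) := by rw [← cj_mul]; congr 2; group
    rw [h2, ← map_mul, h.1, map_zero]

variable [Finite R]

open Classical in
/-- The set of conjugates of `e` under `T`. -/
noncomputable def orb (T : Subgroup Rˣ) (e : R) : Finset R :=
  (Set.toFinite {x | ∃ t ∈ T, cj t e = x}).toFinset

lemma mem_orb {T : Subgroup Rˣ} {e x : R} : x ∈ orb T e ↔ ∃ t ∈ T, cj t e = x := by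
  simp [orb]

/-- The sum of the conjugates of `e` under `T`. -/
noncomputable def osum (T : Subgroup Rˣ) (e : R) : R := ∑ x ∈ orb T e, x

lemma self_mem_orb (T : Subgroup Rˣ) (e : R) : e ∈ orb T e := mem_orb.mpr ⟨1, T.one_mem, cj_one e⟩

lemma cj_osum (g : Rˣ) (T T' : Subgroup Rˣ) (e e' : R)
    (h : ∀ x, x ∈ orb T e ↔ cj g x ∈ orb T' e') : cj g (osum T e) = osum T' e' := by
  classical
  rw [osum, osum, map_sum]
  refine Finset.sum_bij (fun x _ => cj g x) (fun x hx => (h x).mp hx)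
    (fun x _ y _ hxy => cj_injective g hxy) (fun y hy => ?_) (fun _ _ => rfl)
  refine ⟨cj g⁻¹ y, (h _).mpr ?_, cj_cj_inv g y⟩
  rwa [cj_cj_inv]

lemma cj_osum_self {T : Subgroup Rˣ} {t : Rˣ} (ht : t ∈ T) (e : R) :
    cj t (osum T e) = osum T e := by
  apply cj_osum
  intro x
  simp only [mem_orb]
  constructor
  · rintro ⟨s, hs, rfl⟩; exact ⟨t * s, T.mul_mem ht hs, cj_mul _ _ _⟩
  · rintro ⟨s, hs, h⟩
    exact ⟨t⁻¹ * s, T.mul_mem (T.inv_mem ht) hs, by rw [cj_mul, h, cj_inv_cj]⟩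

/-- Elements normalizing `T` and moving `e` inside its `T`-orbit fix the orbit sum. -/
lemma cj_osum_normalizes {T : Subgroup Rˣ} {a : Rˣ} (ha : ∀ t ∈ T, a * t * a⁻¹ ∈ T)
    (ha' : ∀ t ∈ T, a⁻¹ * t * a ∈ T) (e : R) (hae : ∃ t ∈ T, cj a e = cj t e) :
    cj a (osum T e) = osum T e := by
  obtain ⟨t, ht, hte⟩ := hae
  apply cj_osum
  intro x
  simp only [mem_orb]
  constructor
  · rintro ⟨s, hs, rfl⟩
    refine ⟨a * s * a⁻¹ * t, T.mul_mem (ha s hs) ht, ?_⟩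
    rw [cj_mul, ← hte, ← cj_mul, ← cj_mul]; congr 2; group
  · rintro ⟨s, hs, h⟩
    have h1 : cj (a⁻¹ * (s * t⁻¹) * a) e = x := by
      rw [cj_mul, hte, ← cj_mul]
      have : a⁻¹ * (s * t⁻¹) * t = a⁻¹ * s := by group
      rw [this, cj_mul, h, cj_inv_cj]
    exact ⟨_, ha' _ (T.mul_mem hs (T.inv_mem ht)), h1⟩

lemma BlockIdem.osum_mul (he : BlockIdem Γ e) {T : Subgroup Rˣ} (hT : T ≤ Γ) {g : Rˣ} (hg : g ∈ T) :
    osum T e * cj g e = cj g e := by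
  classical
  rw [osum, Finset.sum_mul, Finset.sum_eq_single (cj g e)]
  · exact (he.conj (hT hg)).idem
  · intro b hb hne
    obtain ⟨t, ht, rfl⟩ := mem_orb.mp hb
    exact he.mul_eq (hT ht) (hT hg) hne
  · intro h; exact absurd (mem_orb.mpr ⟨g, hg, rfl⟩) h

lemma BlockIdem.osum_idem (he : BlockIdem Γ e) {T : Subgroup Rˣ} (hT : T ≤ Γ) :
    osum T e * osum T e = osum T e := by
  conv_lhs => rw [osum]
  rw [show (∑ x ∈ orb T e, x) = osum T e from rfl]
  conv_lhs => rhs; rw [osum]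
  rw [Finset.mul_sum, osum]
  refine Finset.sum_congr rfl fun x hx => ?_
  obtain ⟨t, ht, rfl⟩ := mem_orb.mp hx
  exact he.osum_mul hT ht

lemma BlockIdem.osum_mul_cj_eq_zero (he : BlockIdem Γ e) {T : Subgroup Rˣ} (hT : T ≤ Γ) {g : Rˣ}
    (hg : g ∈ Γ) (h : ∀ s ∈ T, ∀ t ∈ T, cj s e ≠ cj (g * t) e) :
    osum T e * cj g (osum T e) = 0 ∧ cj g (osum T e) * osum T e = 0 := by
  constructor
  · rw [osum, map_sum, Finset.sum_mul_sum]
    refine Finset.sum_eq_zero fun x hx => Finset.sum_eq_zero fun y hy => ?_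
    obtain ⟨s, hs, rfl⟩ := mem_orb.mp hx
    obtain ⟨t, ht, rfl⟩ := mem_orb.mp hy
    rw [← cj_mul]
    exact he.mul_eq (hT hs) (Γ.mul_mem hg (hT ht)) (h s hs t ht)
  · rw [osum, map_sum, Finset.sum_mul_sum]
    refine Finset.sum_eq_zero fun x hx => Finset.sum_eq_zero fun y hy => ?_
    obtain ⟨s, hs, rfl⟩ := mem_orb.mp hy
    obtain ⟨t, ht, rfl⟩ := mem_orb.mp hx
    rw [← cj_mul]
    exact he.mul_eq (Γ.mul_mem hg (hT ht)) (hT hs) (h s hs t ht).symm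

end Idem

end OddInvolution

/-! ### Maximal subgroups of nilpotent groups -/

namespace OddInvolution

section Maximal

variable {G : Type*} [Group G] [Finite G]

/-- `H` is a subgroup of `Q` of prime index `r`, with the powers of any `g ∈ Q ∖ H` representing
the cosets. -/
structure PrimeIndex (Q H : Subgroup G) (r : ℕ) : Prop where
  prime : r.Prime
  le : H ≤ Q
  ne : H ≠ Q
  card : Nat.card Q = r * Nat.card H
  comm : ∀ a ∈ Q, ∀ b ∈ Q, a * b * a⁻¹ * b⁻¹ ∈ H
  cover : ∀ g ∈ Q, g ∉ H → ∀ q ∈ Q, ∃ i < r, (g ^ i)⁻¹ * q ∈ H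
  inj : ∀ g ∈ Q, g ∉ H → ∀ i < r, ∀ j < r, (g ^ i)⁻¹ * g ^ j ∈ H → i = j

/-- A proper subgroup of a finite nilpotent group lies in a (normal) subgroup of prime index. -/
lemma exists_primeIndex {Q S : Subgroup G} (hnil : Group.IsNilpotent Q) (hS : S ≤ Q)
    (hne : S ≠ Q) : ∃ H r, S ≤ H ∧ PrimeIndex Q H r := by
  classical
  have hS' : S.subgroupOf Q ≠ ⊤ := by
    rw [Ne, Subgroup.subgroupOf_eq_top]
    exact fun h => hne (le_antisymm hS h)
  obtain ⟨C, hC, hSC⟩ := (eq_top_or_exists_le_coatom (S.subgroupOf Q)).resolve_left hS'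
  haveI : C.Normal := Subgroup.NormalizerCondition.normal_of_coatom C Group.normalizerCondition_of_isNilpotent hC
  have hgen : ∀ x : Q ⧸ C, x ≠ 1 → Subgroup.zpowers x = ⊤ := by
    intro x hx
    have h1 : C < (Subgroup.zpowers x).comap (QuotientGroup.mk' C) := by
      refine lt_of_le_of_ne ?_ ?_
      · intro c hc
        rw [Subgroup.mem_comap, (QuotientGroup.eq_one_iff c).mpr hc |> fun h => (show QuotientGroup.mk' C c = 1 from h)]
        exact Subgroup.one_mem _
      · intro h
        obtain ⟨y, rfl⟩ := QuotientGroup.mk'_surjective C x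
        apply hx
        refine (QuotientGroup.eq_one_iff y).mpr ?_
        rw [h]
        exact Subgroup.mem_zpowers _
    have h2 := hC.2 _ h1
    rw [eq_top_iff]
    intro y _
    obtain ⟨z, rfl⟩ := QuotientGroup.mk'_surjective C y
    have : z ∈ (Subgroup.zpowers x).comap (QuotientGroup.mk' C) := by rw [h2]; trivial
    exact this
  have hnt : Nat.card (Q ⧸ C) ≠ 1 := by
    intro h
    apply hC.1
    rw [← Subgroup.index_eq_one]; exact h
  obtain ⟨r, hr, hrd⟩ := Nat.exists_prime_and_dvd hnt
  haveI := Fact.mk hr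
  obtain ⟨x0, hx0⟩ := exists_prime_orderOf_dvd_card' r hrd
  have hx01 : x0 ≠ 1 := by rintro rfl; rw [orderOf_one] at hx0; exact hr.one_lt.ne hx0
  have hcard : Nat.card (Q ⧸ C) = r := by
    rw [← hx0, ← Nat.card_zpowers, hgen x0 hx01, Subgroup.card_top]
  have hord : ∀ x : Q ⧸ C, x ≠ 1 → orderOf x = r := by
    intro x hx
    rw [← Nat.card_zpowers, hgen x hx, Subgroup.card_top, hcard]
  have hmem : ∀ q : Q, (q : G) ∈ C.map Q.subtype ↔ (q : Q ⧸ C) = 1 := by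
    intro q
    rw [QuotientGroup.eq_one_iff]
    constructor
    · rintro ⟨c, hc, h⟩
      have : c = q := Subtype.ext h
      exact this ▸ hc
    · intro h; exact ⟨q, h, rfl⟩
  have hcQ : Nat.card ↥(C.map Q.subtype) = Nat.card C :=
    (Nat.card_congr (C.equivMapOfInjective _ Q.subtype_injective).toEquiv).symm
  have hcomm : ∀ x y : Q ⧸ C, x * y = y * x := by
    intro x y
    have hx : x ∈ Subgroup.zpowers x0 := by rw [hgen x0 hx01]; trivial
    have hy : y ∈ Subgroup.zpowers x0 := by rw [hgen x0 hx01]; trivial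
    obtain ⟨i, rfl⟩ := hx
    obtain ⟨j, rfl⟩ := hy
    simp only [← zpow_add, add_comm]
  refine ⟨C.map Q.subtype, r, ?_, hr, ?_, ?_, ?_, ?_, ?_, ?_⟩
  · intro s hs
    exact ⟨⟨s, hS hs⟩, hSC hs, rfl⟩
  · rintro _ ⟨c, _, rfl⟩; exact c.2
  · intro h
    apply hC.1
    rw [eq_top_iff]
    intro q _
    rw [← QuotientGroup.eq_one_iff (N := C), ← hmem, h]
    exact q.2
  · rw [hcQ, ← hcard]
    exact C.card_eq_card_quotient_mul_card_subgroup
  · intro a ha b hb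
    have := hmem (⟨a, ha⟩ * ⟨b, hb⟩ * ⟨a, ha⟩⁻¹ * ⟨b, hb⟩⁻¹)
    refine this.mpr ?_
    change ((⟨a, ha⟩ : Q) : Q ⧸ C) * ((⟨b, hb⟩ : Q) : Q ⧸ C) * ((⟨a, ha⟩ : Q) : Q ⧸ C)⁻¹ *
      ((⟨b, hb⟩ : Q) : Q ⧸ C)⁻¹ = 1
    rw [hcomm ((⟨a, ha⟩ : Q) : Q ⧸ C) ((⟨b, hb⟩ : Q) : Q ⧸ C)]
    group
  · intro g hg hgH q hq
    have hg1 : ((⟨g, hg⟩ : Q) : Q ⧸ C) ≠ 1 := fun h => hgH ((hmem ⟨g, hg⟩).mpr h)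
    have hq' : ((⟨q, hq⟩ : Q) : Q ⧸ C) ∈ Subgroup.zpowers ((⟨g, hg⟩ : Q) : Q ⧸ C) := by
      rw [hgen _ hg1]; trivial
    rw [mem_zpowers_iff_mem_range_orderOf, hord _ hg1] at hq'
    obtain ⟨i, hi, h⟩ := Finset.mem_image.mp hq'
    refine ⟨i, Finset.mem_range.mp hi, ?_⟩
    refine (hmem ((⟨g, hg⟩ ^ i)⁻¹ * ⟨q, hq⟩)).mpr ?_
    change ((((⟨g, hg⟩ : Q) : Q ⧸ C)) ^ i)⁻¹ * ((⟨q, hq⟩ : Q) : Q ⧸ C) = 1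
    rw [← h]; group
  · intro g hg hgH i hi j hj h
    have hg1 : ((⟨g, hg⟩ : Q) : Q ⧸ C) ≠ 1 := fun h => hgH ((hmem ⟨g, hg⟩).mpr h)
    have h' := (hmem ((⟨g, hg⟩ ^ i)⁻¹ * ⟨g, hg⟩ ^ j)).mp h
    change ((((⟨g, hg⟩ : Q) : Q ⧸ C)) ^ i)⁻¹ * ((⟨g, hg⟩ : Q) : Q ⧸ C) ^ j = 1 at h'
    rw [inv_mul_eq_one] at h'
    have hinj := pow_injOn_Iio_orderOf (x := ((⟨g, hg⟩ : Q) : Q ⧸ C))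
    rw [hord _ hg1] at hinj
    exact hinj hi hj h'

/-- If `t⁻¹α` lies in a subgroup `T` with `t ∈ Q`, then some `Q`-conjugate of the involution `α`
lies in `T`. -/
lemma exists_conj_mem {Q T : Subgroup G} (hQ : Odd (Nat.card Q)) {α : G} (hα : α * α = 1)
    (hQα : SInv (MulAut.conj α) Q) {t : G} (ht : t ∈ Q) (htT : t⁻¹ * α ∈ T) :
    ∃ w ∈ Q, w⁻¹ * α * w ∈ T := by
  have hαi : α⁻¹ = α := inv_eq_of_mul_eq_one_left hα
  have hinv : ∀ x ∈ Q, α * x * α ∈ Q := by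
    intro x hx
    have := hQα x hx
    rwa [MulAut.conj_apply, hαi] at this
  obtain ⟨m, hm⟩ := exists_half hQ
  -- `b = (t⁻¹α)²` lies in `Q`, so it has a square root `b ^ m` in `Q`
  have hb : (t⁻¹ * α) * (t⁻¹ * α) ∈ Q := by
    have := Q.mul_mem (Q.inv_mem ht) (hinv _ (Q.inv_mem ht))
    simpa [mul_assoc] using this
  set β := t⁻¹ * α with hβ
  set b := β * β with hbdef
  have hcomm : Commute β b := (Commute.refl β).mul_right (Commute.refl β)
  set γ := β * (b ^ m)⁻¹ with hγ
  have hγT : γ ∈ T := T.mul_mem htT (T.inv_mem (T.pow_mem (T.mul_mem htT htT) _))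
  have hγ2 : γ * γ = 1 := by
    have h1 : (b ^ m)⁻¹ * β = β * (b ^ m)⁻¹ := ((hcomm.pow_right m).inv_right).symm.eq
    calc γ * γ = β * ((b ^ m)⁻¹ * β) * (b ^ m)⁻¹ := by rw [hγ]; group
      _ = b * ((b ^ m * b ^ m)⁻¹) := by rw [h1, hbdef]; group
      _ = 1 := by rw [← pow_add, ← two_mul, hm b hb, mul_inv_cancel]
  -- `u = γα` is inverted by `α`
  have hu : γ * α ∈ Q := by
    have : γ * α = t⁻¹ * (α * (b ^ m)⁻¹ * α) := by rw [hγ, hβ]; group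
    rw [this]
    exact Q.mul_mem (Q.inv_mem ht) (hinv _ (Q.inv_mem (Q.pow_mem hb m)))
  set u := γ * α with hudef
  have huα : α * u * α = u⁻¹ := by
    rw [eq_inv_iff_mul_eq_one, hudef]
    calc α * (γ * α) * α * (γ * α) = α * γ * (α * α) * γ * α := by group
      _ = α * (γ * γ) * α := by rw [hα]; group
      _ = 1 := by rw [hγ2, mul_one, hα]
  have hwα : ∀ k : ℕ, α * u ^ k * α = (u ^ k)⁻¹ := by
    intro k
    have := congrArg (· ^ k) huα
    rw [inv_pow] at this
    rw [← this]
    have h2 : ∀ x : G, α * x * α = α * x * α⁻¹ := by rw [hαi]; exact fun _ => rfl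
    rw [h2, h2, conj_pow]
  refine ⟨(u ^ m)⁻¹, Q.inv_mem (Q.pow_mem hu m), ?_⟩
  have : u ^ m * α * (u ^ m)⁻¹ = γ := by
    calc u ^ m * α * (u ^ m)⁻¹ = u ^ m * α * (α * u ^ m * α) := by rw [hwα]
      _ = u ^ m * (α * α) * u ^ m * α := by group
      _ = u ^ (2 * m) * α := by rw [hα, two_mul, pow_add]; group
      _ = γ := by rw [hm u hu, hudef, mul_assoc, hα, mul_one]
  rw [inv_inv, this]
  exact hγT

end Maximal

end OddInvolution

/-! ### Averaging idempotents -/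

namespace OddInvolution

section Average

variable {V : Type*} [AddCommGroup V] [Finite V]

/-- The averaging endomorphism `|B|⁻¹ ∑_{b ∈ B} b`, where `c` plays the role of `|B|⁻¹`. -/
noncomputable def avg (c : ℕ → ℕ) (B : Subgroup (GLV V)) : AddMonoid.End V :=
  letI := Fintype.ofFinite B
  c (Nat.card B) • ∑ b : B, ((b : GLV V) : AddMonoid.End V)

variable {c : ℕ → ℕ} {B : Subgroup (GLV V)}

lemma mul_avg {b : GLV V} (hb : b ∈ B) : (b : AddMonoid.End V) * avg c B = avg c B := by
  letI := Fintype.ofFinite B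
  rw [avg, mul_smul_comm, Finset.mul_sum]
  congr 1
  exact Fintype.sum_equiv (Equiv.mulLeft (⟨b, hb⟩ : B)) _ _ (fun x => rfl)

lemma smul_avg {b : GLV V} (hb : b ∈ B) (v : V) : b • (avg c B v) = avg c B v :=
  congrArg (fun f : AddMonoid.End V => f v) (mul_avg (c := c) hb)

lemma avg_apply_of_fixed (hc : ∀ x : V, (c (Nat.card B) * Nat.card B) • x = x) {v : V}
    (hv : ∀ b ∈ B, b • v = v) : avg c B v = v := by
  letI := Fintype.ofFinite B
  have h1 : (∑ b : B, ((b : GLV V) : AddMonoid.End V)) v = Nat.card B • v := by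
    refine (AddMonoidHom.finsetSum_apply
      (fun b : B => (((b : GLV V) : AddMonoid.End V) : V →+ V)) Finset.univ v).trans ?_
    calc ∑ b : B, ((b : GLV V) : AddMonoid.End V) v = ∑ b : B, v :=
          Finset.sum_congr rfl fun b _ => hv b b.2
      _ = _ := by rw [Finset.sum_const, Finset.card_univ, Nat.card_eq_fintype_card]
  calc avg c B v = c (Nat.card B) • ((∑ b : B, ((b : GLV V) : AddMonoid.End V)) v) := rfl
    _ = v := by rw [h1, ← mul_nsmul', hc]

lemma avg_idem (hc : ∀ x : V, (c (Nat.card B) * Nat.card B) • x = x) :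
    avg c B * avg c B = avg c B := by
  apply AddMonoidHom.ext
  intro v
  exact avg_apply_of_fixed hc (fun b hb => smul_avg hb v)

lemma commute_avg {a : AddMonoid.End V} (ha : ∀ b ∈ B, a * ((b : GLV V) : AddMonoid.End V) = b * a) :
    a * avg c B = avg c B * a := by
  letI := Fintype.ofFinite B
  have : avg c B = c (Nat.card B) • ∑ b : B, ((b : GLV V) : AddMonoid.End V) := rfl
  rw [this, mul_smul_comm, Finset.mul_sum, smul_mul_assoc, Finset.sum_mul]
  congr 1
  exact Finset.sum_congr rfl fun b _ => ha b b.2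

lemma cj_avg (g : GLV V) :
    cj g (avg c B) = avg c (B.map (MulAut.conj g).toMonoidHom) := by
  letI := Fintype.ofFinite B
  letI := Fintype.ofFinite (B.map (MulAut.conj g).toMonoidHom)
  have e := B.equivMapOfInjective (MulAut.conj g).toMonoidHom (MulAut.conj g).injective
  have hcard : Nat.card (B.map (MulAut.conj g).toMonoidHom) = Nat.card B :=
    (Nat.card_congr e.toEquiv).symm
  have h1 : avg c B = c (Nat.card B) • ∑ b : B, ((b : GLV V) : AddMonoid.End V) := rfl
  have h2 : avg c (B.map (MulAut.conj g).toMonoidHom) = c (Nat.card B) •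
      ∑ b : B.map (MulAut.conj g).toMonoidHom, ((b : GLV V) : AddMonoid.End V) := by
    rw [← hcard]; rfl
  rw [h1, h2, map_nsmul, map_sum]
  congr 1
  refine Fintype.sum_equiv (B.equivMapOfInjective (MulAut.conj g).toMonoidHom
    (MulAut.conj g).injective).toEquiv _ _ (fun x => ?_)
  rfl

/-- An abelian group with a nontrivial element having nonzero fixed vectors yields a nontrivial
idempotent: average over a subgroup maximal among those with nonzero fixed vectors. -/
lemma exists_blockIdem {A : Subgroup (GLV V)} (hA : IsComm A)
    (hcop : (Nat.card A).Coprime (Nat.card V)) (hf : ¬ Fpf A) :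
    ∃ ε : AddMonoid.End V, BlockIdem (Subgroup.normalizer (A : Set (GLV V))) ε ∧ ε ≠ 0 ∧ ε ≠ 1 := by
  classical
  simp only [Fpf, not_forall] at hf
  obtain ⟨a, haA, ha1, v0, hv0, hv00⟩ := hf
  have hV : 1 < Nat.card V := Finite.one_lt_card_iff_nontrivial.mpr ⟨⟨v0, 0, hv00⟩⟩
  have hcn : ∀ n : ℕ, ∃ m : ℕ, n.Coprime (Nat.card V) → n * m % Nat.card V = 1 := by
    intro n
    by_cases h : n.Coprime (Nat.card V)
    · obtain ⟨m, _, hm⟩ := Nat.exists_mul_mod_eq_one_of_coprime h hV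
      exact ⟨m, fun _ => hm⟩
    · exact ⟨0, fun h' => absurd h' h⟩
  choose c hc using hcn
  have hcB : ∀ B ≤ A, ∀ x : V, (c (Nat.card B) * Nat.card B) • x = x := by
    intro B hB x
    have h1 := hc _ (hcop.coprime_dvd_left (Subgroup.card_dvd_of_le hB))
    rw [mul_comm] at h1
    rw [← Nat.div_add_mod (c (Nat.card B) * Nat.card B) (Nat.card V), h1, add_nsmul, one_nsmul,
      mul_comm, mul_nsmul', card_nsmul_eq_zero', smul_zero, zero_add]
  obtain ⟨B, ⟨hBA, hBbot, w, hw0, hw⟩, hmax⟩ := exists_maximal_subgroup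
    (fun B : Subgroup (GLV V) => B ≤ A ∧ B ≠ ⊥ ∧ ∃ v : V, v ≠ 0 ∧ ∀ b ∈ B, b • v = v)
    ⟨Subgroup.zpowers a, by rwa [Subgroup.zpowers_le], by
      rwa [Ne, Subgroup.zpowers_eq_bot], v0, hv00, by
      have : Subgroup.zpowers a ≤ MulAction.stabilizer (GLV V) v0 := by
        rw [Subgroup.zpowers_le]; exact hv0
      exact fun b hb => this hb⟩
  have hcomm2 : ∀ B ≤ A, ∀ a ∈ A, (a : AddMonoid.End V) * avg c B = avg c B * a := by
    intro B hB a ha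
    apply commute_avg
    intro b hb
    rw [← Units.val_mul, hA a ha b (hB hb), Units.val_mul]
  refine ⟨avg c B, ⟨avg_idem (hcB B hBA), ?_⟩, ?_, ?_⟩
  · intro g hg
    rw [Subgroup.mem_normalizer_iff] at hg
    rw [cj_avg]
    set B' := B.map (MulAut.conj g).toMonoidHom with hB'
    have hB'A : B' ≤ A := by
      rintro _ ⟨b, hb, rfl⟩
      exact (hg b).mp (hBA hb)
    by_cases hBB : B' = B
    · left; rw [hBB]
    right
    have hz : avg c B' * avg c B = 0 := by
      apply AddMonoidHom.ext
      intro v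
      by_contra hne
      have hne' : avg c B' (avg c B v) ≠ 0 := hne
      have hle : B ⊔ B' ≤ MulAction.stabilizer (GLV V) (avg c B' (avg c B v)) := by
        apply sup_le
        · intro b hb
          rw [MulAction.mem_stabilizer_iff, ← glv_apply]
          have h1 := hcomm2 B' hB'A b (hBA hb)
          have h2 := congrArg (fun f : AddMonoid.End V => f (avg c B v)) h1
          refine (show (b : AddMonoid.End V) (avg c B' (avg c B v)) =
            avg c B' ((b : AddMonoid.End V) (avg c B v)) from h2).trans ?_
          rw [glv_apply, smul_avg hb]
        · intro b hb
          exact smul_avg hb _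
      have := hmax (B ⊔ B') ⟨sup_le hBA hB'A, fun h => hBbot (le_bot_iff.mp (h ▸ le_sup_left)),
        _, hne', fun b hb => hle hb⟩ le_sup_left
      have hle' : B' ≤ B := this ▸ le_sup_right
      refine hBB (Subgroup.eq_of_le_of_card_ge hle' ?_)
      exact (Nat.card_congr (B.equivMapOfInjective (MulAut.conj g).toMonoidHom
        (MulAut.conj g).injective).toEquiv).le
    have hco : avg c B * avg c B' = avg c B' * avg c B := by
      apply commute_avg
      intro b hb
      exact (hcomm2 B hBA b (hB'A hb)).symm
    exact ⟨hz, hco.trans hz⟩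
  · intro h
    have := avg_apply_of_fixed (hcB B hBA) hw
    rw [h] at this
    exact hw0 this.symm
  · intro h
    apply hBbot
    rw [Subgroup.eq_bot_iff_forall]
    intro b hb
    have := mul_avg (c := c) hb
    rw [h, mul_one] at this
    exact Units.ext this

/-- `V` has no nontrivial decomposition into summands invariant under `Q` and `α`. -/
def Indec (Q : Subgroup (GLV V)) (α : GLV V) : Prop :=
  ∀ X₁ X₂ : AddSubgroup V, Q ≤ stab X₁ → α ∈ stab X₁ → Q ≤ stab X₂ → α ∈ stab X₂ →
    X₁ ⊓ X₂ = ⊥ → X₁ ⊔ X₂ = ⊤ → X₁ = ⊥ ∨ X₂ = ⊥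

/-- The vectors fixed by an endomorphism. -/
def fixed (F : AddMonoid.End V) : AddSubgroup V where
  carrier := {v | F v = v}
  zero_mem' := map_zero F
  add_mem' := by
    intro a b ha hb
    simp only [Set.mem_ofPred_eq] at *
    rw [map_add, ha, hb]
  neg_mem' := by
    intro a ha
    simp only [Set.mem_ofPred_eq] at *
    rw [map_neg, ha]

lemma mem_fixed {F : AddMonoid.End V} {v : V} : v ∈ fixed F ↔ F v = v := Iff.rfl

lemma mem_stab_fixed {F : AddMonoid.End V} {g : GLV V} (h : cj g F = F) : g ∈ stab (fixed F) := by
  apply mem_stab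
  intro v hv
  rw [cj_eq_iff] at h
  have := congrArg (fun f : AddMonoid.End V => f v) h
  rw [mem_fixed]
  refine (show F (g • v) = g • (F v) from this.symm).trans ?_
  rw [mem_fixed.mp hv]

lemma idem_trivial {Q : Subgroup (GLV V)} {α : GLV V} (hind : Indec Q α) {F : AddMonoid.End V}
    (hF : F * F = F) (hQ : ∀ q ∈ Q, cj q F = F) (hα : cj α F = F) : F = 0 ∨ F = 1 := by
  have h1 : ∀ g : GLV V, cj g F = F → cj g (1 - F) = 1 - F := by
    intro g hg
    rw [map_sub, map_one, hg]
  have hFF : ∀ v, F (F v) = F v := fun v => congrArg (fun f : AddMonoid.End V => f v) hF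
  have hbot : fixed F ⊓ fixed (1 - F) = ⊥ := by
    rw [eq_bot_iff]
    rintro v ⟨ha, hb⟩
    have ha' : F v = v := ha
    have hb' : v - F v = v := hb
    rw [ha', sub_self] at hb'
    exact hb'.symm
  have htop : fixed F ⊔ fixed (1 - F) = ⊤ := by
    rw [eq_top_iff]
    intro v _
    rw [AddSubgroup.mem_sup]
    refine ⟨F v, hFF v, v - F v, ?_, by abel⟩
    change (v - F v) - F (v - F v) = v - F v
    rw [map_sub, hFF, sub_self, sub_zero]
  rcases hind (fixed F) (fixed (1 - F)) (fun q hq => mem_stab_fixed (hQ q hq)) (mem_stab_fixed hα)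
    (fun q hq => mem_stab_fixed (h1 q (hQ q hq))) (mem_stab_fixed (h1 α hα)) hbot htop with h | h
  · left
    apply AddMonoidHom.ext
    intro v
    have : F v ∈ fixed F := hFF v
    rw [h] at this
    exact this
  · right
    apply AddMonoidHom.ext
    intro v
    have : v - F v ∈ fixed (1 - F) := by
      change (v - F v) - F (v - F v) = v - F v
      rw [map_sub, hFF, sub_self, sub_zero]
    rw [h] at this
    exact (sub_eq_zero.mp this).symm

end Average

end OddInvolution

/-! ### Imprimitivity of indecomposable modules -/

namespace OddInvolution

section Trichotomy

variable {V : Type*} [AddCommGroup V] [Finite V]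

/-- `V` is induced from an `α`-invariant subspace `W` and a normal subgroup `H` of `Q` of prime
index `r`: it is the direct sum of the translates `gⁱW`, `i < r`. -/
structure Blocks (Q H : Subgroup (GLV V)) (α : GLV V) (W : AddSubgroup V) (r : ℕ) : Prop where
  pi : PrimeIndex Q H r
  HW : H ≤ stab W
  αW : α ∈ stab W
  gen : ∀ g ∈ Q, g ∉ H → ∀ v : V, ∃ f : ℕ → V, (∀ i, f i ∈ W) ∧
    v = ∑ i ∈ Finset.range r, g ^ i • f i
  ind : ∀ g ∈ Q, g ∉ H → ∀ f : ℕ → V, (∀ i, f i ∈ W) → ∑ i ∈ Finset.range r, g ^ i • f i = 0 →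
    ∀ i < r, f i = 0

variable {Q H : Subgroup (GLV V)} {α : GLV V}

lemma blocks_of_idem (hQα : ∀ q ∈ Q, α * q * α⁻¹ ∈ Q) (hQα' : ∀ q ∈ Q, α⁻¹ * q * α ∈ Q)
    (hind : Indec Q α) {r : ℕ} (hpi : PrimeIndex Q H r)
    {E : AddMonoid.End V} (hE : E * E = E) (hE0 : E ≠ 0) (hH : ∀ h ∈ H, cj h E = E)
    (hα : cj α E = E) (hort : ∀ q ∈ Q, q ∉ H → cj q E * E = 0) :
    Blocks Q H α (fixed E) r := by
  classical
  have hb : BlockIdem Q E := by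
    refine ⟨hE, fun g hg => ?_⟩
    by_cases hgH : g ∈ H
    · left; exact hH g hgH
    · right
      refine ⟨hort g hg hgH, ?_⟩
      have h1 := hort g⁻¹ (Q.inv_mem hg) (fun h => hgH (by simpa using H.inv_mem h))
      have h2 := congrArg (cj g) h1
      rwa [map_mul, cj_cj_inv, map_zero] at h2
  have hF1 : osum Q E = 1 := by
    refine (idem_trivial hind (hb.osum_idem le_rfl) (fun q hq => cj_osum_self hq E)
      (cj_osum_normalizes hQα hQα' E ⟨1, Q.one_mem, by rw [hα, cj_one]⟩)).resolve_left ?_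
    intro h0
    have := hb.osum_mul le_rfl Q.one_mem
    rw [h0, zero_mul, cj_one] at this
    exact hE0 this.symm
  have hz : ∀ k ∈ Q, k ∉ H → ∀ v : V, E (k • E v) = 0 := by
    intro k hk hkH v
    have h1 := hort k⁻¹ (Q.inv_mem hk) (fun h => hkH (by simpa using H.inv_mem h))
    have h2 := congrArg (fun f : AddMonoid.End V => k • f v) h1
    have h3 : k • (k⁻¹ • E ((k⁻¹)⁻¹ • E v)) = k • (0 : V) := h2
    rwa [smul_inv_smul, inv_inv, smul_zero] at h3
  have hEE : ∀ v, E (E v) = E v := fun v => congrArg (fun f : AddMonoid.End V => f v) hE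
  refine ⟨hpi, fun h hh => mem_stab_fixed (hH h hh), mem_stab_fixed hα, ?_, ?_⟩
  · intro g hg hgH v
    have hinj : Set.InjOn (fun i : ℕ => cj (g ^ i) E) (Finset.range r : Set ℕ) := by
      intro i hi j hj hij
      simp only [Finset.coe_range, Set.mem_Iio] at hi hj
      refine hpi.inj g hg hgH i hi j hj ?_
      by_contra hne
      have h1 : cj ((g ^ i)⁻¹ * g ^ j) E = E := by
        have hij' : cj (g ^ i) E = cj (g ^ j) E := hij
        rw [cj_mul, ← hij', cj_inv_cj]
      have h2 := hort _ (Q.mul_mem (Q.inv_mem (Q.pow_mem hg i)) (Q.pow_mem hg j)) hne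
      rw [h1, hE] at h2
      exact hE0 h2
    have horb : orb Q E = (Finset.range r).image (fun i : ℕ => cj (g ^ i) E) := by
      ext x
      simp only [mem_orb, Finset.mem_image, Finset.mem_range]
      constructor
      · rintro ⟨q, hq, rfl⟩
        obtain ⟨i, hi, h⟩ := hpi.cover g hg hgH q hq
        refine ⟨i, hi, ?_⟩
        have := hH _ h
        rw [cj_mul] at this
        rw [← this, cj_cj_inv, this]
      · rintro ⟨i, _, rfl⟩
        exact ⟨g ^ i, Q.pow_mem hg i, rfl⟩
    have hsum : ∑ i ∈ Finset.range r, cj (g ^ i) E = 1 := by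
      rw [← hF1, osum, horb, Finset.sum_image hinj]
    refine ⟨fun i => E ((g ^ i)⁻¹ • v), fun i => hEE _, ?_⟩
    have h1 := congrArg (fun f : AddMonoid.End V => f v) hsum
    refine Eq.symm (Eq.trans ?_ h1)
    exact (AddMonoidHom.finsetSum_apply (fun i : ℕ => (cj (g ^ i) E : V →+ V))
      (Finset.range r) v).symm
  · intro g hg hgH f hf h0 j hj
    have h1 : E ((g ^ j)⁻¹ • ∑ i ∈ Finset.range r, g ^ i • f i) = 0 := by
      rw [h0, smul_zero, map_zero]
    rw [Finset.smul_sum, map_sum, Finset.sum_eq_single j] at h1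
    · rw [inv_smul_smul] at h1
      rw [← h1]; exact (hf j).symm
    · intro i hi hij
      rw [← mul_smul, ← mem_fixed.mp (hf i)]
      refine hz _ (Q.mul_mem (Q.inv_mem (Q.pow_mem hg j)) (Q.pow_mem hg i)) (fun h => hij ?_) _
      exact (hpi.inj g hg hgH j hj i (Finset.mem_range.mp hi) h).symm
    · intro h; exact absurd (Finset.mem_range.mpr hj) h

/-- The structure of an indecomposable `V`: the abelian normal `α`-invariant subgroups of `Q` act
fixed-point-freely, or `α` interchanges two summands, or `V` is induced from a subgroup of prime
index. -/
theorem block_trichotomy (hQ : Good Q) (hα : α * α = 1) (hQα : SInv (MulAut.conj α) Q)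
    (hind : Indec Q α)
    (hab : ∀ H ≤ Q, (∀ a ∈ Q, ∀ b ∈ Q, a * b * a⁻¹ * b⁻¹ ∈ H) → SInv (MulAut.conj α) H) :
    (∀ A ≤ Q, IsComm A → NormBy Q A → SInv (MulAut.conj α) A → Fpf A) ∨
    (∃ U : AddSubgroup V, Q ≤ stab U ∧ (∀ v ∈ U, α • v ∈ U → v = 0) ∧
      ∀ v : V, ∃ u ∈ U, ∃ u' ∈ U, v = u + α • u') ∨
    ∃ r H W, Blocks Q H α W r := by
  classical
  have hαi : α⁻¹ = α := inv_eq_of_mul_eq_one_left hα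
  have hα1 : ∀ q ∈ Q, α * q * α⁻¹ ∈ Q := hQα
  have hα2 : ∀ q ∈ Q, α⁻¹ * q * α ∈ Q := by
    intro q hq
    have := hQα q hq
    rw [MulAut.conj_apply] at this
    rwa [hαi] at this ⊢
  by_cases hcase : ∀ A ≤ Q, IsComm A → NormBy Q A → SInv (MulAut.conj α) A → Fpf A
  · exact Or.inl hcase
  right
  push Not at hcase
  obtain ⟨A, hAQ, hAc, hAn, hAα, hAf⟩ := hcase
  obtain ⟨ε, hε, hε0, hε1⟩ := exists_blockIdem hAc
    (hQ.cop.coprime_dvd_left (Subgroup.card_dvd_of_le hAQ)) hAf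
  set Γ := Subgroup.normalizer (A : Set (GLV V)) with hΓ
  have hQΓ : Q ≤ Γ := by
    intro q hq
    rw [hΓ, Subgroup.mem_normalizer_iff]
    intro a
    refine ⟨hAn q hq a, fun h => ?_⟩
    have := hAn q⁻¹ (Q.inv_mem hq) _ h
    have e : q⁻¹ * (q * a * q⁻¹) * q⁻¹⁻¹ = a := by group
    rwa [e] at this
  have hαΓ : α ∈ Γ := by
    rw [hΓ, Subgroup.mem_normalizer_iff]
    intro a
    refine ⟨hAα a, fun h => ?_⟩
    have := hAα _ h
    rw [MulAut.conj_apply] at this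
    have e : α * (α * a * α⁻¹) * α⁻¹ = (α * α) * a * (α * α)⁻¹ := by group
    rw [e, hα] at this
    simpa using this
  by_cases horb : ∃ t ∈ Q, cj α ε = cj t ε
  · right
    obtain ⟨t, ht, hte⟩ := horb
    let T : Subgroup (GLV V) :=
      { carrier := {g | cj g ε = ε}
        one_mem' := cj_one ε
        mul_mem' := by
          intro a b ha hb
          simp only [Set.mem_ofPred_eq] at *
          rw [cj_mul, hb, ha]
        inv_mem' := by
          intro a ha
          simp only [Set.mem_ofPred_eq] at *
          conv_lhs => rw [← ha]
          rw [cj_inv_cj] }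
    have htT : t⁻¹ * α ∈ T := by
      change cj (t⁻¹ * α) ε = ε
      rw [cj_mul, hte, cj_inv_cj]
    obtain ⟨w, hw, hwT⟩ := exists_conj_mem hQ.odd hα hQα ht htT
    have hwT' : cj (w⁻¹ * α * w) ε = ε := hwT
    -- replace `ε` by an `α`-invariant conjugate
    set e := cj w ε with he
    have heB : BlockIdem Γ e := hε.conj (hQΓ hw)
    have he0 : e ≠ 0 := fun h => hε0 (cj_injective w (h.trans (map_zero _).symm))
    have he1 : e ≠ 1 := fun h => hε1 (cj_injective w (h.trans (map_one _).symm))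
    have heα : cj α e = e := by
      have e1 : α * w = w * (w⁻¹ * α * w) := by group
      rw [he, ← cj_mul, e1, cj_mul, hwT']
    let S : Subgroup (GLV V) :=
      { carrier := {g | g ∈ Q ∧ cj g e = e}
        one_mem' := ⟨Q.one_mem, cj_one e⟩
        mul_mem' := by
          rintro a b ⟨ha, ha'⟩ ⟨hb, hb'⟩
          exact ⟨Q.mul_mem ha hb, by rw [cj_mul, hb', ha']⟩
        inv_mem' := by
          rintro a ⟨ha, ha'⟩
          refine ⟨Q.inv_mem ha, ?_⟩
          conv_lhs => rw [← ha']
          rw [cj_inv_cj] }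
    have hSQ : S ≤ Q := fun g hg => hg.1
    have hSne : S ≠ Q := by
      intro h
      have : ∀ q ∈ Q, cj q e = e := by
        intro q hq
        rw [← h] at hq
        exact hq.2
      rcases idem_trivial hind heB.idem this heα with h | h
      · exact he0 h
      · exact he1 h
    obtain ⟨H, r, hSH, hpi⟩ := exists_primeIndex hQ.nil hSQ hSne
    have hHα := hab H hpi.le hpi.comm
    have hHα' : ∀ q ∈ H, α⁻¹ * q * α ∈ H := by
      intro q hq
      have := hHα q hq
      rw [MulAut.conj_apply] at this
      rwa [hαi] at this ⊢
    refine ⟨r, H, _, blocks_of_idem hα1 hα2 hind hpi (E := osum H e)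
      (heB.osum_idem (hpi.le.trans hQΓ)) ?_ (fun h hh => cj_osum_self hh e)
      (cj_osum_normalizes hHα hHα' e ⟨1, H.one_mem, by rw [heα, cj_one]⟩) ?_⟩
    · intro h0
      have := heB.osum_mul (hpi.le.trans hQΓ) H.one_mem
      rw [h0, zero_mul, cj_one] at this
      exact he0 this.symm
    · intro q hq hqH
      refine (heB.osum_mul_cj_eq_zero (hpi.le.trans hQΓ) (hQΓ hq) ?_).2
      intro s hs t ht hst
      apply hqH
      have h1 : s⁻¹ * (q * t) ∈ S := by
        refine ⟨Q.mul_mem (Q.inv_mem (hpi.le hs)) (Q.mul_mem hq (hpi.le ht)), ?_⟩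
        rw [cj_mul, ← hst, cj_inv_cj]
      have h2 := H.mul_mem (H.mul_mem hs (hSH h1)) (H.inv_mem ht)
      have e : s * (s⁻¹ * (q * t)) * t⁻¹ = q := by group
      rwa [e] at h2
  · left
    push Not at horb
    set E := osum Q ε with hE
    have hEi : E * E = E := hε.osum_idem hQΓ
    have hort : E * cj α E = 0 ∧ cj α E * E = 0 := by
      refine hε.osum_mul_cj_eq_zero hQΓ hαΓ ?_
      intro s hs t ht h
      refine horb ((α * t * α⁻¹)⁻¹ * s) (Q.mul_mem (Q.inv_mem (hα1 t ht)) hs) ?_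
      rw [cj_mul, h, ← cj_mul]
      congr 2
      group
    have hαα : cj α (cj α E) = E := by rw [← cj_mul, hα, cj_one]
    have hqα : ∀ q ∈ Q, cj q (cj α E) = cj α E := by
      intro q hq
      have e1 : q * α = α * (α⁻¹ * q * α) := by group
      rw [← cj_mul, e1, cj_mul, cj_osum_self (hα2 q hq)]
    have hF : E + cj α E = 1 := by
      refine (idem_trivial hind (F := E + cj α E) ?_ ?_ ?_).resolve_left ?_
      · rw [mul_add, add_mul, add_mul, hort.1, hort.2, hEi, ← map_mul, hEi, add_zero, zero_add]
      · intro q hq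
        rw [map_add, cj_osum_self hq, hqα q hq]
      · rw [map_add, hαα, add_comm]
      · intro h0
        have h1 : E * (E + cj α E) = 0 := by rw [h0, mul_zero]
        rw [mul_add, hort.1, hEi, add_zero] at h1
        have := hε.osum_mul hQΓ Q.one_mem
        rw [← hE, h1, zero_mul, cj_one] at this
        exact hε0 this.symm
    have hEE : ∀ v, E (E v) = E v := fun v => congrArg (fun f : AddMonoid.End V => f v) hEi
    have hcjv : ∀ v, (cj α E) v = α • E (α • v) := by
      intro v
      have : (cj α E) v = α • E (α⁻¹ • v) := rfl
      rw [this, hαi]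
    refine ⟨fixed E, fun q hq => mem_stab_fixed (cj_osum_self hq ε), ?_, ?_⟩
    · intro v hv hαv
      have h1 := congrArg (fun f : AddMonoid.End V => f v) hort.2
      have h2 : (cj α E) (E v) = 0 := h1
      rw [mem_fixed.mp hv, hcjv, mem_fixed.mp hαv, ← mul_smul, hα, one_smul] at h2
      exact h2
    · intro v
      refine ⟨E v, hEE v, E (α • v), hEE _, ?_⟩
      have h1 := congrArg (fun f : AddMonoid.End V => f v) hF
      have h2 : E v + (cj α E) v = v := h1
      rw [hcjv] at h2
      exact h2.symm

end Trichotomy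

end OddInvolution

/-! ### The bound `2|Q| ≤ |V|` -/

namespace OddInvolution

section Counting

variable {V : Type*} [AddCommGroup V]

/-- The elements of a direct sum correspond to pairs. -/
noncomputable def dirEquiv {X₁ X₂ : AddSubgroup V} (h0 : X₁ ⊓ X₂ = ⊥) (h1 : X₁ ⊔ X₂ = ⊤) :
    X₁ × X₂ ≃ V :=
  Equiv.ofBijective (fun x => (x.1 : V) + x.2) (by
    constructor
    · rintro ⟨a, b⟩ ⟨c, d⟩ h
      have h' : (a : V) + b = c + d := h
      have h2 : (a : V) - c = d - b := by
        rw [sub_eq_sub_iff_add_eq_add, h', add_comm]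
      have h3 : (a : V) - c ∈ X₁ ⊓ X₂ :=
        ⟨X₁.sub_mem a.2 c.2, by rw [h2]; exact X₂.sub_mem d.2 b.2⟩
      rw [h0, AddSubgroup.mem_bot] at h3
      rw [h3] at h2
      exact Prod.ext (Subtype.ext (sub_eq_zero.mp h3)) (Subtype.ext (sub_eq_zero.mp h2.symm).symm)
    · intro v
      have : v ∈ X₁ ⊔ X₂ := by rw [h1]; trivial
      obtain ⟨a, ha, b, hb, rfl⟩ := AddSubgroup.mem_sup.mp this
      exact ⟨(⟨a, ha⟩, ⟨b, hb⟩), rfl⟩)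

lemma dirEquiv_apply {X₁ X₂ : AddSubgroup V} (h0 : X₁ ⊓ X₂ = ⊥) (h1 : X₁ ⊔ X₂ = ⊤)
    (x : X₁ × X₂) : dirEquiv h0 h1 x = (x.1 : V) + x.2 := rfl

lemma card_dir {X₁ X₂ : AddSubgroup V} (h0 : X₁ ⊓ X₂ = ⊥) (h1 : X₁ ⊔ X₂ = ⊤) :
    Nat.card V = Nat.card X₁ * Nat.card X₂ := by
  rw [← Nat.card_prod, Nat.card_congr (dirEquiv h0 h1)]

lemma cV_dir [Finite V] {X₁ X₂ : AddSubgroup V} (h0 : X₁ ⊓ X₂ = ⊥) {α : GLV V}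
    (hα1 : α ∈ stab X₁) (hα2 : α ∈ stab X₂) :
    cV α X₁ * cV α X₂ ≤ cV α ⊤ := by
  rw [cV, cV, cV, ← Nat.card_prod]
  refine Nat.card_le_card_of_injective
    (fun x => ⟨x.1.1 + x.2.1, trivial, by rw [smul_add, x.1.2.2, x.2.2.2]⟩) ?_
  rintro ⟨⟨a, ha, _⟩, b, hb, _⟩ ⟨⟨c, hc, _⟩, d, hd, _⟩ h
  have h' : a + b = c + d := congrArg Subtype.val h
  have h2 : a - c = d - b := by
    rw [sub_eq_sub_iff_add_eq_add, h', add_comm]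
  have h3 : a - c ∈ X₁ ⊓ X₂ :=
    ⟨X₁.sub_mem ha hc, by rw [h2]; exact X₂.sub_mem hd hb⟩
  rw [h0, AddSubgroup.mem_bot] at h3
  rw [h3] at h2
  have e1 := sub_eq_zero.mp h3
  have e2 := (sub_eq_zero.mp h2.symm).symm
  subst e1 e2
  rfl

lemma cen_inf_eq_bot {X₁ X₂ : AddSubgroup V} (h1 : X₁ ⊔ X₂ = ⊤) {g : GLV V} (hg1 : g ∈ cen X₁)
    (hg2 : g ∈ cen X₂) : g = 1 := by
  apply glv_ext
  intro v
  have : v ∈ X₁ ⊔ X₂ := by rw [h1]; trivial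
  obtain ⟨a, ha, b, hb, rfl⟩ := AddSubgroup.mem_sup.mp this
  rw [smul_add, hg1 a ha, hg2 b hb, one_smul]

/-- The translate `gW`. -/
def tr (g : GLV V) (W : AddSubgroup V) : AddSubgroup V where
  carrier := {v | g⁻¹ • v ∈ W}
  zero_mem' := by
    change g⁻¹ • (0 : V) ∈ W
    rw [smul_zero]; exact W.zero_mem
  add_mem' := by
    intro a b ha hb
    change g⁻¹ • (a + b) ∈ W
    rw [smul_add]; exact W.add_mem ha hb
  neg_mem' := by
    intro a ha
    change g⁻¹ • (-a) ∈ W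
    rw [smul_neg]; exact W.neg_mem ha

lemma mem_tr {g : GLV V} {W : AddSubgroup V} {v : V} : v ∈ tr g W ↔ g⁻¹ • v ∈ W := Iff.rfl

lemma smul_mem_tr {g : GLV V} {W : AddSubgroup V} {v : V} (hv : v ∈ W) : g • v ∈ tr g W := by
  rw [mem_tr, inv_smul_smul]; exact hv

lemma card_tr (g : GLV V) (W : AddSubgroup V) : Nat.card (tr g W) = Nat.card W :=
  Nat.card_congr ⟨fun v => ⟨g⁻¹ • v.1, v.2⟩, fun w => ⟨g • w.1, smul_mem_tr w.2⟩,
    fun v => Subtype.ext (smul_inv_smul _ _), fun w => Subtype.ext (inv_smul_smul _ _)⟩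

lemma mem_stab_tr {g h : GLV V} {W : AddSubgroup V} (hh : g⁻¹ * h * g ∈ stab W) :
    h ∈ stab (tr g W) := by
  intro v
  have := hh (g⁻¹ • v)
  rw [mem_tr, mem_tr, ← this, ← mul_smul, ← mul_smul]
  have e : g⁻¹ * h * g * g⁻¹ = g⁻¹ * h := by group
  rw [e]

lemma mem_cen_tr {g h : GLV V} {W : AddSubgroup V} : h ∈ cen (tr g W) ↔ g⁻¹ * h * g ∈ cen W := by
  constructor
  · intro hh w hw
    rw [mul_smul, mul_smul, hh _ (smul_mem_tr hw), inv_smul_smul]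
  · intro hh v hv
    have := hh _ hv
    rw [mul_smul, mul_smul, smul_inv_smul] at this
    exact smul_left_cancel _ this

/-- Iterating the bound for `StmtS` along a list of invariant subspaces. -/
lemma chain_bound [Finite V] {K : Subgroup (GLV V)} (hK : Good K) (s : ℕ) (W : ℕ → AddSubgroup V)
    (hW : ∀ i < s, K ≤ stab (W i)) (hS : ∀ i < s, StmtS (W i)) {w : ℕ}
    (hw : ∀ i < s, Nat.card (W i) = w) :
    ∃ K' ≤ K, (∀ g ∈ K', ∀ i < s, g ∈ cen (W i)) ∧
      2 ^ s * Nat.card K ≤ w ^ s * Nat.card K' := by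
  induction s with
  | zero => exact ⟨K, le_rfl, by intro g _ i hi; omega, by simp⟩
  | succ s ih =>
    obtain ⟨K', hK', hc, hle⟩ := ih (fun i hi => hW i (by omega)) (fun i hi => hS i (by omega))
      (fun i hi => hw i (by omega))
    have h1 := (hS s (by omega)).rel (hK.mono hK') (hK'.trans (hW s (by omega)))
    rw [hw s (by omega)] at h1
    refine ⟨K' ⊓ cen (W s), inf_le_left.trans hK', ?_, ?_⟩
    · intro g hg i hi
      rcases Nat.lt_succ_iff_lt_or_eq.mp hi with h | rfl
      · exact hc g hg.1 i h
      · exact hg.2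
    · calc 2 ^ (s + 1) * Nat.card K = 2 * (2 ^ s * Nat.card K) := by ring
        _ ≤ 2 * (w ^ s * Nat.card K') := Nat.mul_le_mul_left _ hle
        _ = w ^ s * (2 * Nat.card K') := by ring
        _ ≤ w ^ s * (w * Nat.card ↥(K' ⊓ cen (W s))) := Nat.mul_le_mul_left _ h1
        _ = _ := by ring

lemma eq_zero_of_neg_eq [Finite V] (hV : Odd (Nat.card V)) {v : V} (h : v = -v) : v = 0 := by
  obtain ⟨k, hk⟩ := hV
  have h1 : (2 * k + 1) • v = 0 := by rw [← hk]; exact card_nsmul_eq_zero'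
  have h2 : 2 • v = 0 := by rw [two_nsmul]; nth_rewrite 1 [h]; simp
  rwa [add_nsmul, one_nsmul, mul_nsmul, h2, smul_zero, zero_add] at h1

section

variable [Finite V] {Q H : Subgroup (GLV V)} {α : GLV V} {W : AddSubgroup V} {r : ℕ}

lemma Blocks.card (hB : Blocks Q H α W r) {g : GLV V} (hg : g ∈ Q) (hgH : g ∉ H) :
    Nat.card V = Nat.card W ^ r := by
  have hbij : Function.Bijective
      (fun f : Fin r → W => ∑ i : Fin r, g ^ (i : ℕ) • (f i : V)) := by
    constructor
    · intro f f' h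
      let F : ℕ → V := fun i => if hi : i < r then (f ⟨i, hi⟩ : V) - f' ⟨i, hi⟩ else 0
      have hF : ∀ i, F i ∈ W := by
        intro i
        by_cases hi : i < r
        · simp only [F, hi, dite_true]; exact W.sub_mem (f _).2 (f' _).2
        · simp only [F, hi, dite_false]; exact W.zero_mem
      have h0 := hB.ind g hg hgH F hF (by
        rw [Finset.sum_range]
        have : ∀ i : Fin r, g ^ (i : ℕ) • F i = g ^ (i : ℕ) • (f i : V) - g ^ (i : ℕ) • (f' i : V) := by
          intro i
          simp only [F, i.2, dite_true, smul_sub]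
        rw [Finset.sum_congr rfl fun i _ => this i, Finset.sum_sub_distrib, sub_eq_zero]
        exact h)
      funext i
      have := h0 i i.2
      simp only [F, i.2, dite_true] at this
      exact Subtype.ext (sub_eq_zero.mp this)
    · intro v
      obtain ⟨f, hf, rfl⟩ := hB.gen g hg hgH v
      exact ⟨fun i => ⟨f i, hf i⟩, by rw [Finset.sum_range]⟩
  rw [← Nat.card_congr (Equiv.ofBijective _ hbij), Nat.card_fun, Nat.card_eq_fintype_card (α := Fin r), Fintype.card_fin]

lemma Blocks.exists_notMem (hB : Blocks Q H α W r) : ∃ g ∈ Q, g ∉ H := by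
  by_contra h
  push Not at h
  exact hB.pi.ne (le_antisymm hB.pi.le h)

lemma Blocks.conj_mem (hB : Blocks Q H α W r) {g h : GLV V} (hg : g ∈ Q) (hh : h ∈ H) :
    g⁻¹ * h * g ∈ H := by
  have h1 := hB.pi.comm g⁻¹ (Q.inv_mem hg) h (hB.pi.le hh)
  have h2 := H.mul_mem h1 hh
  have e : g⁻¹ * h * g⁻¹⁻¹ * h⁻¹ * h = g⁻¹ * h * g := by group
  rwa [e] at h2

lemma Blocks.le_stab_tr (hB : Blocks Q H α W r) {g : GLV V} (hg : g ∈ Q) : H ≤ stab (tr g W) :=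
  fun _ hh => mem_stab_tr (hB.HW (hB.conj_mem hg hh))

lemma Blocks.eq_one (hB : Blocks Q H α W r) {g : GLV V} (hg : g ∈ Q) (hgH : g ∉ H) {h : GLV V}
    (hh : ∀ i < r, h ∈ cen (tr (g ^ i) W)) : h = 1 := by
  apply glv_ext
  intro v
  obtain ⟨f, hf, rfl⟩ := hB.gen g hg hgH v
  rw [one_smul, Finset.smul_sum]
  exact Finset.sum_congr rfl fun i hi => hh i (Finset.mem_range.mp hi) _ (smul_mem_tr (hf i))

lemma Blocks.one_lt [Nontrivial V] (hB : Blocks Q H α W r) : 1 < Nat.card W := by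
  obtain ⟨g, hg, hgH⟩ := hB.exists_notMem
  have h1 := hB.card hg hgH
  have h2 : 1 < Nat.card V := Finite.one_lt_card
  by_contra h
  have h3 : Nat.card W = 1 := le_antisymm (not_lt.mp h) Nat.card_pos
  rw [h3, one_pow] at h1
  omega

lemma Blocks.card_lt [Nontrivial V] (hB : Blocks Q H α W r) : Nat.card W < Nat.card V := by
  obtain ⟨g, hg, hgH⟩ := hB.exists_notMem
  rw [hB.card hg hgH]
  exact lt_self_pow₀ hB.one_lt hB.pi.prime.one_lt

end

lemma two_mul_le_two_pow {r : ℕ} (hr : 2 ≤ r) : 2 * r ≤ 2 ^ r := by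
  induction r, hr using Nat.le_induction with
  | base => norm_num
  | succ n hn ih => rw [pow_succ]; omega

/-- A group acting fixed-point-freely with odd order on a space of odd order. -/
lemma fpf_bound [Finite V] [Nontrivial V] (hV : Odd (Nat.card V)) {Q : Subgroup (GLV V)}
    (hQ : Odd (Nat.card Q)) (hf : Fpf Q) : 2 * Nat.card Q ≤ Nat.card V := by
  obtain ⟨v, hv⟩ := exists_ne (0 : V)
  have hinj : Function.Injective (Sum.elim (fun q : Q => (q : GLV V) • v) (fun q : Q => -((q : GLV V) • v))) := by
    have key : ∀ a b : Q, (a : GLV V) • v = (b : GLV V) • v → a = b := by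
      intro a b h
      by_contra hne
      refine hv (hf ((b : GLV V)⁻¹ * a) (Q.mul_mem (Q.inv_mem b.2) a.2) ?_ v ?_)
      · rw [Ne, inv_mul_eq_one]
        exact fun h => hne (Subtype.ext h.symm)
      · rw [mul_smul, h, inv_smul_smul]
    have key2 : ∀ a b : Q, (a : GLV V) • v ≠ -((b : GLV V) • v) := by
      intro a b h
      set x : GLV V := (b : GLV V)⁻¹ * a with hx
      have hxQ : x ∈ Q := Q.mul_mem (Q.inv_mem b.2) a.2
      have hxv : x • v = -v := by rw [hx, mul_smul, h, smul_neg, inv_smul_smul]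
      have hx2 : (x * x) • v = v := by rw [mul_smul, hxv, smul_neg, hxv, neg_neg]
      have hx21 : x * x = 1 := by
        by_contra hne
        exact hv (hf _ (Q.mul_mem hxQ hxQ) hne v hx2)
      obtain ⟨m, hm⟩ := exists_half hQ
      have h1 : x = 1 := by
        rw [← hm x hxQ, pow_mul, pow_two, hx21, one_pow]
      rw [h1, one_smul] at hxv
      exact hv (eq_zero_of_neg_eq hV hxv)
    rintro (a | a) (b | b) h
    · exact congrArg _ (key a b h)
    · exact absurd h (key2 a b)
    · exact absurd h.symm (key2 b a)
    · exact congrArg _ (key a b (neg_injective h))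
  have := Nat.card_le_card_of_injective _ hinj
  rw [Nat.card_sum] at this
  omega

/-- Induction on `|V|`: either `V` decomposes, or it is induced from a subgroup of prime index, or
abelian normal subgroups of `Q` act fixed-point-freely; in the last case they are cyclic, so `Q` is
abelian and acts fixed-point-freely itself. -/
theorem stmtS_aux (n : ℕ) : ∀ (V : Type*) [AddCommGroup V] [Finite V] [Nontrivial V],
    Nat.card V = n → Odd (Nat.card V) → StmtS V := by
  induction n using Nat.strong_induction_on with
  | _ n ih =>
  intro V _ _ _ hn hV Q hQ
  have hsub : ∀ X : AddSubgroup V, X ≠ ⊥ → Nat.card X < Nat.card V → StmtS X := by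
    intro X hX hlt
    haveI : Nontrivial X := (AddSubgroup.nontrivial_iff_ne_bot X).mpr hX
    exact ih _ (hn ▸ hlt) X rfl (hV.of_dvd_nat (AddSubgroup.card_addSubgroup_dvd_card X))
  by_cases hind : Indec Q (1 : GLV V)
  · rcases block_trichotomy hQ (mul_one 1) (by intro x hx; simpa using hx) hind
      (by intro H _ _ x hx; simpa using hx) with h | ⟨U, hU, h1, h2⟩ | ⟨r, H, W, hB⟩
    · have hf : ∀ A ≤ Q, NormBy Q A → IsComm A → Fpf A :=
        fun A hA hn hc => h A hA hc hn (by intro x hx; simpa using hx)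
      have hcomm : IsComm Q := isComm_of_cyclic_normal hQ.nil hQ.odd
        (fun A hA hn hc => isCyclic_of_fpf hc (hf A hA hn hc))
      exact fpf_bound hV hQ.odd (hf Q le_rfl (fun q hq x hx => Q.mul_mem (Q.mul_mem hq hx) (Q.inv_mem hq)) hcomm)
    · exfalso
      obtain ⟨v, hv⟩ := exists_ne (0 : V)
      obtain ⟨u, hu, u', hu', rfl⟩ := h2 v
      apply hv
      rw [h1 u hu (by rwa [one_smul]), h1 u' hu' (by rwa [one_smul]), smul_zero, add_zero]
    · obtain ⟨g, hg, hgH⟩ := hB.exists_notMem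
      have hWb : ∀ g, tr g W ≠ ⊥ := by
        intro g h
        have := hB.one_lt
        rw [← card_tr g, h, AddSubgroup.card_bot] at this
        omega
      obtain ⟨K', hK', hc, hle⟩ := chain_bound (hQ.mono hB.pi.le) r (fun i => tr (g ^ i) W)
        (fun i _ => hB.le_stab_tr (Q.pow_mem hg i))
        (fun i _ => hsub _ (hWb _) (by rw [card_tr]; exact hB.card_lt)) (fun i _ => card_tr _ _)
      have hK1 : K' = ⊥ := by
        rw [Subgroup.eq_bot_iff_forall]
        intro x hx
        exact hB.eq_one hg hgH (hc x hx)
      rw [hK1, Subgroup.card_bot, mul_one, ← hB.card hg hgH] at hle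
      rw [hB.pi.card]
      calc 2 * (r * Nat.card H) = (2 * r) * Nat.card H := by ring
        _ ≤ 2 ^ r * Nat.card H := Nat.mul_le_mul_right _ (two_mul_le_two_pow hB.pi.prime.two_le)
        _ ≤ _ := hle
  · simp only [Indec, not_forall] at hind
    obtain ⟨X₁, X₂, hQ1, _, hQ2, _, h0, h1, hne⟩ := hind
    push Not at hne
    have hc := card_dir h0 h1
    have hc1 : 1 < Nat.card X₁ := (AddSubgroup.one_lt_card_iff_ne_bot X₁).mpr hne.1
    have hc2 : 1 < Nat.card X₂ := (AddSubgroup.one_lt_card_iff_ne_bot X₂).mpr hne.2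
    have r1 := (hsub X₁ hne.1 (by rw [hc]; nlinarith)).rel hQ hQ1
    have r2 := (hsub X₂ hne.2 (by rw [hc]; nlinarith)).rel (hQ.mono (inf_le_left : Q ⊓ cen X₁ ≤ Q))
      (inf_le_left.trans hQ2)
    have hb : Q ⊓ cen X₁ ⊓ cen X₂ = ⊥ := by
      rw [Subgroup.eq_bot_iff_forall]
      intro x hx
      exact cen_inf_eq_bot h1 hx.1.2 hx.2
    rw [hb, Subgroup.card_bot, mul_one] at r2
    rw [hc]
    nlinarith

/-- A nilpotent group of odd order acting faithfully and coprimely on an abelian group `V ≠ 0` of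
odd order has order at most `|V| / 2`. -/
theorem stmtS (V : Type*) [AddCommGroup V] [Finite V] [Nontrivial V] (hV : Odd (Nat.card V)) :
    StmtS V := stmtS_aux _ V rfl hV

end Counting

end OddInvolution

/-! ### The number of inverted elements: decomposable and fixed-point-free cases -/

namespace OddInvolution

section InvertedCount

variable {V : Type*} [AddCommGroup V]

lemma cc_bot {G : Type*} [Group G] (σ : MulAut G) : cc σ ⊥ = 1 := by
  rw [cc, Nat.card_eq_one_iff_unique]
  exact ⟨⟨fun a b => Subtype.ext ((Subgroup.mem_bot.mp a.2.1).trans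
    (Subgroup.mem_bot.mp b.2.1).symm)⟩, ⟨⟨1, Subgroup.one_mem _, map_one σ⟩⟩⟩

lemma ii_bot {G : Type*} [Group G] (σ : MulAut G) : ii σ ⊥ = 1 := by
  rw [ii, Nat.card_eq_one_iff_unique]
  exact ⟨⟨fun a b => Subtype.ext ((Subgroup.mem_bot.mp a.2.1).trans
    (Subgroup.mem_bot.mp b.2.1).symm)⟩, ⟨⟨1, Subgroup.one_mem _, by simp⟩⟩⟩

lemma ii_le_card {G : Type*} [Group G] [Finite G] (σ : MulAut G) (Q : Subgroup G) :
    ii σ Q ≤ Nat.card Q :=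
  Nat.card_le_card_of_injective (fun x => (⟨x.1, x.2.1⟩ : Q))
    fun _ _ h => Subtype.ext (congrArg (fun z : Q => (z : G)) h)

/-- If distinct inverted elements of `K` lie in distinct cosets of `K'`, there are at most
`[K : K']` of them. -/
lemma ii_mul_le {G : Type*} [Group G] [Finite G] (σ : MulAut G) {K K' : Subgroup G} (hK : K' ≤ K)
    (h : ∀ y ∈ K, ∀ y' ∈ K, σ y = y⁻¹ → σ y' = y'⁻¹ → y'⁻¹ * y ∈ K' → y = y') :
    ii σ K * Nat.card K' ≤ Nat.card K := by
  rw [ii, ← Nat.card_prod]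
  refine Nat.card_le_card_of_injective
    (fun p => (⟨p.1.1 * p.2.1, K.mul_mem p.1.2.1 (hK p.2.2)⟩ : K)) ?_
  rintro ⟨⟨y, hy, hyσ⟩, k, hk⟩ ⟨⟨y', hy', hyσ'⟩, k', hk'⟩ he
  have he' : y * k = y' * k' := congrArg (fun z : K => (z : G)) he
  have e : y = y' := by
    apply h y hy y' hy' hyσ hyσ'
    have : y'⁻¹ * y = k' * k⁻¹ := by
      rw [eq_mul_inv_iff_mul_eq, mul_assoc, he', inv_mul_cancel_left]
    rw [this]
    exact K'.mul_mem hk' (K'.inv_mem hk)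
  subst e
  have e2 := mul_left_cancel he'
  subst e2
  rfl

lemma alpha_smul_inv {α y : GLV V} (hy : MulAut.conj α y = y⁻¹) (v : V) :
    α • y • v = y⁻¹ • α • v := by
  rw [← hy, MulAut.conj_apply, ← mul_smul, ← mul_smul, inv_mul_cancel_right]

lemma alpha_inv_smul {α y : GLV V} (hy : MulAut.conj α y = y⁻¹) (v : V) :
    α • y⁻¹ • v = y • α • v := by
  have : MulAut.conj α y⁻¹ = y⁻¹⁻¹ := by rw [map_inv, hy]
  rw [alpha_smul_inv this, inv_inv]

lemma cen_sinv {α : GLV V} {X : AddSubgroup V} (hα : α ∈ stab X) :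
    SInv (MulAut.conj α) (cen X) := by
  intro x hx v hv
  rw [MulAut.conj_apply, mul_smul, mul_smul, hx _ (stab_smul ((stab X).inv_mem hα) hv),
    smul_inv_smul]

lemma tr_tr (a b : GLV V) (W : AddSubgroup V) : tr a (tr b W) = tr (a * b) W := by
  ext v
  rw [mem_tr, mem_tr, mem_tr, mul_inv_rev, mul_smul]

lemma tr_of_stab {h : GLV V} {W : AddSubgroup V} (hh : h ∈ stab W) : tr h W = W := by
  ext v
  rw [mem_tr]
  exact (stab W).inv_mem hh v

/-- Two elements inverted by `α` that agree on `U` also agree on `αU`. -/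
lemma agree_swap {α y y' : GLV V} {U : AddSubgroup V} (hα : α * α = 1)
    (hy : y ∈ stab U) (hσ : MulAut.conj α y = y⁻¹) (hσ' : MulAut.conj α y' = y'⁻¹)
    (h : y'⁻¹ * y ∈ cen U) : y'⁻¹ * y ∈ cen (tr α U) := by
  intro v hv
  have hα' : α⁻¹ = α := inv_eq_of_mul_eq_one_left hα
  rw [mem_tr, hα'] at hv
  obtain ⟨u, rfl⟩ : ∃ u, v = α • u := ⟨α • v, by rw [← mul_smul, hα, one_smul]⟩
  rw [← mul_smul, hα, one_smul] at hv
  have h1 : y⁻¹ • u ∈ U := stab_smul ((stab U).inv_mem hy) hv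
  have h2 := h _ h1
  rw [mul_smul, smul_inv_smul] at h2
  rw [mul_smul, ← alpha_inv_smul hσ, ← h2, alpha_inv_smul hσ', inv_smul_smul]

lemma card_fixed (α : GLV V) : cV α ⊤ = Nat.card (fixed (α : AddMonoid.End V)) :=
  Nat.card_congr ⟨fun x => ⟨x.1, x.2.2⟩, fun x => ⟨x.1, trivial, x.2⟩, fun _ => rfl, fun _ => rfl⟩

lemma cV_dvd (α : GLV V) (X : AddSubgroup V) : cV α X ∣ Nat.card X := by
  have : cV α X = Nat.card ((fixed (α : AddMonoid.End V)).addSubgroupOf X) :=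
    Nat.card_congr ⟨fun x => ⟨⟨x.1, x.2.1⟩, x.2.2⟩, fun x => ⟨x.1.1, x.1.2, x.2⟩,
      fun _ => rfl, fun _ => rfl⟩
  rw [this]
  exact AddSubgroup.card_addSubgroup_dvd_card _

lemma cV_pos [Finite V] (α : GLV V) (X : AddSubgroup V) : 0 < cV α X :=
  Nat.pos_of_dvd_of_pos (cV_dvd α X) Nat.card_pos

/-- The decomposable case: the bounds multiply along a direct sum. -/
lemma bounds_of_dec [Finite V] {α : GLV V} (hα : α * α = 1) {Q : Subgroup (GLV V)} (hQ : Good Q)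
    (hQα : SInv (MulAut.conj α) Q) {X₁ X₂ : AddSubgroup V} (hQ1 : Q ≤ stab X₁) (hα1 : α ∈ stab X₁)
    (hQ2 : Q ≤ stab X₂) (hα2 : α ∈ stab X₂) (h0 : X₁ ⊓ X₂ = ⊥) (h1 : X₁ ⊔ X₂ = ⊤)
    (hL1 : StmtL X₁) (hL2 : StmtL X₂) :
    (ii (MulAut.conj α) Q = 1 ∨ 2 * ii (MulAut.conj α) Q ≤ cV α ⊤ ^ 2) ∧
    ii (MulAut.conj α) Q ≤ cV α ⊤ * cc (MulAut.conj α) Q := by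
  have hK : Good (Q ⊓ cen X₁) := hQ.mono inf_le_left
  have hKα : SInv (MulAut.conj α) (Q ⊓ cen X₁) := SInv.inf hQα (cen_sinv hα1)
  have hK2 : Q ⊓ cen X₁ ≤ stab X₂ := inf_le_left.trans hQ2
  have hbot : Q ⊓ cen X₁ ⊓ cen X₂ = ⊥ := by
    rw [eq_bot_iff]
    intro g hg
    exact cen_inf_eq_bot h1 hg.1.2 hg.2
  have a1 := hL1.relA hα hQ hQα hα1 hQ1
  have a2 := hL2.relA hα hK hKα hα2 hK2
  have b1 := hL1.relB hα hQ hQα hα1 hQ1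
  have b2 := hL2.relB hα hK hKα hα2 hK2
  rw [hbot, ii_bot] at a2
  rw [hbot, ii_bot, cc_bot] at b2
  have hc := cV_dir h0 hα1 hα2
  have p1 := cV_pos α X₁
  have p2 := cV_pos α X₂
  have hk := cc_pos (MulAut.conj α) (Q ⊓ cen X₁)
  generalize ii (MulAut.conj α) Q = I at *
  generalize ii (MulAut.conj α) (Q ⊓ cen X₁) = J at *
  generalize cc (MulAut.conj α) Q = C at *
  generalize cc (MulAut.conj α) (Q ⊓ cen X₁) = D at *
  generalize cV α X₁ = x at *
  generalize cV α X₂ = y at *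
  generalize cV α ⊤ = z at *
  have hsq : (x * y) ^ 2 ≤ z ^ 2 := Nat.pow_le_pow_left hc 2
  rw [mul_pow] at hsq
  have q1 : 0 < x ^ 2 := by positivity
  have q2 : 0 < y ^ 2 := by positivity
  constructor
  · rcases a1 with a1 | a1 <;> rcases a2 with a2 | a2
    · left; omega
    · right; nlinarith
    · right; subst a2; nlinarith
    · right; nlinarith
  · apply Nat.le_of_mul_le_mul_right _ hk
    calc I * D ≤ x * C * J := b1
      _ ≤ x * C * (y * D) := Nat.mul_le_mul_left _ (by linarith)
      _ = x * y * (C * D) := by ring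
      _ ≤ z * (C * D) := Nat.mul_le_mul_right _ hc
      _ = z * C * D := by ring

/-- The case where `α` interchanges two complementary `Q`-invariant subgroups. -/
lemma bounds_of_pair [Finite V] [Nontrivial V] (hV : Odd (Nat.card V)) {α : GLV V}
    (hα : α * α = 1) {Q : Subgroup (GLV V)} (hQ : Good Q) {U : AddSubgroup V} (hU : Q ≤ stab U)
    (h0 : ∀ v ∈ U, α • v ∈ U → v = 0) (h1 : ∀ v : V, ∃ u ∈ U, ∃ u' ∈ U, v = u + α • u') :
    (ii (MulAut.conj α) Q = 1 ∨ 2 * ii (MulAut.conj α) Q ≤ cV α ⊤ ^ 2) ∧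
    ii (MulAut.conj α) Q ≤ cV α ⊤ * cc (MulAut.conj α) Q := by
  have hne : Nontrivial U := by
    rw [AddSubgroup.nontrivial_iff_exists_ne_zero]
    by_contra h
    push Not at h
    obtain ⟨v, hv⟩ := exists_ne (0 : V)
    obtain ⟨u, hu, u', hu', e⟩ := h1 v
    apply hv
    rw [e, h u hu, h u' hu', smul_zero, add_zero]
  have hUodd : Odd (Nat.card U) := hV.of_dvd_nat (AddSubgroup.card_addSubgroup_dvd_card U)
  have hS := (stmtS U hUodd).rel hQ hU
  have hle := ii_mul_le (MulAut.conj α) (K := Q) (K' := Q ⊓ cen U) inf_le_left (by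
    intro y hy y' hy' hyσ hyσ' hm
    have h2 := agree_swap hα (hU hy) hyσ hyσ' hm.2
    have : y'⁻¹ * y = 1 := by
      apply glv_ext
      intro v
      obtain ⟨u, hu, u', hu', rfl⟩ := h1 v
      rw [smul_add, hm.2 u hu, h2 _ (smul_mem_tr hu'), one_smul]
    rw [inv_mul_eq_one] at this
    exact this.symm)
  have hc : Nat.card U ≤ cV α ⊤ := by
    refine Nat.card_le_card_of_injective
      (fun u => ⟨(u : V) + α • (u : V), trivial, ?_⟩) ?_
    · rw [smul_add, ← mul_smul, hα, one_smul, add_comm]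
    · intro a b hab
      have hab' : (a : V) + α • (a : V) = b + α • (b : V) := congrArg Subtype.val hab
      have h3 : α • ((a : V) - b) = b - a := by
        rw [smul_sub, sub_eq_sub_iff_add_eq_add, add_comm, hab', add_comm]
      have := h0 ((a : V) - b) (U.sub_mem a.2 b.2) (by rw [h3]; exact U.sub_mem b.2 a.2)
      exact Subtype.ext (sub_eq_zero.mp this)
  have hk : 0 < Nat.card ↥(Q ⊓ cen U) := Nat.card_pos
  have hcc := cc_pos (MulAut.conj α) Q
  have h2 : 2 * ii (MulAut.conj α) Q ≤ Nat.card U := by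
    apply Nat.le_of_mul_le_mul_right _ hk
    linarith
  have h3 := cV_pos α (⊤ : AddSubgroup V)
  constructor
  · right; nlinarith
  · nlinarith

/-- In the fixed-point-free case, `Q = [Q, α]` is abelian. -/
lemma isComm_of_fpf [Finite V] [Nontrivial V] {α : GLV V} (hα : α * α = 1)
    {Q : Subgroup (GLV V)} (hQ : Good Q) (hQα : SInv (MulAut.conj α) Q)
    (hcom : comSub (MulAut.conj α) Q = Q)
    (hf : ∀ A ≤ Q, IsComm A → NormBy Q A → SInv (MulAut.conj α) A → Fpf A) :
    IsComm Q := by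
  have hσ := conj_sq hα
  generalize MulAut.conj α = σ at *
  obtain ⟨A, ⟨hAQ, hAn, hAc, hAσ⟩, hmax⟩ := exists_maximal_subgroup
    (fun A => A ≤ Q ∧ NormBy Q A ∧ IsComm A ∧ SInv σ A)
    ⟨⊥, bot_le, by
      intro q _ h hh
      rw [Subgroup.mem_bot] at hh ⊢
      simp [hh], by
      intro a ha b hb
      rw [Subgroup.mem_bot] at ha hb
      rw [ha, hb], by
      intro a ha
      rw [Subgroup.mem_bot] at ha ⊢
      rw [ha, map_one]⟩
  have hcyc : IsCyclic A := isCyclic_of_fpf hAc (hf A hAQ hAc hAn hAσ)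
  obtain ⟨⟨a₀, ha₀⟩, hgen⟩ := hcyc.exists_generator
  have hgen' : ∀ a ∈ A, ∃ k : ℤ, a = a₀ ^ k := by
    intro a ha
    obtain ⟨k, hk⟩ := Subgroup.mem_zpowers_iff.mp (hgen ⟨a, ha⟩)
    exact ⟨k, (congrArg Subtype.val hk).symm⟩
  have hpow : ∀ q ∈ Q, ∃ m : ℤ, ∀ a ∈ A, q * a * q⁻¹ = a ^ m := by
    intro q hq
    obtain ⟨m, hm⟩ := hgen' _ (hAn q hq a₀ ha₀)
    refine ⟨m, fun a ha => ?_⟩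
    obtain ⟨k, rfl⟩ := hgen' a ha
    rw [← conj_zpow, hm, ← zpow_mul, ← zpow_mul, mul_comm]
  have hcen : ∀ q ∈ Q, ∀ a ∈ A, q * a = a * q := by
    have : Q ≤ Subgroup.centralizer (A : Set (GLV V)) := by
      rw [← hcom, comSub, Subgroup.closure_le]
      rintro _ ⟨q, hq, rfl⟩
      rw [SetLike.mem_coe, Subgroup.mem_centralizer_iff]
      intro a ha
      obtain ⟨m, hm⟩ := hpow q hq
      have h1 := hm a ha
      have h2 := congrArg σ (hm (σ a) (hAσ a ha))
      rw [map_mul, map_mul, map_inv, map_zpow, invol_apply hσ, ← h1] at h2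
      have h3 : σ q * a = q * a * q⁻¹ * σ q := by rw [← h2]; group
      rw [mul_assoc q⁻¹, h3]; group
    intro q hq a ha
    exact (Subgroup.mem_centralizer_iff.mp (this hq) a ha).symm
  have hQA : Q ≤ A := by
    by_contra hQA
    obtain ⟨x, hx, hxA, hxc⟩ := exists_central_mod hQ.nil le_rfl (NormBy.refl Q) hQA
    obtain ⟨z, hz, hzA, hzc, hzσ⟩ : ∃ z ∈ Q, z ∉ A ∧ (∀ q ∈ Q, z * q * z⁻¹ * q⁻¹ ∈ A) ∧
        σ z ∈ A ⊔ Subgroup.zpowers z := by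
      by_cases hm : x * σ x ∈ A
      · refine ⟨x, hx, hxA, hxc, ?_⟩
        have : σ x = x⁻¹ * (x * σ x) := by group
        rw [this]
        exact Subgroup.mul_mem _ (Subgroup.mem_sup_right (Subgroup.inv_mem _
          (Subgroup.mem_zpowers x))) (Subgroup.mem_sup_left hm)
      · have hc : ∀ q ∈ Q, (x * σ x) * q * (x * σ x)⁻¹ * q⁻¹ ∈ A := by
          intro q hq
          have h1 := hAσ _ (hxc (σ q) (hQα q hq))
          simp only [map_mul, map_inv, invol_apply hσ] at h1
          have h2 := hAn x hx _ h1
          have h3 := A.mul_mem h2 (hxc q hq)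
          have e : x * (σ x * q * (σ x)⁻¹ * q⁻¹) * x⁻¹ * (x * q * x⁻¹ * q⁻¹) =
            (x * σ x) * q * (x * σ x)⁻¹ * q⁻¹ := by group
          rwa [e] at h3
        refine ⟨x * σ x, Q.mul_mem hx (hQα x hx), hm, hc, ?_⟩
        have h1 := conj_mem_sup_of_comm_mem (hc x⁻¹ (Q.inv_mem hx))
        have e : x⁻¹ * (x * σ x) * x⁻¹⁻¹ = σ (x * σ x) := by
          rw [map_mul, invol_apply hσ]; group
        rwa [e] at h1
    have := hmax (A ⊔ Subgroup.zpowers z)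
      ⟨sup_le hAQ (by rw [Subgroup.zpowers_le]; exact hz),
        normBy_sup_zpowers hAn (fun q hq => conj_mem_sup_of_comm_mem (hzc q hq)),
        isComm_sup_zpowers hAc (fun a ha => hcen z hz a ha), by
          have : A ⊔ Subgroup.zpowers z ≤ (A ⊔ Subgroup.zpowers z).comap σ.toMonoidHom := by
            apply sup_le
            · intro a ha
              exact Subgroup.mem_sup_left (hAσ a ha)
            · rw [Subgroup.zpowers_le]
              exact hzσ
          exact this⟩ le_sup_left
    apply hzA
    rw [← this]
    exact Subgroup.mem_sup_right (Subgroup.mem_zpowers z)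
  intro a ha b hb
  exact hAc a (hQA ha) b (hQA hb)

/-- The case of a fixed-point-free abelian group inverted by `α`. -/
lemma card_le_of_fpf [Finite V] [Nontrivial V] (hV : Odd (Nat.card V)) {α : GLV V}
    (hα : α * α = 1) {Q : Subgroup (GLV V)} (hQ : Odd (Nat.card Q)) (hf : Fpf Q)
    (hinv : ∀ q ∈ Q, MulAut.conj α q = q⁻¹) (hne : Q ≠ ⊥) : Nat.card Q ≤ cV α ⊤ := by
  classical
  have hsq : ∀ y ∈ Q, ∀ v : V, v ≠ 0 → y • v = y⁻¹ • v → y = 1 := by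
    intro y hy v hv h
    by_contra hy1
    have h1 : (y * y) • v = v := by rw [mul_smul, h, smul_inv_smul]
    exact hv (hf (y * y) (Q.mul_mem hy hy) (fun h2 => hy1 (eq_one_of_sq hQ hy h2)) v h1)
  obtain ⟨⟨y, hy⟩, hy1'⟩ := Subgroup.ne_bot_iff_exists_ne_one.mp hne
  have hy1 : y ≠ 1 := fun h => hy1' (Subtype.ext h)
  -- `|V| ≤ |C_V(α)|²`
  have hI : Nat.card {v : V // α • v = -v} ≤ cV α ⊤ := by
    refine Nat.card_le_card_of_injective (fun v => ⟨y • v.1 - y⁻¹ • v.1, trivial, ?_⟩) ?_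
    · rw [smul_sub, alpha_smul_inv (hinv y hy), alpha_inv_smul (hinv y hy), v.2, smul_neg, smul_neg]
      abel
    · rintro ⟨a, ha⟩ ⟨b, hb⟩ hab
      have hab' : y • a - y⁻¹ • a = y • b - y⁻¹ • b := congrArg Subtype.val hab
      have h3 : y • (a - b) = y⁻¹ • (a - b) := by
        rw [smul_sub, smul_sub, sub_eq_sub_iff_sub_eq_sub]; exact hab'
      have h4 : a - b = 0 := by
        by_contra h
        exact hy1 (hsq y hy _ h h3)
      exact Subtype.ext (sub_eq_zero.mp h4)
  have hVc : Nat.card V ≤ cV α ⊤ * Nat.card {v : V // α • v = -v} := by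
    rw [cV, ← Nat.card_prod]
    refine Nat.card_le_card_of_injective (fun v => (⟨v + α • v, trivial, ?_⟩, ⟨v - α • v, ?_⟩)) ?_
    · rw [smul_add, ← mul_smul, hα, one_smul, add_comm]
    · rw [smul_sub, ← mul_smul, hα, one_smul, neg_sub]
    · intro a b hab
      have e1 : a + α • a = b + α • b := congrArg (fun p => p.1.1) hab
      have e2 : a - α • a = b - α • b := congrArg (fun p => p.2.1) hab
      have e3 : a - b = -(a - b) := by
        have h1 : a - b = α • b - α • a := by rw [sub_eq_sub_iff_add_eq_add, e1, add_comm]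
        have h2 : a - b = α • a - α • b := by rw [sub_eq_sub_iff_sub_eq_sub]; exact e2
        rw [h2, neg_sub, ← h1, h2]
      exact sub_eq_zero.mp (eq_zero_of_neg_eq hV e3)
  have hle : Nat.card (Option (Q × {v : V // α • v = v ∧ v ≠ 0})) ≤ Nat.card V := by
    refine Nat.card_le_card_of_injective
      (fun p => p.elim 0 (fun p => (p.1 : GLV V) • (p.2 : V))) ?_
    rintro (_ | ⟨⟨a, ha⟩, v, hv, hv0⟩) (_ | ⟨⟨b, hb⟩, w, hw, hw0⟩) h
    · rfl
    · exact absurd ((smul_eq_zero_iff_eq b).mp h.symm) hw0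
    · exact absurd ((smul_eq_zero_iff_eq a).mp h) hv0
    · have h' : a • v = b • w := h
      have hm : b⁻¹ * a ∈ Q := Q.mul_mem (Q.inv_mem hb) ha
      have h1 : (b⁻¹ * a) • v = w := by rw [mul_smul, h', inv_smul_smul]
      have h2 := alpha_smul_inv (hinv _ hm) v
      rw [h1, hw, hv] at h2
      have h3 := hsq _ hm v hv0 (by rw [h1, h2])
      rw [h3, one_smul] at h1
      rw [inv_mul_eq_one] at h3
      subst h1 h3
      rfl
  have hcC : cV α ⊤ ≤ Nat.card (Option {v : V // α • v = v ∧ v ≠ 0}) := by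
    refine Nat.card_le_card_of_injective
      (fun v => if h : v.1 = 0 then none else some ⟨v.1, v.2.2, h⟩) ?_
    rintro ⟨a, _, ha⟩ ⟨b, _, hb⟩ h
    apply Subtype.ext
    by_cases h1 : a = 0 <;> by_cases h2 : b = 0 <;> simp_all
  rw [Finite.card_option] at hle hcC
  rw [Nat.card_prod] at hle
  have hcodd : Odd (cV α ⊤) := by
    rw [card_fixed]
    exact hV.of_dvd_nat (AddSubgroup.card_addSubgroup_dvd_card _)
  have hV1 : 1 < Nat.card V := Finite.one_lt_card
  generalize Nat.card {v : V // α • v = -v} = i at *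
  generalize Nat.card {v : V // α • v = v ∧ v ≠ 0} = d at *
  generalize cV α ⊤ = c at *
  generalize Nat.card Q = q at *
  by_contra hlt
  push Not at hlt
  have hq : c + 2 ≤ q := by
    obtain ⟨a, rfl⟩ := hQ
    obtain ⟨b, rfl⟩ := hcodd
    omega
  have h1 : Nat.card V ≤ c * c := hVc.trans (Nat.mul_le_mul_left _ hI)
  have h2 : 2 ≤ c := by
    by_contra h
    have : c ≤ 1 := by omega
    have := Nat.mul_le_mul this this
    omega
  obtain ⟨e, rfl⟩ : ∃ e, c = e + 1 := ⟨c - 1, by omega⟩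
  nlinarith

/-- The case in which abelian normal subgroups act fixed-point-freely: then `Q = [Q, α]` is abelian
and inverted by `α`. -/
lemma bounds_of_fpf [Finite V] [Nontrivial V] (hV : Odd (Nat.card V)) {α : GLV V}
    (hα : α * α = 1) {Q : Subgroup (GLV V)} (hQ : Good Q) (hQα : SInv (MulAut.conj α) Q)
    (hcom : comSub (MulAut.conj α) Q = Q)
    (hf : ∀ A ≤ Q, IsComm A → NormBy Q A → SInv (MulAut.conj α) A → Fpf A) :
    (ii (MulAut.conj α) Q = 1 ∨ 2 * ii (MulAut.conj α) Q ≤ cV α ⊤ ^ 2) ∧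
    ii (MulAut.conj α) Q ≤ cV α ⊤ * cc (MulAut.conj α) Q := by
  have hc := isComm_of_fpf hα hQ hQα hcom hf
  have hf' := hf Q le_rfl hc (NormBy.refl Q) hQα
  have hinv : ∀ q ∈ Q, MulAut.conj α q = q⁻¹ := by
    intro q hq
    have := mul_sigma_mem (conj_sq hα) hQα hcom (H := ⊥) (by
      intro a ha b hb
      rw [hc a ha b hb, Subgroup.mem_bot]
      group) bot_le q hq
    rw [Subgroup.mem_bot] at this
    exact eq_inv_of_mul_eq_one_right this
  have p1 := cV_pos α (⊤ : AddSubgroup V)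
  have p2 := cc_pos (MulAut.conj α) Q
  by_cases hb : Q = ⊥
  · have : ii (MulAut.conj α) Q = 1 := by rw [hb, ii_bot]
    exact ⟨Or.inl this, by rw [this]; nlinarith⟩
  · have h1 := card_le_of_fpf hV hα hQ.odd hf' hinv hb
    have h2 := ii_le_card (MulAut.conj α) Q
    have h3 : 1 < Nat.card Q := (Subgroup.one_lt_card_iff_ne_bot Q).mpr hb
    constructor
    · right; nlinarith
    · nlinarith

end InvertedCount

end OddInvolution

/-! ### The number of inverted elements: induced modules -/

namespace OddInvolution

section BlockCase

variable {V : Type*} [AddCommGroup V] [Finite V]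
variable {Q H : Subgroup (GLV V)} {α g : GLV V} {W : AddSubgroup V} {r : ℕ}

lemma Blocks.pow_mem (hB : Blocks Q H α W r) (hg : g ∈ Q) (hgH : g ∉ H) : g ^ r ∈ H := by
  obtain ⟨i, hi, hm⟩ := hB.pi.cover g hg hgH (g ^ r) (Q.pow_mem hg r)
  rcases Nat.eq_zero_or_pos i with rfl | hpos
  · simpa using hm
  · have e : (g ^ i)⁻¹ * g ^ r = (g ^ 0)⁻¹ * g ^ (r - i) := by
      rw [pow_zero, inv_one, one_mul, inv_mul_eq_iff_eq_mul, ← pow_add]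
      congr 1; omega
    rw [e] at hm
    have := hB.pi.inj g hg hgH 0 (by omega) (r - i) (by omega) hm
    omega

lemma Blocks.tr_inv (hB : Blocks Q H α W r) (hg : g ∈ Q) (hgH : g ∉ H) {i : ℕ} (hi : i ≤ r) :
    tr (g ^ i)⁻¹ W = tr (g ^ (r - i)) W := by
  have e : g ^ (r - i) = (g ^ i)⁻¹ * g ^ r := by
    rw [eq_inv_mul_iff_mul_eq, ← pow_add]
    congr 1; omega
  rw [e, ← tr_tr, tr_of_stab (hB.HW (hB.pow_mem hg hgH))]

lemma tr_alpha {b : GLV V} (hαW : α ∈ stab W) (hb : MulAut.conj α b = b⁻¹) :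
    tr α (tr b W) = tr b⁻¹ W := by
  have e : α * b = b⁻¹ * α := by
    rw [← hb, MulAut.conj_apply, inv_mul_cancel_right]
  rw [tr_tr, e, ← tr_tr, tr_of_stab hαW]

lemma conj_pow_inv (hgσ : MulAut.conj α g = g⁻¹) (i : ℕ) :
    MulAut.conj α (g ^ i) = (g ^ i)⁻¹ := by rw [map_pow, hgσ, inv_pow]

/-- The fixed vectors of `α`: a fixed vector of `W` and arbitrary vectors in half of the other
translates. -/
lemma Blocks.cV_ge (hB : Blocks Q H α W r) (hα : α * α = 1) (hg : g ∈ Q) (hgH : g ∉ H)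
    (hgσ : MulAut.conj α g = g⁻¹) {s : ℕ} (hs : r = 2 * s + 1) :
    cV α W * Nat.card W ^ s ≤ cV α ⊤ := by
  classical
  have hrH : (g ^ r)⁻¹ ∈ stab W := (stab W).inv_mem (hB.HW (hB.pow_mem hg hgH))
  let ext : (Fin s → W) → ℕ → V := fun f j => if h : j < s then (f ⟨j, h⟩ : V) else 0
  have hext : ∀ f j, ext f j ∈ W := by
    intro f j
    by_cases h : j < s
    · simp only [ext, h, dite_true]; exact (f _).2
    · simp only [ext, h, dite_false]; exact W.zero_mem
  let F : V → (Fin s → W) → ℕ → V := fun w f j =>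
    if j = 0 then w else if j ≤ s then ext f (j - 1) else (g ^ r)⁻¹ • α • ext f (r - j - 1)
  have hF : ∀ w ∈ W, ∀ f j, F w f j ∈ W := by
    intro w hw f j
    simp only [F]
    split_ifs
    · exact hw
    · exact hext _ _
    · exact stab_smul hrH (stab_smul hB.αW (hext _ _))
  have hrefl : ∀ w f, ∀ j, 0 < j → j < r → α • g ^ j • F w f j = g ^ (r - j) • F w f (r - j) := by
    intro w f j hj0 hjr
    have hgr : ∀ v : V, (g ^ j)⁻¹ • v = g ^ (r - j) • (g ^ r)⁻¹ • v := by
      intro v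
      rw [← mul_smul]
      congr 1
      rw [eq_mul_inv_iff_mul_eq, inv_mul_eq_iff_eq_mul, ← pow_add]
      congr 1; omega
    rw [alpha_smul_inv (conj_pow_inv hgσ j), hgr]
    congr 1
    simp only [F]
    by_cases hjs : j ≤ s
    · rw [if_neg (by omega), if_pos hjs, if_neg (by omega), if_neg (by omega)]
      congr 3; omega
    · rw [if_neg (by omega), if_neg hjs, if_neg (by omega), if_pos (by omega),
        alpha_inv_smul (conj_pow_inv hgσ r), inv_smul_smul, ← mul_smul, hα, one_smul]
  rw [cV, cV, show Nat.card W ^ s = Nat.card (Fin s → W) by simp [Nat.card_fun], ← Nat.card_prod]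
  refine Nat.card_le_card_of_injective
    (fun p => ⟨∑ j ∈ Finset.range r, g ^ j • F p.1 p.2 j, trivial, ?_⟩) ?_
  · rw [Finset.smul_sum, hs, Finset.sum_range_succ', Finset.sum_range_succ' _ (2 * s)]
    congr 1
    · rw [← Finset.sum_range_reflect _ (2 * s)]
      refine Finset.sum_congr rfl fun j hj => ?_
      rw [Finset.mem_range] at hj
      rw [hrefl _ _ _ (by omega) (by omega)]
      congr 2 <;> [congr 1; skip] <;> omega
    · simp only [pow_zero, one_smul, F, if_true]
      exact p.1.2.2
  · rintro ⟨⟨w, hw, _⟩, f⟩ ⟨⟨w', hw', _⟩, f'⟩ h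
    have h' : ∑ j ∈ Finset.range r, g ^ j • F w f j = ∑ j ∈ Finset.range r, g ^ j • F w' f' j :=
      congrArg Subtype.val h
    have h2 : ∑ j ∈ Finset.range r, g ^ j • (F w f j - F w' f' j) = 0 := by
      simp only [smul_sub, Finset.sum_sub_distrib, h', sub_self]
    have h3 := hB.ind g hg hgH _ (fun j => W.sub_mem (hF w hw f j) (hF w' hw' f' j)) h2
    have e1 : w = w' := by simpa [F] using sub_eq_zero.mp (h3 0 (by omega))
    have e2 : f = f' := by
      funext i
      have h4 := sub_eq_zero.mp (h3 (i + 1) (by omega))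
      have hi : (i : ℕ) + 1 ≤ s := i.2
      simp only [F, ext, if_neg (Nat.succ_ne_zero _), hi, if_true, Nat.add_sub_cancel, i.2,
        dite_true, Fin.eta] at h4
      exact Subtype.ext h4
    subst e1 e2
    rfl

/-- With `r = 2s + 1` blocks, an element of `C_H(W)` inverted by `α` is determined by its action on
the `s` blocks `gW, …, gˢW`, since `α` swaps `gⁱW` and `g⁻ⁱW`. -/
lemma Blocks.ii_cen_le [Nontrivial V] (hB : Blocks Q H α W r) (hV : Odd (Nat.card V))
    (hQ : Good Q) (hα : α * α = 1)
    (hg : g ∈ Q) (hgH : g ∉ H) (hgσ : MulAut.conj α g = g⁻¹) {s : ℕ} (hs : r = 2 * s + 1) :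
    2 ^ s * ii (MulAut.conj α) (H ⊓ cen W) ≤ Nat.card W ^ s := by
  have hK : Good (H ⊓ cen W) := (hQ.mono hB.pi.le).mono inf_le_left
  have hst : ∀ i, H ⊓ cen W ≤ stab (tr (g ^ i) W) := fun i =>
    inf_le_left.trans (hB.le_stab_tr (Q.pow_mem hg i))
  obtain ⟨K', hK', hcen, hle⟩ := chain_bound hK s (fun i => tr (g ^ (i + 1)) W)
    (fun i _ => hst (i + 1)) (fun i _ => by
      have h1 : Nontrivial (tr (g ^ (i + 1)) W) := by
        rw [← Finite.one_lt_card_iff_nontrivial, card_tr]; exact hB.one_lt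
      exact stmtS _ (hV.of_dvd_nat (AddSubgroup.card_addSubgroup_dvd_card _)))
    (w := Nat.card W) (fun i _ => card_tr _ _)
  have h1 := ii_mul_le (MulAut.conj α) hK' (by
    intro y hy y' hy' hyσ hyσ' hm
    have : y'⁻¹ * y = 1 := by
      apply hB.eq_one hg hgH
      intro i hi
      rcases Nat.eq_zero_or_pos i with rfl | hpos
      · rw [pow_zero, tr_of_stab (stab W).one_mem]
        exact (hK' hm).2
      · by_cases his : i ≤ s
        · have := hcen _ hm (i - 1) (by omega)
          rwa [Nat.sub_add_cancel hpos] at this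
        · have h2 := hcen _ hm (r - i - 1) (by omega)
          rw [Nat.sub_add_cancel (by omega)] at h2
          have h3 := agree_swap hα (hst _ hy) hyσ hyσ' h2
          rw [tr_alpha hB.αW (conj_pow_inv hgσ _), hB.tr_inv hg hgH (by omega)] at h3
          rwa [show r - (r - i) = i by omega] at h3
    rw [inv_mul_eq_one] at this
    exact this.symm)
  have hk : 0 < Nat.card K' := Nat.card_pos
  apply Nat.le_of_mul_le_mul_right _ hk
  calc 2 ^ s * ii (MulAut.conj α) (H ⊓ cen W) * Nat.card K'
      = 2 ^ s * (ii (MulAut.conj α) (H ⊓ cen W) * Nat.card K') := by ring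
    _ ≤ 2 ^ s * Nat.card ↥(H ⊓ cen W) := Nat.mul_le_mul_left _ h1
    _ ≤ _ := hle

lemma mem_cen_conj {a b x : GLV V} : a * x * a⁻¹ ∈ cen (tr (a * b) W) ↔ x ∈ cen (tr b W) := by
  rw [mem_cen_tr, mem_cen_tr]
  have : (a * b)⁻¹ * (a * x * a⁻¹) * (a * b) = b⁻¹ * x * b := by group
  rw [this]

lemma Blocks.conj_mem' (hB : Blocks Q H α W r) {b h : GLV V} (hb : b ∈ Q) (hh : h ∈ H) :
    b * h * b⁻¹ ∈ H := by
  have := hB.conj_mem (Q.inv_mem hb) hh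
  rwa [inv_inv] at this

/-- If `α` inverts `C_H(W)`, no nontrivial element of `H` centralizes both `W` and `gW`:
such an element also centralizes `g⁻¹W`, and conjugating by `g` repeats the argument. -/
lemma Blocks.eq_one_of_two (hB : Blocks Q H α W r) (hα : α * α = 1) (hg : g ∈ Q) (hgH : g ∉ H)
    (hgσ : MulAut.conj α g = g⁻¹)
    (hinv : ∀ x ∈ H ⊓ cen W, MulAut.conj α x = x⁻¹) {x : GLV V} (hxH : x ∈ H) (hx0 : x ∈ cen W)
    (hx1 : x ∈ cen (tr g W)) : x = 1 := by
  have hW1 : tr 1 W = W := tr_of_stab (stab W).one_mem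
  have step : ∀ x ∈ H, x ∈ cen W → x ∈ cen (tr g W) →
      g * x * g⁻¹ ∈ H ∧ g * x * g⁻¹ ∈ cen W ∧ g * x * g⁻¹ ∈ cen (tr g W) := by
    intro x hxH hx0 hx1
    refine ⟨hB.conj_mem' hg hxH, ?_, ?_⟩
    · -- `x` centralizes `α(gW) = g⁻¹W`
      have h1 : x⁻¹ ∈ cen (tr g⁻¹ W) := by
        rw [← hinv x ⟨hxH, hx0⟩, ← tr_alpha hB.αW hgσ, MulAut.conj_apply]
        have := (mem_cen_conj (W := W) (a := α) (b := g) (x := x)).mpr hx1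
        rwa [← tr_tr] at this
      have h2 := (cen _).inv_mem h1
      rw [inv_inv] at h2
      have h3 := (mem_cen_conj (W := W) (a := g) (b := g⁻¹) (x := x)).mpr h2
      rwa [mul_inv_cancel, hW1] at h3
    · have h3 := (mem_cen_conj (W := W) (a := g) (b := 1) (x := x)).mpr (by rwa [hW1])
      rwa [mul_one] at h3
  have iter : ∀ n : ℕ, g ^ n * x * (g ^ n)⁻¹ ∈ H ∧ g ^ n * x * (g ^ n)⁻¹ ∈ cen W ∧
      g ^ n * x * (g ^ n)⁻¹ ∈ cen (tr g W) := by
    intro n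
    induction n with
    | zero => simpa using ⟨hxH, hx0, hx1⟩
    | succ n ih =>
      have := step _ ih.1 ih.2.1 ih.2.2
      have e : g * (g ^ n * x * (g ^ n)⁻¹) * g⁻¹ = g ^ (n + 1) * x * (g ^ (n + 1))⁻¹ := by
        rw [pow_succ']; group
      rwa [e] at this
  apply hB.eq_one hg hgH
  intro i hi
  have h1 := (iter (r - i)).2.1
  have h2 : x ∈ cen (tr (g ^ (r - i))⁻¹ W) := by
    rw [← mem_cen_conj (a := g ^ (r - i)), mul_inv_cancel, hW1]
    exact h1
  rwa [hB.tr_inv hg hgH (Nat.sub_le _ _), show r - (r - i) = i by omega] at h2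

/-- If `α` inverts `C_H(W)`, then the diagonal elements `x·σ(x)`, with `x` in the centralizer
of the middle translate, are fixed by `α`. -/
lemma Blocks.card_cen_le (hB : Blocks Q H α W r) (hα : α * α = 1) (hg : g ∈ Q) (hgH : g ∉ H)
    (hgσ : MulAut.conj α g = g⁻¹) {s : ℕ} (hs : r = 2 * s + 1)
    (hHσ : SInv (MulAut.conj α) H)
    (hinv : ∀ x ∈ H ⊓ cen W, MulAut.conj α x = x⁻¹) :
    Nat.card ↥(H ⊓ cen W) ≤ cc (MulAut.conj α) H := by
  have hσ := conj_sq hα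
  have hW1 : tr 1 W = W := tr_of_stab (stab W).one_mem
  -- elements centralizing both middle translates are trivial
  have htriv : ∀ x ∈ H, x ∈ cen (tr (g ^ s) W) → x ∈ cen (tr (g ^ (s + 1)) W) → x = 1 := by
    intro x hx h1 h2
    have e : (g ^ s)⁻¹ * x * g ^ s = 1 := by
      apply hB.eq_one_of_two hα hg hgH hgσ hinv (hB.conj_mem (Q.pow_mem hg s) hx)
      · exact mem_cen_tr.mp h1
      · rw [mem_cen_tr] at h2 ⊢
        have : (g ^ (s + 1))⁻¹ * x * g ^ (s + 1) = g⁻¹ * ((g ^ s)⁻¹ * x * g ^ s) * g := by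
          rw [pow_succ]; group
        rwa [this] at h2
    have : x = g ^ s * ((g ^ s)⁻¹ * x * g ^ s) * (g ^ s)⁻¹ := by group
    rw [this, e]; group
  have hnorm : ∀ i : ℕ, ∀ x ∈ cen (tr (g ^ i) W), ∀ h ∈ H, h * x * h⁻¹ ∈ cen (tr (g ^ i) W) := by
    intro i x hx h hh
    have := (mem_cen_conj (W := W) (a := h) (b := g ^ i)).mpr hx
    rwa [← tr_tr, tr_of_stab (hB.le_stab_tr (Q.pow_mem hg i) hh)] at this
  set d : GLV V → GLV V := fun k => g ^ s * k * (g ^ s)⁻¹ with hd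
  have hdH : ∀ k ∈ H, d k ∈ H := fun k hk => hB.conj_mem' (Q.pow_mem hg s) hk
  have hd1 : ∀ k ∈ cen W, d k ∈ cen (tr (g ^ s) W) := by
    intro k hk
    have := (mem_cen_conj (W := W) (a := g ^ s) (b := 1) (x := k)).mpr (by rwa [hW1])
    rwa [mul_one] at this
  have hd2 : ∀ k ∈ cen W, MulAut.conj α (d k) ∈ cen (tr (g ^ (s + 1)) W) := by
    intro k hk
    have := (mem_cen_conj (W := W) (a := α) (b := g ^ s) (x := d k)).mpr (hd1 k hk)
    rwa [← tr_tr, tr_alpha hB.αW (conj_pow_inv hgσ s), hB.tr_inv hg hgH (by omega),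
      show r - s = s + 1 by omega] at this
  have hcomm : ∀ k ∈ H ⊓ cen W, MulAut.conj α (d k) * d k = d k * MulAut.conj α (d k) := by
    intro k hk
    have hx := hdH k hk.1
    have hy := hHσ _ hx
    have h1 : (MulAut.conj α (d k) * d k * (MulAut.conj α (d k))⁻¹) * (d k)⁻¹ = 1 := by
      apply htriv _ (H.mul_mem (H.mul_mem (H.mul_mem hy hx) (H.inv_mem hy)) (H.inv_mem hx))
      · exact (cen _).mul_mem (hnorm s _ (hd1 k hk.2) _ hy) ((cen _).inv_mem (hd1 k hk.2))
      · have := (cen _).mul_mem (hd2 k hk.2)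
          (hnorm (s + 1) _ ((cen _).inv_mem (hd2 k hk.2)) _ hx)
        simpa only [mul_assoc] using this
    rw [mul_inv_eq_one, mul_inv_eq_iff_eq_mul] at h1
    exact h1
  rw [cc]
  refine Nat.card_le_card_of_injective
    (fun k => ⟨d k * MulAut.conj α (d k), H.mul_mem (hdH _ k.2.1) (hHσ _ (hdH _ k.2.1)), ?_⟩) ?_
  · rw [map_mul, invol_apply hσ, hcomm k k.2]
  · rintro ⟨k, hk⟩ ⟨k', hk'⟩ he
    have he' : d k * MulAut.conj α (d k) = d k' * MulAut.conj α (d k') := congrArg Subtype.val he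
    have e1 : (d k')⁻¹ * d k = MulAut.conj α (d k') * (MulAut.conj α (d k))⁻¹ := by
      rw [eq_mul_inv_iff_mul_eq, mul_assoc, he', inv_mul_cancel_left]
    have e2 : (d k')⁻¹ * d k = 1 := by
      apply htriv _ (H.mul_mem (H.inv_mem (hdH _ hk'.1)) (hdH _ hk.1))
      · exact (cen _).mul_mem ((cen _).inv_mem (hd1 _ hk'.2)) (hd1 _ hk.2)
      · rw [e1]
        exact (cen _).mul_mem (hd2 _ hk'.2) ((cen _).inv_mem (hd2 _ hk.2))
    rw [inv_mul_eq_one] at e2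
    apply Subtype.ext
    simpa [hd] using e2.symm

lemma lin_le_three_pow (s : ℕ) : 2 * s + 1 ≤ 3 ^ s := by
  induction s with
  | zero => norm_num
  | succ n ih => rw [pow_succ]; omega

lemma lin_le_six_pow {s : ℕ} (hs : 1 ≤ s) : 2 * (2 * s + 1) ≤ 6 ^ s := by
  induction s, hs using Nat.le_induction with
  | base => norm_num
  | succ n hn ih => rw [pow_succ]; omega

lemma lin_le_two_pow (s : ℕ) : 2 * s + 1 ≤ 3 * 2 ^ s := by
  induction s with
  | zero => norm_num
  | succ n ih => rw [pow_succ]; omega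

/-- The case in which `V` is induced from a subgroup of prime index. -/
lemma bounds_of_blocks [Nontrivial V] (hV : Odd (Nat.card V)) (hα : α * α = 1) (hQ : Good Q)
    (hQα : SInv (MulAut.conj α) Q) (hcom : comSub (MulAut.conj α) Q = Q)
    (hB : Blocks Q H α W r) (hL : StmtL W) :
    (ii (MulAut.conj α) Q = 1 ∨ 2 * ii (MulAut.conj α) Q ≤ cV α ⊤ ^ 2) ∧
    ii (MulAut.conj α) Q ≤ cV α ⊤ * cc (MulAut.conj α) Q := by
  have hσ := conj_sq hα
  have hHσ : SInv (MulAut.conj α) H := sinv_of_abelian_quotient hσ hQα hcom hB.pi.comm hB.pi.le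
  obtain ⟨g, hg, hgH, hgσ⟩ : ∃ g ∈ Q, g ∉ H ∧ MulAut.conj α g = g⁻¹ := by
    by_contra hcon
    push Not at hcon
    obtain ⟨x, hx, hxH⟩ := hB.exists_notMem
    apply hxH
    have : comSub (MulAut.conj α) Q ≤ H := by
      rw [comSub, Subgroup.closure_le]
      rintro _ ⟨q, hq, rfl⟩
      by_contra hm
      refine hcon _ (Q.mul_mem (Q.inv_mem hq) (hQα q hq)) hm ?_
      rw [map_mul, map_inv, invol_apply hσ, mul_inv_rev, inv_inv]
    exact this (by rwa [hcom])
  have hrodd : Odd r := hQ.odd.of_dvd_nat ⟨_, hB.pi.card⟩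
  obtain ⟨s, hs⟩ := hrodd
  have hs1 : 1 ≤ s := by
    have := hB.pi.prime.one_lt
    omega
  have hHodd : Odd (Nat.card H) := odd_of_le hB.pi.le hQ.odd
  have hHg : Good H := hQ.mono hB.pi.le
  have hKg : Good (H ⊓ cen W) := hHg.mono inf_le_left
  have hKσ : SInv (MulAut.conj α) (H ⊓ cen W) := SInv.inf hHσ (cen_sinv hB.αW)
  have hwodd : Odd (Nat.card W) := hV.of_dvd_nat (AddSubgroup.card_addSubgroup_dvd_card _)
  have hw3 : 3 ≤ Nat.card W := by
    obtain ⟨k, hk⟩ := hwodd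
    have := hB.one_lt
    omega
  have hcc : cc (MulAut.conj α) H ≤ cc (MulAut.conj α) Q := cc_mono _ hB.pi.le
  have hccpos := cc_pos (MulAut.conj α) H
  have hii : ii (MulAut.conj α) Q ≤ r * ii (MulAut.conj α) H := by
    apply Nat.le_of_mul_le_mul_right _ hccpos
    calc ii (MulAut.conj α) Q * cc (MulAut.conj α) H
        ≤ ii (MulAut.conj α) Q * cc (MulAut.conj α) Q := Nat.mul_le_mul_left _ hcc
      _ = Nat.card Q := ii_mul_cc hσ hQ.odd hQα
      _ = r * Nat.card H := hB.pi.card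
      _ = r * (ii (MulAut.conj α) H * cc (MulAut.conj α) H) := by rw [ii_mul_cc hσ hHodd hHσ]
      _ = _ := by ring
  have hcV := hB.cV_ge hα hg hgH hgσ hs
  have hK := hB.ii_cen_le hV hQ hα hg hgH hgσ hs
  have hA := hL.relA hα hHg hHσ hB.αW hB.HW
  have hBB := hL.relB hα hHg hHσ hB.αW hB.HW
  have hcW := cV_pos α W
  have hws : 3 ^ s ≤ Nat.card W ^ s := Nat.pow_le_pow_left hw3 s
  have hA' : ii (MulAut.conj α) H ≤ cV α W ^ 2 * ii (MulAut.conj α) (H ⊓ cen W) := by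
    have : 0 < cV α W ^ 2 := by positivity
    rcases hA with hA | hA
    · rw [hA]; nlinarith
    · omega
  constructor
  · right
    have h2s : 0 < 2 ^ s := by positivity
    apply Nat.le_of_mul_le_mul_left _ h2s
    have h6 : 2 * r ≤ 2 ^ s * Nat.card W ^ s := by
      calc 2 * r ≤ 6 ^ s := by rw [hs]; exact lin_le_six_pow hs1
        _ = 2 ^ s * 3 ^ s := by rw [← mul_pow]; norm_num
        _ ≤ _ := Nat.mul_le_mul_left _ hws
    calc 2 ^ s * (2 * ii (MulAut.conj α) Q)
        ≤ 2 ^ s * (2 * (r * (cV α W ^ 2 * ii (MulAut.conj α) (H ⊓ cen W)))) := by gcongr; exact hii.trans (by gcongr)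
      _ = 2 * r * cV α W ^ 2 * (2 ^ s * ii (MulAut.conj α) (H ⊓ cen W)) := by ring
      _ ≤ 2 * r * cV α W ^ 2 * Nat.card W ^ s := by gcongr
      _ ≤ 2 ^ s * Nat.card W ^ s * cV α W ^ 2 * Nat.card W ^ s := by gcongr
      _ = 2 ^ s * (cV α W * Nat.card W ^ s) ^ 2 := by ring
      _ ≤ _ := by gcongr
  · suffices h : r * ii (MulAut.conj α) H ≤ cV α W * Nat.card W ^ s * cc (MulAut.conj α) H by
      exact hii.trans (h.trans (Nat.mul_le_mul hcV hcc))
    have hKodd := cc_odd (MulAut.conj α) hKg.odd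
    by_cases h1 : cc (MulAut.conj α) (H ⊓ cen W) = 1
    · have hinv := inverts_of_cc_eq_one hσ hKg.odd hKσ h1
      have hKle : ii (MulAut.conj α) (H ⊓ cen W) ≤ cc (MulAut.conj α) H :=
        (ii_le_card _ _).trans (hB.card_cen_le hα hg hgH hgσ hs hHσ hinv)
      have hr3 : r ≤ 3 ^ s := by rw [hs]; exact lin_le_three_pow s
      by_cases heq : ii (MulAut.conj α) H ≤ ii (MulAut.conj α) (H ⊓ cen W)
      · calc r * ii (MulAut.conj α) H
            ≤ Nat.card W ^ s * cc (MulAut.conj α) H :=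
              Nat.mul_le_mul (hr3.trans hws) (heq.trans hKle)
          _ = 1 * Nat.card W ^ s * cc (MulAut.conj α) H := by ring
          _ ≤ _ := by gcongr; exact hcW
      · -- `α` acts nontrivially on `W`, so `3 * cV α W ≤ |W|`
        have hαc : α ∉ cen W := by
          intro hαc
          apply heq
          obtain ⟨m, hm⟩ := exists_half hHodd
          refine Nat.card_le_card_of_injective
            (fun x => ⟨x.1, ⟨x.2.1, ?_⟩, x.2.2⟩) fun a b hab => Subtype.ext (congrArg (fun z => z.1) hab)
          have h2 : x.1 ^ 2 ∈ cen W := by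
            intro v hv
            have h3 := alpha_smul_inv x.2.2 v
            rw [hαc v hv, hαc _ (stab_smul (hB.HW x.2.1) hv)] at h3
            rw [pow_two, mul_smul, h3, smul_inv_smul]
          have h4 := (cen W).pow_mem h2 m
          rwa [← pow_mul, hm _ x.2.1] at h4
        have hlt : cV α W < Nat.card W := by
          have hle : ¬ Nat.card W ≤ cV α W := by
            intro hle
            apply hαc
            have hinj : Function.Injective
                (fun x : {v : V // v ∈ W ∧ α • v = v} => (⟨x.1, x.2.1⟩ : W)) :=
              fun a b hab => Subtype.ext (congrArg (fun z : W => (z : V)) hab)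
            have hbij := (Nat.bijective_iff_injective_and_card _).mpr
              ⟨hinj, le_antisymm (Nat.card_le_card_of_injective _ hinj) hle⟩
            intro v hv
            obtain ⟨x, hx⟩ := hbij.2 ⟨v, hv⟩
            have : x.1 = v := congrArg (fun z : W => (z : V)) hx
            rw [← this]; exact x.2.2
          omega
        have h3c : 3 * cV α W ≤ Nat.card W := by
          obtain ⟨k, hk⟩ := cV_dvd α W
          have hkodd : Odd k := hwodd.of_dvd_nat ⟨_, by rw [hk, mul_comm]⟩
          obtain ⟨j, rfl⟩ := hkodd
          have : j ≠ 0 := by rintro rfl; omega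
          have : 3 ≤ 2 * j + 1 := by omega
          calc 3 * cV α W ≤ (2 * j + 1) * cV α W := Nat.mul_le_mul_right _ this
            _ = Nat.card W := by rw [hk]; ring
        have hrc : r * cV α W ≤ Nat.card W ^ s := by
          obtain ⟨t, rfl⟩ : ∃ t, s = t + 1 := ⟨s - 1, by omega⟩
          calc r * cV α W ≤ 3 ^ (t + 1) * cV α W := Nat.mul_le_mul_right _ hr3
            _ = 3 ^ t * (3 * cV α W) := by ring
            _ ≤ Nat.card W ^ t * Nat.card W := Nat.mul_le_mul (Nat.pow_le_pow_left hw3 t) h3c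
            _ = _ := by ring
        calc r * ii (MulAut.conj α) H ≤ r * (cV α W ^ 2 * cc (MulAut.conj α) H) := by
              gcongr; exact hA'.trans (by gcongr)
          _ = cV α W * (r * cV α W) * cc (MulAut.conj α) H := by ring
          _ ≤ _ := by gcongr
    · have hK3 : 3 ≤ cc (MulAut.conj α) (H ⊓ cen W) := by
        obtain ⟨k, hk⟩ := hKodd
        omega
      have h2s : 0 < 2 ^ s := by positivity
      have hpos : 0 < cc (MulAut.conj α) (H ⊓ cen W) := cc_pos _ _
      have hr2 : r ≤ 3 * 2 ^ s := by rw [hs]; exact lin_le_two_pow s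
      calc r * ii (MulAut.conj α) H ≤ 3 * 2 ^ s * ii (MulAut.conj α) H := by gcongr
        _ = 2 ^ s * (ii (MulAut.conj α) H * 3) := by ring
        _ ≤ 2 ^ s * (ii (MulAut.conj α) H * cc (MulAut.conj α) (H ⊓ cen W)) := by gcongr
        _ ≤ 2 ^ s * (cV α W * cc (MulAut.conj α) H * ii (MulAut.conj α) (H ⊓ cen W)) := by gcongr
        _ = cV α W * cc (MulAut.conj α) H * (2 ^ s * ii (MulAut.conj α) (H ⊓ cen W)) := by ring
        _ ≤ cV α W * cc (MulAut.conj α) H * Nat.card W ^ s := by gcongr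
        _ = _ := by ring

end BlockCase

section Main

/-- Induction on `|V|`; one may replace `Q` by `[Q, α]`, which contains all elements of `Q` inverted
by `α`. -/
theorem stmtL_aux (n : ℕ) : ∀ (V : Type*) [AddCommGroup V] [Finite V],
    Nat.card V = n → Odd (Nat.card V) → StmtL V := by
  induction n using Nat.strong_induction_on with
  | _ n ih =>
  intro V _ _ hn hV
  have key : ∀ α : GLV V, α * α = 1 → ∀ Q : Subgroup (GLV V), Good Q →
      SInv (MulAut.conj α) Q → comSub (MulAut.conj α) Q = Q →
      (ii (MulAut.conj α) Q = 1 ∨ 2 * ii (MulAut.conj α) Q ≤ cV α ⊤ ^ 2) ∧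
      ii (MulAut.conj α) Q ≤ cV α ⊤ * cc (MulAut.conj α) Q := by
    intro α hα Q hQ hQα hcom
    have hsub : ∀ X : AddSubgroup V, Nat.card X < Nat.card V → StmtL X := fun X hX =>
      ih _ (hn ▸ hX) X rfl (hV.of_dvd_nat (AddSubgroup.card_addSubgroup_dvd_card X))
    rcases subsingleton_or_nontrivial V with hs | hs
    · have hQ1 : Q = ⊥ := by
        rw [eq_bot_iff]
        intro q _
        exact glv_ext fun v => Subsingleton.elim _ _
      have : ii (MulAut.conj α) Q = 1 := by rw [hQ1, ii_bot]
      rw [this]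
      exact ⟨Or.inl rfl, Nat.mul_pos (cV_pos α _) (cc_pos _ _)⟩
    by_cases hind : Indec Q α
    · have hab : ∀ H ≤ Q, (∀ a ∈ Q, ∀ b ∈ Q, a * b * a⁻¹ * b⁻¹ ∈ H) → SInv (MulAut.conj α) H :=
        fun H hH hc => sinv_of_abelian_quotient (conj_sq hα) hQα hcom hc hH
      rcases block_trichotomy hQ hα hQα hind hab with h | ⟨U, hU, h0, h1⟩ | ⟨r, H, W, hB⟩
      · exact bounds_of_fpf hV hα hQ hQα hcom h
      · exact bounds_of_pair hV hα hQ hU h0 h1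
      · exact bounds_of_blocks hV hα hQ hQα hcom hB (hsub W hB.card_lt)
    · unfold Indec at hind
      push Not at hind
      obtain ⟨X₁, X₂, hQ1, hα1, hQ2, hα2, h0, h1, hn1, hn2⟩ := hind
      have hc := card_dir h0 h1
      have c1 := (AddSubgroup.one_lt_card_iff_ne_bot X₁).mpr hn1
      have c2 := (AddSubgroup.one_lt_card_iff_ne_bot X₂).mpr hn2
      exact bounds_of_dec hα hQ hQα hQ1 hα1 hQ2 hα2 h0 h1 (hsub X₁ (by nlinarith))
        (hsub X₂ (by nlinarith))
  intro α hα Q hQ hQα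
  have hle := comSub_le hQα
  have h := key α hα _ (hQ.mono hle) (comSub_sinv (conj_sq hα))
    (comSub_idem (conj_sq hα) hQ.odd hQα)
  rw [ii_comSub hQ.odd hQα] at h
  exact ⟨h.1, h.2.trans (Nat.mul_le_mul_left _ (cc_mono _ hle))⟩

/-- Let `V` be a finite abelian group of odd order, `α` an automorphism of `V` with `α² = 1`, and
`Q` an `α`-invariant nilpotent odd-order group of automorphisms of `V` with `|Q|` coprime to `|V|`.
The number of elements of `Q` inverted by `α` is `1` or at most `|C_V(α)|² / 2`, and it is at most
`|C_V(α)|·|C_Q(α)|`. -/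
theorem stmtL (V : Type*) [AddCommGroup V] [Finite V] (hV : Odd (Nat.card V)) : StmtL V :=
  stmtL_aux _ V rfl hV

end Main

end OddInvolution

/-! ### Actions on chief factors -/

namespace OddInvolution

section Action

variable {V : Type*} [AddCommGroup V]

/-- A nilpotent normal subgroup of an irreducible linear group has order prime to the order of the
module: the vectors fixed by its elements of `p`-power order form an invariant subgroup, which is
nonzero if `p` divides the order of the module. -/
lemma coprime_of_irred [Finite V] {Q : Subgroup (GLV V)} (hnil : Group.IsNilpotent Q)
    {S : Set (GLV V)} (hS : ∀ g ∈ S, ∀ q ∈ Q, g⁻¹ * q * g ∈ Q)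
    (hirr : ∀ F : AddSubgroup V, (∀ g ∈ S, g ∈ stab F) → F = ⊥ ∨ F = ⊤) :
    (Nat.card Q).Coprime (Nat.card V) := by
  by_contra hc
  obtain ⟨p, hp, hpQ, hpV⟩ := Nat.Prime.not_coprime_iff_dvd.mp hc
  have : Fact p.Prime := ⟨hp⟩
  let F : AddSubgroup V :=
    { carrier := {v | ∀ q ∈ Q, (∃ k, q ^ p ^ k = 1) → q • v = v}
      zero_mem' := fun q _ _ => smul_zero q
      add_mem' := fun {a b} ha hb q hq hk => by rw [smul_add, ha q hq hk, hb q hq hk]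
      neg_mem' := fun {a} ha q hq hk => by rw [smul_neg, ha q hq hk] }
  have hF : ∀ {v : V}, v ∈ F ↔ ∀ q ∈ Q, (∃ k, q ^ p ^ k = 1) → q • v = v := Iff.rfl
  have hinv : ∀ g ∈ S, g ∈ stab F := by
    intro g hg
    apply mem_stab
    intro v hv
    rw [hF] at hv ⊢
    rintro q hq ⟨k, hk⟩
    have h1 := hv _ (hS g hg q hq) ⟨k, by
      have : (g⁻¹ * q * g) ^ p ^ k = g⁻¹ * q ^ p ^ k * g := by
        have := conj_pow (a := g⁻¹) (b := q) (i := p ^ k)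
        rwa [inv_inv] at this
      rw [this, hk]; group⟩
    rw [mul_smul, mul_smul, inv_smul_eq_iff] at h1
    exact h1
  obtain ⟨T⟩ : Nonempty (Sylow p Q) := inferInstance
  have hTn : (T : Subgroup Q).Normal := inferInstance
  have huniq := T.unique_of_normal hTn
  obtain ⟨v, hv, hv0⟩ := T.isPGroup'.exists_fixed_point_of_prime_dvd_card_of_fixed_point V hpV
    (a := 0) (fun t => smul_zero t)
  have hvF : v ∈ F := by
    rw [hF]
    rintro q hq ⟨k, hk⟩
    have hpg : IsPGroup p (Subgroup.zpowers (⟨q, hq⟩ : Q)) := by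
      rintro ⟨x, hx⟩
      obtain ⟨n, rfl⟩ := Subgroup.mem_zpowers_iff.mp hx
      refine ⟨k, Subtype.ext ?_⟩
      change ((⟨q, hq⟩ : Q) ^ n) ^ p ^ k = 1
      rw [← zpow_natCast, ← zpow_mul, mul_comm, zpow_mul, zpow_natCast,
        show (⟨q, hq⟩ : Q) ^ p ^ k = 1 from Subtype.ext hk, one_zpow]
    obtain ⟨T', hT'⟩ := hpg.exists_le_sylow
    have : T' = T := (huniq.uniq T').trans (huniq.uniq T).symm
    rw [this] at hT'
    exact hv ⟨⟨q, hq⟩, hT' (Subgroup.mem_zpowers _)⟩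
  rcases hirr F hinv with h | h
  · rw [h, AddSubgroup.mem_bot] at hvF
    exact hv0 hvF.symm
  · obtain ⟨q, hq⟩ := exists_prime_orderOf_dvd_card' p hpQ
    have h1 : q ^ p = 1 := by rw [← hq]; exact pow_orderOf_eq_one q
    have : (q : GLV V) = 1 := by
      apply glv_ext
      intro w
      have hw : w ∈ F := by rw [h]; trivial
      rw [one_smul]
      exact hw q q.2 ⟨1, by rw [pow_one]; exact congrArg Subtype.val h1⟩
    have : q = 1 := Subtype.ext this
    rw [this, orderOf_one] at hq
    exact hp.one_lt.ne hq

/-- The two bounds for an action `φ` of `M` on `V` which is irreducible together with `α`, and a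
normal subgroup `K` of `M` acting as a nilpotent group. -/
lemma action_bounds {M : Type*} [Group M] [Finite M] (hM : Odd (Nat.card M)) {σ : MulAut M}
    (hσ : σ * σ = 1) [Finite V] (hV : Odd (Nat.card V)) (φ : M →* GLV V) {α : GLV V}
    (hα : α * α = 1) (hφ : ∀ m, φ (σ m) = MulAut.conj α (φ m))
    (hirr : ∀ F : AddSubgroup V, (∀ m, φ m ∈ stab F) → α ∈ stab F → F = ⊥ ∨ F = ⊤)
    {K : Subgroup M} (hK : K.Normal) (hKσ : SInv σ K)
    (hnil : ∃ n, K.lowerCentralSeries n ≤ φ.ker) :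
    (ii σ K = ii σ (K ⊓ φ.ker) ∨ 2 * ii σ K ≤ cV α ⊤ ^ 2 * ii σ (K ⊓ φ.ker)) ∧
    ii σ K * cc σ (K ⊓ φ.ker) ≤ cV α ⊤ * cc σ K * ii σ (K ⊓ φ.ker) := by
  have hKodd : Odd (Nat.card K) := hM.of_dvd_nat (Subgroup.card_subgroup_dvd_card K)
  have hQσ : SInv (MulAut.conj α) (K.map φ) := by
    rintro _ ⟨k, hk, rfl⟩
    exact ⟨σ k, hKσ k hk, hφ k⟩
  have hQnil : Group.IsNilpotent (K.map φ) := by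
    obtain ⟨n, hn⟩ := hnil
    rw [Subgroup.isNilpotent_iff_lowerCentralSeries]
    refine ⟨n, ?_⟩
    rw [← Subgroup.map_lowerCentralSeries, Subgroup.map_eq_bot_iff]
    exact hn
  have hgood : Good (K.map φ) := by
    refine ⟨hQnil, hKodd.of_dvd_nat ⟨_, (card_map_mul_card_ker φ K).symm⟩, ?_⟩
    refine coprime_of_irred hQnil (S := Set.range φ ∪ {α}) ?_ ?_
    · rintro g (⟨m, rfl⟩ | rfl) _ ⟨k, hk, rfl⟩
      · refine ⟨m⁻¹ * k * m, ?_, by simp⟩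
        have := hK.conj_mem k hk m⁻¹
        rwa [inv_inv] at this
      · refine ⟨σ k, hKσ k hk, ?_⟩
        have hα' : g⁻¹ = g := inv_eq_of_mul_eq_one_left hα
        rw [hφ, MulAut.conj_apply, hα']
    · intro F hF
      exact hirr F (fun m => hF _ (Or.inl ⟨m, rfl⟩)) (hF _ (Or.inr rfl))
  have h := stmtL V hV α hα _ hgood hQσ
  have h1 := cc_map_mul hσ hφ hKodd hKσ
  have h2 := ii_map_mul hσ (conj_sq hα) hφ hKodd hKσ
  rw [← h1, ← h2]
  generalize ii (MulAut.conj α) (K.map φ) = I at *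
  generalize cc (MulAut.conj α) (K.map φ) = C at *
  generalize ii σ (K ⊓ φ.ker) = J at *
  generalize cc σ (K ⊓ φ.ker) = D at *
  refine ⟨?_, ?_⟩
  · rcases h.1 with h | h
    · left; rw [h, one_mul]
    · right
      rw [← mul_assoc]
      exact Nat.mul_le_mul_right _ h
  · calc I * J * D = I * (J * D) := by ring
      _ ≤ cV α ⊤ * C * (J * D) := Nat.mul_le_mul_right _ h.2
      _ = _ := by ring

end Action

open scoped IsMulCommutative

section Chief

/-- The additive endomorphism of an abelian subgroup induced by an automorphism preserving it. -/
def actEnd {G : Type*} [Group G] (A : Subgroup G) [IsMulCommutative A] (τ : MulAut G)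
    (h : ∀ a ∈ A, τ a ∈ A) : AddMonoid.End (Additive A) where
  toFun := fun a => Additive.ofMul ⟨τ (Additive.toMul a : A), h _ (Additive.toMul a).2⟩
  map_zero' := congrArg Additive.ofMul (Subtype.ext (map_one τ))
  map_add' := fun a b => congrArg Additive.ofMul (Subtype.ext (map_mul τ _ _))
end Chief
end OddInvolution

namespace OddInvolution

open scoped IsMulCommutative

section Chief

variable {G : Type*} [Group G] {A : Subgroup G} [IsMulCommutative A]

/-- The action on an abelian subgroup `A` of a group acting by automorphisms preserving `A`. -/
def actHom {M : Type*} [Group M] (A : Subgroup G) [IsMulCommutative A] (ψ : M →* MulAut G)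
    (h : ∀ m, ∀ a ∈ A, ψ m a ∈ A) : M →* GLV (Additive A) :=
  MonoidHom.toHomUnits
    { toFun := fun m => actEnd A (ψ m) (h m)
      map_one' := by
        ext a
        change ψ 1 _ = _
        rw [map_one]; rfl
      map_mul' := by
        intro m n
        ext a
        change ψ (m * n) _ = _
        rw [map_mul]; rfl }

/-- The action on an abelian subgroup `A` of an involutory automorphism preserving `A`. -/
def actInvol (A : Subgroup G) [IsMulCommutative A] (τ : MulAut G) (hτ : τ * τ = 1)
    (h : ∀ a ∈ A, τ a ∈ A) : GLV (Additive A) where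
  val := actEnd A τ h
  inv := actEnd A τ h
  val_inv := by
    ext a
    exact invol_apply hτ _
  inv_val := by
    ext a
    exact invol_apply hτ _

lemma actInvol_sq {τ : MulAut G} {hτ : τ * τ = 1} {h : ∀ a ∈ A, τ a ∈ A} :
    actInvol A τ hτ h * actInvol A τ hτ h = 1 :=
  Units.ext (actInvol A τ hτ h).val_inv

lemma cV_actInvol {τ : MulAut G} {hτ : τ * τ = 1} {h : ∀ a ∈ A, τ a ∈ A} :
    cV (actInvol A τ hτ h) ⊤ = cc τ A := by
  refine Nat.card_congr
    { toFun := fun v => ⟨(Additive.toMul v.1 : A), (Additive.toMul v.1).2,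
        congrArg (fun w : Additive A => ((Additive.toMul w : A) : G)) v.2.2⟩
      invFun := fun x => ⟨Additive.ofMul ⟨x.1, x.2.1⟩, trivial,
        congrArg Additive.ofMul (Subtype.ext x.2.2)⟩
      left_inv := fun v => rfl
      right_inv := fun x => rfl }

end Chief

lemma lcs_commutator_mem {M : Type*} [Group M] {X B Y : Subgroup M} (h : ⁅X, B⁆ ≤ Y) {x b : M}
    (hx : x ∈ X) (hb : b ∈ B) : x * b * x⁻¹ * b⁻¹ ∈ Y :=
  h (Subgroup.commutator_mem_commutator hx hb)

/-- The bounds for one chief factor `X / Y` of the extension by `σ`. -/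
lemma chief_step {M : Type*} [Group M] [Finite M] (hM : Odd (Nat.card M)) {σ : MulAut M}
    (hσ : σ * σ = 1) {X Y b K : Subgroup M} (hX : X.Normal) (hY : Y.Normal)
    (hK : K.Normal) (hXσ : SInv σ X) (hYσ : SInv σ Y) (hKσ : SInv σ K)
    (hYX : Y ≤ X) (hXb : X ≤ b) (hbK : b ≤ K) (hXb' : ⁅X, b⁆ ≤ Y)
    (hnil : ∃ n, K.lowerCentralSeries n ≤ b)
    (hirr : ∀ Z : Subgroup M, Z.Normal → SInv σ Z → Y ≤ Z → Z ≤ X → Z = Y ∨ Z = X) :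
    ∃ K' : Subgroup M, K'.Normal ∧ SInv σ K' ∧ b ≤ K' ∧ K' ≤ K ∧ ⁅X, K'⁆ ≤ Y ∧
      (ii σ K = ii σ K' ∨ 2 * ii σ K * cc σ Y ^ 2 ≤ cc σ X ^ 2 * ii σ K') ∧
      ii σ K * cc σ K' * cc σ Y ≤ cc σ X * cc σ K * ii σ K' := by
  let π := QuotientGroup.mk' Y
  have hker : π.ker = Y := QuotientGroup.ker_mk' Y
  have hmapY : Y.map (σ : M ≃* M).toMonoidHom = Y := by
    apply le_antisymm
    · rintro _ ⟨y, hy, rfl⟩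
      exact hYσ y hy
    · intro y hy
      exact ⟨σ y, hYσ y hy, invol_apply hσ y⟩
  let τ : MulAut (M ⧸ Y) := QuotientGroup.congr Y Y σ hmapY
  have hτπ : ∀ x, π (σ x) = τ (π x) := fun x => rfl
  have hsurj : Function.Surjective π := QuotientGroup.mk'_surjective Y
  have hτ : τ * τ = 1 := by
    ext x
    obtain ⟨x, rfl⟩ := hsurj x
    rw [MulAut.mul_apply, ← hτπ, ← hτπ, invol_apply hσ]; rfl
  have hAc : IsMulCommutative (X.map π) := by
    refine ⟨⟨?_⟩⟩
    rintro ⟨_, x, hx, rfl⟩ ⟨_, y, hy, rfl⟩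
    apply Subtype.ext
    change π x * π y = π y * π x
    rw [← mul_inv_eq_one, mul_inv_rev, ← mul_assoc, ← map_mul, ← map_inv, ← map_inv, ← map_mul,
      ← map_mul]
    have := lcs_commutator_mem hXb' hx (hXb hy)
    rw [← hker] at this
    exact this
  have hAn : (X.map π).Normal := hX.map π hsurj
  have hψ : ∀ m, ∀ a ∈ X.map π, (MulAut.conj.comp π) m a ∈ X.map π :=
    fun m a ha => hAn.conj_mem a ha (π m)
  have hAτ : SInv τ (X.map π) := sinv_map (fun x _ => hτπ x) hXσ
  let φ := actHom (X.map π) (MulAut.conj.comp π) hψ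
  let α := actInvol (X.map π) τ hτ hAτ
  have hφs : ∀ m v, ((Additive.toMul (φ m • v) : X.map π) : M ⧸ Y) =
      π m * (Additive.toMul v : X.map π) * (π m)⁻¹ := fun _ _ => rfl
  have hαs : ∀ v, ((Additive.toMul (α • v) : X.map π) : M ⧸ Y) = τ (Additive.toMul v : X.map π) :=
    fun _ => rfl
  have hφ : ∀ m, φ (σ m) = MulAut.conj α (φ m) := by
    intro m
    apply glv_ext
    intro v
    rw [MulAut.conj_apply, inv_eq_of_mul_eq_one_left (actInvol_sq : α * α = 1), mul_smul, mul_smul]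
    apply Additive.toMul.injective
    apply Subtype.ext
    rw [hφs, hαs, hφs, hαs, map_mul, map_mul, map_inv, hτπ, invol_apply hτ]
  have hkerφ : ∀ m, m ∈ φ.ker ↔ ∀ x ∈ X, x * m * x⁻¹ * m⁻¹ ∈ Y := by
    have haux : ∀ m x, x * m * x⁻¹ * m⁻¹ ∈ Y ↔ π m * π x * (π m)⁻¹ = π x := by
      intro m x
      have h0 : x * m * x⁻¹ * m⁻¹ ∈ Y ↔ x * m * x⁻¹ * m⁻¹ ∈ π.ker := by rw [hker]
      rw [h0, MonoidHom.mem_ker, map_mul, map_mul, map_mul, map_inv, map_inv, mul_inv_eq_one,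
        mul_inv_eq_iff_eq_mul, mul_inv_eq_iff_eq_mul]
      exact eq_comm
    intro m
    rw [MonoidHom.mem_ker]
    constructor
    · intro h x hx
      rw [haux]
      have h1 := hφs m (Additive.ofMul ⟨π x, x, hx, rfl⟩)
      rw [h, one_smul] at h1
      exact h1.symm
    · intro h
      apply glv_ext
      intro v
      rw [one_smul]
      apply Additive.toMul.injective
      apply Subtype.ext
      rw [hφs]
      obtain ⟨x, hx, hxv⟩ := (Additive.toMul v : X.map π).2
      rw [← hxv]
      exact (haux m x).mp (h x hx)
  have hbker : b ≤ φ.ker := fun m hm => (hkerφ m).mpr fun x hx => lcs_commutator_mem hXb' hx hm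
  have hXodd : Odd (Nat.card X) := hM.of_dvd_nat (Subgroup.card_subgroup_dvd_card X)
  have hV : Odd (Nat.card (Additive (X.map π))) :=
    hXodd.of_dvd_nat ⟨_, (card_map_mul_card_ker π X).symm⟩
  have hirr' : ∀ F : AddSubgroup (Additive (X.map π)), (∀ m, φ m ∈ stab F) → α ∈ stab F →
      F = ⊥ ∨ F = ⊤ := by
    intro F hFφ hFα
    have hmem : ∀ {x}, π x ∈ X.map π → x ∈ X := by
      rintro x ⟨y, hy, hyx⟩
      have : y⁻¹ * x ∈ Y := by
        rw [← hker, MonoidHom.mem_ker, map_mul, map_inv, hyx, inv_mul_cancel]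
      simpa using X.mul_mem hy (hYX this)
    let Z : Subgroup M :=
      { carrier := {x | ∃ h : π x ∈ X.map π, Additive.ofMul (⟨π x, h⟩ : X.map π) ∈ F}
        one_mem' := ⟨by rw [map_one]; exact one_mem _, F.zero_mem⟩
        mul_mem' := by
          rintro x y ⟨hx, hx'⟩ ⟨hy, hy'⟩
          exact ⟨by rw [map_mul]; exact mul_mem hx hy, F.add_mem hx' hy'⟩
        inv_mem' := by
          rintro x ⟨hx, hx'⟩
          exact ⟨by rw [map_inv]; exact inv_mem hx, F.neg_mem hx'⟩ }
    have hZ : ∀ {x}, x ∈ Z ↔ ∃ h : π x ∈ X.map π, Additive.ofMul (⟨π x, h⟩ : X.map π) ∈ F :=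
      Iff.rfl
    have hZn : Z.Normal := by
      refine ⟨fun x hx m => ?_⟩
      obtain ⟨h, hx'⟩ := hZ.mp hx
      refine hZ.mpr ⟨by rw [map_mul, map_mul, map_inv]; exact hAn.conj_mem _ h _, ?_⟩
      exact stab_smul (hFφ m) hx'
    have hZσ : SInv σ Z := by
      intro x hx
      obtain ⟨h, hx'⟩ := hZ.mp hx
      refine hZ.mpr ⟨by rw [hτπ]; exact hAτ _ h, ?_⟩
      exact stab_smul hFα hx'
    have hYZ : Y ≤ Z := by
      intro y hy
      have h1 : π y = 1 := by rw [← MonoidHom.mem_ker, hker]; exact hy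
      refine hZ.mpr ⟨by rw [h1]; exact one_mem _, ?_⟩
      convert F.zero_mem
      exact Subtype.ext h1
    rcases hirr Z hZn hZσ hYZ (fun x hx => hmem (hZ.mp hx).1) with h | h
    · left
      rw [eq_bot_iff]
      intro v hv
      obtain ⟨x, hx, hxv⟩ := (Additive.toMul v : X.map π).2
      have hvx : v = Additive.ofMul (⟨π x, x, hx, rfl⟩ : X.map π) := Subtype.ext hxv.symm
      have hxZ : x ∈ Z := hZ.mpr ⟨⟨x, hx, rfl⟩, hvx ▸ hv⟩
      rw [h, ← hker, MonoidHom.mem_ker] at hxZ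
      rw [AddSubgroup.mem_bot]
      exact Subtype.ext (hxv.symm.trans hxZ)
    · right
      rw [eq_top_iff]
      intro v _
      obtain ⟨x, hx, hxv⟩ := (Additive.toMul v : X.map π).2
      have hvx : v = Additive.ofMul (⟨π x, x, hx, rfl⟩ : X.map π) := Subtype.ext hxv.symm
      rw [← h] at hx
      rw [hvx]
      exact (hZ.mp hx).2
  obtain ⟨n, hn⟩ := hnil
  have key := action_bounds hM hσ hV φ (actInvol_sq : α * α = 1) hφ hirr' hK hKσ
    ⟨n, hn.trans hbker⟩
  have hc := cc_map_mul hσ hτπ hXodd hXσ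
  rw [hker, inf_eq_right.mpr hYX] at hc
  have hcV : cV α ⊤ = cc τ (X.map π) := cV_actInvol
  rw [hcV] at key
  refine ⟨K ⊓ φ.ker, inferInstance, hKσ.inf (sinv_ker hφ), le_inf hbK hbker, inf_le_left, ?_, ?_, ?_⟩
  · rw [Subgroup.commutator_le]
    exact fun x hx m hm => (hkerφ m).mp hm.2 x hx
  · refine key.1.imp_right fun h => ?_
    rw [← hc]
    calc _ ≤ _ := Nat.mul_le_mul_right (cc σ Y ^ 2) h
      _ = _ := by ring
  · rw [← hc]
    calc _ ≤ _ := Nat.mul_le_mul_right (cc σ Y) key.2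
      _ = _ := by ring

end OddInvolution

/-! ### Chief series between consecutive terms of the Fitting series -/

namespace OddInvolution

section Chain

variable {M : Type*} [Group M]

lemma sinv_commutator {σ : MulAut M} {P Q : Subgroup M} (hP : SInv σ P) (hQ : SInv σ Q) :
    SInv σ ⁅P, Q⁆ := by
  have : ⁅P, Q⁆ ≤ ⁅P, Q⁆.comap σ.toMonoidHom := by
    rw [Subgroup.commutator_le]
    intro p hp q hq
    rw [Subgroup.mem_comap]
    rw [map_commutatorElement]
    exact Subgroup.commutator_mem_commutator (hP p hp) (hQ q hq)
  exact fun x hx => this hx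

lemma sup_commutator_le {P Y b : Subgroup M} [hY : Y.Normal] :
    ⁅P ⊔ Y, b⁆ ≤ ⁅P, b⁆ ⊔ Y := by
  have h : (⁅P ⊔ Y, b⁆).map (QuotientGroup.mk' Y) ≤ (⁅P, b⁆).map (QuotientGroup.mk' Y) := by
    have h0 : Y.map (QuotientGroup.mk' Y) = ⊥ := by
      rw [Subgroup.map_eq_bot_iff, QuotientGroup.ker_mk']
    rw [Subgroup.map_commutator, Subgroup.map_commutator, Subgroup.map_sup, h0, sup_bot_eq]
  rwa [Subgroup.map_le_iff_le_comap, Subgroup.comap_map_eq, QuotientGroup.ker_mk'] at h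

/-- A normal subgroup `b` that is nilpotent modulo a subgroup of `Y` centralizes a factor `X / Y`
admitting no normal `σ`-invariant subgroup strictly between `Y` and `X`: otherwise `X = [X, b]Y`,
so `X` lies in `Y` times each term of the lower central series of `b`. -/
lemma commutator_le_of_chief {σ : MulAut M} {a X Y b : Subgroup M} (hX : X.Normal) (hY : Y.Normal)
    (hb : b.Normal) (hXσ : SInv σ X) (hYσ : SInv σ Y) (hbσ : SInv σ b) (haY : a ≤ Y) (hYX : Y ≤ X)
    (hne : Y ≠ X) (hnil : ∃ n, b.lowerCentralSeries n ≤ a)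
    (hirr : ∀ Z : Subgroup M, Z.Normal → SInv σ Z → Y ≤ Z → Z ≤ X → Z = Y ∨ Z = X) :
    ⁅X, b⁆ ≤ Y := by
  rcases hirr (⁅X, b⁆ ⊔ Y) inferInstance ((sinv_commutator hXσ hbσ).sup hYσ) le_sup_right
    (sup_le (Subgroup.commutator_le_left _ _) hYX) with h | h
  · exact le_sup_left.trans h.le
  · exfalso
    have key : ∀ n, X ≤ b.lowerCentralSeries n ⊔ Y := by
      intro n
      induction n with
      | zero => exact h.ge.trans (sup_le_sup_right (Subgroup.commutator_le_right _ _) _)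
      | succ n ih =>
        rw [Subgroup.lowerCentralSeries_succ]
        calc X = ⁅X, b⁆ ⊔ Y := h.symm
          _ ≤ (⁅b.lowerCentralSeries n ⊔ Y, b⁆) ⊔ Y :=
            sup_le_sup_right (Subgroup.commutator_mono ih le_rfl) _
          _ ≤ _ := sup_le sup_commutator_le le_sup_right
    obtain ⟨n, hn⟩ := hnil
    exact hne (le_antisymm hYX ((key n).trans (sup_le (hn.trans haY) le_rfl)))

lemma lcs_descend {K X Y : Subgroup M} (h : ⁅X, K⁆ ≤ Y) {m : ℕ} (hm : K.lowerCentralSeries m ≤ X) :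
    K.lowerCentralSeries (m + 1) ≤ Y := by
  rw [Subgroup.lowerCentralSeries_succ]
  exact (Subgroup.commutator_mono hm le_rfl).trans h

/-- Going down a chief series from `X` to `a`: the product of the bounds for the chief factors. -/
lemma chain [Finite M] (hM : Odd (Nat.card M)) {σ : MulAut M} (hσ : σ * σ = 1) {a b : Subgroup M}
    (ha : a.Normal) (hb : b.Normal) (haσ : SInv σ a) (hbσ : SInv σ b)
    (hnil : ∃ n, b.lowerCentralSeries n ≤ a) (k : ℕ) :
    ∀ X : Subgroup M, Nat.card X ≤ k → X.Normal → SInv σ X → a ≤ X → X ≤ b →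
    ∀ K : Subgroup M, K.Normal → SInv σ K → b ≤ K → (∃ n, K.lowerCentralSeries n ≤ b) →
    ∃ K' : Subgroup M, K'.Normal ∧ SInv σ K' ∧ b ≤ K' ∧ K' ≤ K ∧
      (∀ m, K'.lowerCentralSeries m ≤ X → ∃ n, K'.lowerCentralSeries n ≤ a) ∧
      (ii σ K = ii σ K' ∨ 2 * ii σ K * cc σ a ^ 2 ≤ cc σ X ^ 2 * ii σ K') ∧
      ii σ K * cc σ K' * cc σ a ≤ cc σ X * cc σ K * ii σ K' := by
  induction k with
  | zero =>
    intro X hX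
    exact absurd hX (by have : 0 < Nat.card X := Nat.card_pos
                        omega)
  | succ k ih =>
    intro X hXk hX hXσ haX hXb K hK hKσ hbK hKn
    by_cases hXa : X = a
    · subst hXa
      exact ⟨K, hK, hKσ, hbK, le_rfl, fun m hm => ⟨m, hm⟩, Or.inl rfl, by
        rw [mul_right_comm, mul_comm (ii σ K), mul_right_comm]⟩
    · obtain ⟨Y, ⟨hY, hYσ, haY, hYX⟩, hmax⟩ := exists_maximal_subgroup
        (fun Y : Subgroup M => Y.Normal ∧ SInv σ Y ∧ a ≤ Y ∧ Y < X)
        ⟨a, ha, haσ, le_rfl, lt_of_le_of_ne haX (Ne.symm hXa)⟩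
      have hirr : ∀ Z : Subgroup M, Z.Normal → SInv σ Z → Y ≤ Z → Z ≤ X → Z = Y ∨ Z = X := by
        intro Z hZ hZσ hYZ hZX
        rcases eq_or_lt_of_le hZX with h | h
        · exact Or.inr h
        · exact Or.inl (hmax Z ⟨hZ, hZσ, haY.trans hYZ, h⟩ hYZ)
      have hXbY := commutator_le_of_chief hX hY hb hXσ hYσ hbσ haY hYX.le hYX.ne hnil hirr
      obtain ⟨K₁, hK₁, hK₁σ, hbK₁, hK₁K, hcom, hA, hB⟩ :=
        chief_step hM hσ hX hY hK hXσ hYσ hKσ hYX.le hXb hbK hXbY hKn hirr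
      have hcard : Nat.card Y ≤ k := by
        have : Nat.card Y < Nat.card X := by
          refine lt_of_le_of_ne (Subgroup.card_le_of_le hYX.le) fun h => hYX.ne ?_
          exact Subgroup.eq_of_le_of_card_ge hYX.le h.ge
        omega
      obtain ⟨n, hn⟩ := hKn
      obtain ⟨K₂, hK₂, hK₂σ, hbK₂, hK₂K₁, hlcs, hA', hB'⟩ :=
        ih Y hcard hY hYσ haY (hYX.le.trans hXb) K₁ hK₁ hK₁σ hbK₁
          ⟨n, (Subgroup.lowerCentralSeries_mono n hK₁K).trans hn⟩
      refine ⟨K₂, hK₂, hK₂σ, hbK₂, hK₂K₁.trans hK₁K, ?_, ?_, ?_⟩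
      · intro m hm
        exact hlcs _ (lcs_descend ((Subgroup.commutator_mono le_rfl hK₂K₁).trans hcom) hm)
      · have ca := cc_pos σ a
        have cY := cc_pos σ Y
        have haY' := cc_mono σ haY
        have hYX' := cc_mono σ hYX.le
        rcases hA with hA | hA <;> rcases hA' with hA' | hA'
        · exact Or.inl (hA.trans hA')
        · right
          rw [hA]
          exact hA'.trans (Nat.mul_le_mul_right _ (Nat.pow_le_pow_left hYX' 2))
        · right
          rw [← hA']
          exact (Nat.mul_le_mul_left _ (Nat.pow_le_pow_left haY' 2)).trans hA
        · right
          refine Nat.le_of_mul_le_mul_right ?_ (pow_pos cY 2)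
          calc 2 * ii σ K * cc σ a ^ 2 * cc σ Y ^ 2 = 2 * ii σ K * cc σ Y ^ 2 * cc σ a ^ 2 := by ring
            _ ≤ cc σ X ^ 2 * ii σ K₁ * cc σ a ^ 2 := Nat.mul_le_mul_right _ hA
            _ ≤ cc σ X ^ 2 * (2 * ii σ K₁ * cc σ a ^ 2) := by
              rw [mul_assoc]; apply Nat.mul_le_mul_left; rw [mul_assoc]; omega
            _ ≤ cc σ X ^ 2 * (cc σ Y ^ 2 * ii σ K₂) := Nat.mul_le_mul_left _ hA'
            _ = _ := by ring
      · have c1 := cc_pos σ K₁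
        have cY := cc_pos σ Y
        have i1 := ii_pos σ K₁
        refine Nat.le_of_mul_le_mul_right ?_ (Nat.mul_pos (Nat.mul_pos c1 cY) i1)
        calc _ = (ii σ K * cc σ K₁ * cc σ Y) * (ii σ K₁ * cc σ K₂ * cc σ a) := by ring
          _ ≤ _ := Nat.mul_le_mul hB hB'
          _ = _ := by ring

/-- The bounds for a section `c / b` of a normal series `a ≤ b ≤ c`, where `b / a` contains the
normal subgroups between `b` and `c` that are nilpotent modulo `a`. -/
lemma layer [Finite M] (hM : Odd (Nat.card M)) {σ : MulAut M} (hσ : σ * σ = 1) {a b c : Subgroup M}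
    (ha : a.Normal) (hb : b.Normal) (hc : c.Normal) (haσ : SInv σ a) (hbσ : SInv σ b)
    (hcσ : SInv σ c) (hab : a ≤ b) (hbc : b ≤ c) (hba : ∃ n, b.lowerCentralSeries n ≤ a)
    (hcb : ∃ n, c.lowerCentralSeries n ≤ b)
    (hmax : ∀ R : Subgroup M, R.Normal → (∃ n, R.lowerCentralSeries n ≤ a) → R ≤ b) :
    (ii σ c = ii σ b ∨ 2 * ii σ c * cc σ a ^ 2 ≤ cc σ b ^ 2 * ii σ b) ∧
      ii σ c * cc σ a ≤ cc σ c * ii σ b := by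
  obtain ⟨K, hK, hKσ, hbK, hKc, hlcs, hA, hB⟩ := chain hM hσ ha hb haσ hbσ hba _ b le_rfl hb hbσ
    hab le_rfl c hc hcσ hbc hcb
  obtain ⟨n, hn⟩ := hcb
  have : K = b :=
    le_antisymm (hmax K hK (hlcs n ((Subgroup.lowerCentralSeries_mono n hKc).trans hn))) hbK
  subst this
  refine ⟨hA, Nat.le_of_mul_le_mul_right ?_ (cc_pos σ K)⟩
  calc _ = _ := by ring
    _ ≤ _ := hB
    _ = _ := by ring

end Chain

end OddInvolution

/-! ### The Fitting series -/

namespace OddInvolution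

section FittingSeries

variable {G : Type*} [Group G]

lemma sinv_one (Q : Subgroup G) : SInv (1 : MulAut G) Q := fun _ hx => hx

lemma commutator_le_iff_le_comap {X Y R : Subgroup G} [Y.Normal] :
    ⁅R, X⁆ ≤ Y ↔ R ≤ (Subgroup.centralizer
      (X.map (QuotientGroup.mk' Y) : Set (G ⧸ Y))).comap (QuotientGroup.mk' Y) := by
  rw [← Subgroup.map_le_iff_le_comap, ← Subgroup.commutator_eq_bot_iff_le_centralizer,
    ← Subgroup.map_commutator, Subgroup.map_eq_bot_iff, QuotientGroup.ker_mk']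

/-- The Fitting subgroup centralizes every chief factor of a finite group, so it is nilpotent. -/
lemma fitting_lcs [Finite G] : ∃ n, (Fitting G).lowerCentralSeries n = ⊥ := by
  have key : ∀ k, ∀ X : Subgroup G, Nat.card X ≤ k → X.Normal → ∀ m,
      (Fitting G).lowerCentralSeries m ≤ X → ∃ n, (Fitting G).lowerCentralSeries n = ⊥ := by
    intro k
    induction k with
    | zero =>
      intro X hX
      exact absurd hX (by have : 0 < Nat.card X := Nat.card_pos
                          omega)
    | succ k ih =>
      intro X hXk hX m hm
      by_cases hXa : X = ⊥
      · exact ⟨m, le_bot_iff.mp (hXa ▸ hm)⟩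
      obtain ⟨Y, ⟨hY, hYX⟩, hmax⟩ := exists_maximal_subgroup
        (fun Y : Subgroup G => Y.Normal ∧ Y < X) ⟨⊥, inferInstance, bot_lt_iff_ne_bot.mpr hXa⟩
      have hirr : ∀ Z : Subgroup G, Z.Normal → SInv (1 : MulAut G) Z → Y ≤ Z → Z ≤ X →
          Z = Y ∨ Z = X := by
        intro Z hZ _ hYZ hZX
        rcases eq_or_lt_of_le hZX with h | h
        · exact Or.inr h
        · exact Or.inl (hmax Z ⟨hZ, h⟩ hYZ)
      have hF : ⁅Fitting G, X⁆ ≤ Y := by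
        rw [commutator_le_iff_le_comap]
        refine iSup₂_le fun R hR => ?_
        rw [← commutator_le_iff_le_comap, Subgroup.commutator_comm]
        obtain ⟨n, hn⟩ := (Subgroup.isNilpotent_iff_lowerCentralSeries R).mp hR.2
        exact commutator_le_of_chief (a := ⊥) hX hY hR.1 (sinv_one X) (sinv_one Y) (sinv_one R)
          bot_le hYX.le hYX.ne ⟨n, hn.le⟩ hirr
      rw [Subgroup.commutator_comm] at hF
      have hcard : Nat.card Y ≤ k := by
        have : Nat.card Y < Nat.card X := by
          refine lt_of_le_of_ne (Subgroup.card_le_of_le hYX.le) fun h => hYX.ne ?_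
          exact Subgroup.eq_of_le_of_card_ge hYX.le h.ge
        omega
      exact ih Y hcard hY (m + 1) (lcs_descend hF hm)
  exact key _ ⊤ le_rfl inferInstance 0 le_top

lemma le_fitting {R : Subgroup G} (hR : R.Normal) (h : ∃ n, R.lowerCentralSeries n = ⊥) :
    R ≤ Fitting G :=
  le_iSup₂ (f := fun (N : Subgroup G) (_ : N.Normal ∧ Group.IsNilpotent N) => N) R
    ⟨hR, (Subgroup.isNilpotent_iff_lowerCentralSeries R).mpr h⟩

/-- What is used of the Fitting series: each term is the largest normal subgroup which is nilpotent
modulo the previous one. -/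
structure FitLike (F : ℕ → Subgroup G) : Prop where
  zero : F 0 = ⊥
  normal : ∀ i, (F i).Normal
  nil : ∀ i, ∃ n, (F (i + 1)).lowerCentralSeries n ≤ F i
  max : ∀ i, ∀ R : Subgroup G, R.Normal → (∃ n, R.lowerCentralSeries n ≤ F i) → R ≤ F (i + 1)

lemma fitLike_fittingSeries [Finite G] : FitLike (fun i => (fittingSeries G i).1) where
  zero := rfl
  normal := fun i => (fittingSeries G i).2
  nil := by
    intro i
    have hn : (fittingSeries G i).1.Normal := (fittingSeries G i).2
    let π := QuotientGroup.mk' (fittingSeries G i).1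
    have hs : (fittingSeries G (i + 1)).1 = (Fitting (G ⧸ (fittingSeries G i).1)).comap π := rfl
    obtain ⟨n, h⟩ := fitting_lcs (G := G ⧸ (fittingSeries G i).1)
    refine ⟨n, ?_⟩
    have h1 : ((fittingSeries G (i + 1)).1.lowerCentralSeries n).map π = ⊥ := by
      rw [Subgroup.map_lowerCentralSeries, hs,
        Subgroup.map_comap_eq_self_of_surjective (QuotientGroup.mk'_surjective _), h]
    rwa [Subgroup.map_eq_bot_iff, QuotientGroup.ker_mk'] at h1
  max := by
    rintro i R hR ⟨n, h⟩
    have hn : (fittingSeries G i).1.Normal := (fittingSeries G i).2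
    let π := QuotientGroup.mk' (fittingSeries G i).1
    have hs : (fittingSeries G (i + 1)).1 = (Fitting (G ⧸ (fittingSeries G i).1)).comap π := rfl
    change R ≤ (fittingSeries G (i + 1)).1
    rw [hs, ← Subgroup.map_le_iff_le_comap]
    refine le_fitting (hR.map π (QuotientGroup.mk'_surjective _)) ⟨n, ?_⟩
    rw [← Subgroup.map_lowerCentralSeries, Subgroup.map_eq_bot_iff, QuotientGroup.ker_mk']
    exact h

lemma FitLike.le_succ {F : ℕ → Subgroup G} (hF : FitLike F) (i : ℕ) : F i ≤ F (i + 1) :=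
  hF.max i _ (hF.normal i) ⟨0, le_rfl⟩

/-- The terms of the series are characteristic. -/
lemma FitLike.sinv {F : ℕ → Subgroup G} (hF : FitLike F) (σ : MulAut G) (i : ℕ) :
    SInv σ (F i) := by
  induction i with
  | zero =>
    intro x hx
    rw [hF.zero, Subgroup.mem_bot] at *
    rw [hx, map_one]
  | succ i ih =>
    obtain ⟨n, hn⟩ := hF.nil i
    intro x hx
    refine hF.max i ((F (i + 1)).map σ.toMonoidHom)
      ((hF.normal (i + 1)).map _ (MulEquiv.surjective σ)) ⟨n, ?_⟩ ⟨x, hx, rfl⟩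
    rw [← Subgroup.map_lowerCentralSeries]
    rintro _ ⟨y, hy, rfl⟩
    exact ih y (hn hy)

/-- If the series does not grow at one place, it is constant from there on. -/
lemma FitLike.stuck {F : ℕ → Subgroup G} (hF : FitLike F) {i : ℕ} (h : F (i + 1) ≤ F i) (j : ℕ) :
    F (i + j) ≤ F i := by
  induction j with
  | zero => exact le_rfl
  | succ j ih =>
    obtain ⟨n, hn⟩ := hF.nil (i + j)
    exact (hF.max i _ (hF.normal _) ⟨n, hn.trans ih⟩).trans h

/-- If `M = [M, σ]` and `σ` fixes no more points in `F_{i+1}` than in `F_i`, then `σ` inverts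
`F_{i+1} / F_i`, so this factor is central in `M` and the series stops growing. -/
lemma FitLike.cc_lt [Finite G] {F : ℕ → Subgroup G} (hF : FitLike F) (hG : Odd (Nat.card G))
    {σ : MulAut G} (hσ : σ * σ = 1) (htop : comSub σ ⊤ = ⊤) {i j : ℕ} (hij : i + 1 < j)
    (hj : F j = ⊤) (hne : F (i + 1) ≠ ⊤) : 3 * cc σ (F i) ≤ cc σ (F (i + 1)) := by
  have hodd : ∀ Q : Subgroup G, Odd (Nat.card Q) :=
    fun Q => hG.of_dvd_nat (Subgroup.card_subgroup_dvd_card Q)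
  have hle := hF.le_succ i
  have hY := hF.normal i
  have hdvd : cc σ (F i) ∣ cc σ (F (i + 1)) := by
    rw [cc_eq, cc_eq]
    exact Subgroup.card_dvd_of_le (inf_le_inf_right _ hle)
  obtain ⟨d, hd⟩ := hdvd
  have hdodd : Odd d := (cc_odd σ (hodd (F (i + 1)))).of_dvd_nat ⟨_, hd.trans (mul_comm _ _)⟩
  by_cases hd1 : d = 1
  · exfalso
    rw [hd1, mul_one, cc_eq, cc_eq] at hd
    have heq : F i ⊓ fixSub σ = F (i + 1) ⊓ fixSub σ :=
      Subgroup.eq_of_le_of_card_ge (inf_le_inf_right _ hle) hd.le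
    let π := QuotientGroup.mk' (F i)
    have hker : ∀ {x}, π x = 1 ↔ x ∈ F i := by
      intro x
      rw [← MonoidHom.mem_ker, QuotientGroup.ker_mk']
    have hinv : ∀ x ∈ F (i + 1), π (σ x) = (π x)⁻¹ := by
      intro x hx
      obtain ⟨c, hc, y, hy, hcσ, hyσ, rfl⟩ :=
        exists_fix_mul_inv hσ (hodd _) (hF.sinv σ (i + 1)) hx
      have hc' : c ∈ F i ⊓ fixSub σ := by
        rw [heq]; exact ⟨hc, hcσ⟩
      have hc1 : π c = 1 := hker.mpr hc'.1
      rw [map_mul, hcσ, hyσ, map_mul, map_mul, map_inv, hc1, one_mul, one_mul]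
    have hcom : ⁅F (i + 1), ⊤⁆ ≤ F i := by
      rw [Subgroup.commutator_comm, commutator_le_iff_le_comap, ← htop, comSub,
        Subgroup.closure_le]
      rintro _ ⟨m, -, rfl⟩
      rw [SetLike.mem_coe, Subgroup.mem_comap, Subgroup.mem_centralizer_iff]
      rintro _ ⟨x, hx, rfl⟩
      change π x * π (m⁻¹ * σ m) = π (m⁻¹ * σ m) * π x
      have h1 := hinv (m * x⁻¹ * m⁻¹) ((hF.normal (i + 1)).conj_mem _ (inv_mem hx) m)
      have h2 := hinv x⁻¹ (inv_mem hx)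
      simp only [map_mul, map_inv, mul_inv_rev, inv_inv] at h1 h2 ⊢
      rw [h2] at h1
      -- `h1 : π (σ m) * π x * (π (σ m))⁻¹ = π m * π x * (π m)⁻¹`
      rw [mul_inv_eq_iff_eq_mul] at h1
      rw [mul_assoc, h1]
      group
    obtain ⟨n, hn⟩ := hF.nil (i + 1)
    have hst : F (i + 2) ≤ F (i + 1) := hF.max i _ (hF.normal _) ⟨n + 1,
      lcs_descend ((Subgroup.commutator_mono le_rfl le_top).trans hcom) hn⟩
    obtain ⟨k, rfl⟩ := Nat.exists_eq_add_of_lt hij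
    apply hne
    rw [eq_top_iff, ← hj, add_assoc (i + 1)]
    exact hF.stuck hst (k + 1)
  · have : 3 ≤ d := by
      obtain ⟨e, rfl⟩ := hdodd
      omega
    rw [hd, mul_comm]
    exact Nat.mul_le_mul_left _ this

/-- The bound on the index of `F_1` in a group with `M = [M, σ]` of Fitting height `t + 2`. -/
lemma FitLike.index_le [Finite G] {F : ℕ → Subgroup G} (hF : FitLike F) (hG : Odd (Nat.card G))
    {σ : MulAut G} (hσ : σ * σ = 1) (htop : comSub σ ⊤ = ⊤) {t : ℕ}
    (ht : F (t + 2) = ⊤) (hne : ∀ i < t + 2, F i ≠ ⊤) :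
    2 ^ t * (F 1).index ≤ cc σ ⊤ ^ 2 * cc σ (F t) ∧ 3 * cc σ (F t) ≤ cc σ ⊤ := by
  have hodd : ∀ Q : Subgroup G, Odd (Nat.card Q) :=
    fun Q => hG.of_dvd_nat (Subgroup.card_subgroup_dvd_card Q)
  have h3 : ∀ i ≤ t, 3 * cc σ (F i) ≤ cc σ (F (i + 1)) := fun i hi =>
    hF.cc_lt hG hσ htop (j := t + 2) (by omega) ht (hne _ (by omega))
  have hlayer := fun i => layer hG hσ (hF.normal i) (hF.normal (i + 1)) (hF.normal (i + 2))
    (hF.sinv σ i) (hF.sinv σ (i + 1)) (hF.sinv σ (i + 2)) (hF.le_succ i) (hF.le_succ (i + 1))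
    (hF.nil i) (hF.nil (i + 1)) (hF.max i)
  have hA : ∀ i ≤ t, 2 * ii σ (F (i + 2)) * cc σ (F i) ^ 2 ≤
      cc σ (F (i + 1)) ^ 2 * ii σ (F (i + 1)) := by
    intro i hi
    rcases (hlayer i).1 with h | h
    · rw [h]
      have := Nat.pow_le_pow_left (h3 i hi) 2
      nlinarith [ii_pos σ (F (i + 1)), cc_pos σ (F i)]
    · exact h
  have hind : ∀ j ≤ t, 2 ^ j * ii σ (F (j + 1)) ≤ cc σ (F j) ^ 2 * ii σ (F 1) := by
    intro j
    induction j with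
    | zero =>
      intro _
      have := cc_pos σ (F 0)
      rw [pow_zero]
      exact Nat.mul_le_mul_right _ (Nat.one_le_pow _ _ this)
    | succ j ih =>
      intro hj
      have ih := ih (by omega)
      refine Nat.le_of_mul_le_mul_right ?_ (pow_pos (cc_pos σ (F j)) 2)
      calc 2 ^ (j + 1) * ii σ (F (j + 1 + 1)) * cc σ (F j) ^ 2
          = 2 ^ j * (2 * ii σ (F (j + 2)) * cc σ (F j) ^ 2) := by ring
        _ ≤ 2 ^ j * (cc σ (F (j + 1)) ^ 2 * ii σ (F (j + 1))) :=
          Nat.mul_le_mul_left _ (hA j (by omega))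
        _ = cc σ (F (j + 1)) ^ 2 * (2 ^ j * ii σ (F (j + 1))) := by ring
        _ ≤ cc σ (F (j + 1)) ^ 2 * (cc σ (F j) ^ 2 * ii σ (F 1)) := Nat.mul_le_mul_left _ ih
        _ = _ := by ring
  have hB := (hlayer t).2
  rw [ht] at hB
  refine ⟨?_, (h3 t le_rfl).trans (cc_mono σ le_top)⟩
  have hcard := (F 1).index_mul_card
  rw [← ii_mul_cc hσ (hodd _) (hF.sinv σ 1), ← Subgroup.card_top,
    ← ii_mul_cc hσ (hodd ⊤) (fun _ _ => trivial)] at hcard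
  have hi := hind t le_rfl
  have c1 := cc_pos σ (F 1)
  have ct := cc_pos σ (F t)
  have i1 := ii_pos σ (F 1)
  have hp : 0 < ii σ (F 1) * cc σ (F t) := Nat.mul_pos i1 ct
  refine Nat.le_of_mul_le_mul_right ?_ hp
  calc 2 ^ t * (F 1).index * (ii σ (F 1) * cc σ (F t))
      ≤ 2 ^ t * ((F 1).index * (ii σ (F 1) * cc σ (F 1))) * cc σ (F t) := by
        have : 2 ^ t * (F 1).index * (ii σ (F 1) * cc σ (F t)) * 1 ≤
          2 ^ t * (F 1).index * (ii σ (F 1) * cc σ (F t)) * cc σ (F 1) :=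
            Nat.mul_le_mul_left _ c1
        calc _ = _ := (mul_one _).symm
          _ ≤ _ := this
          _ = _ := by ring
    _ = 2 ^ t * (ii σ (⊤ : Subgroup G) * cc σ (F t)) * cc σ (⊤ : Subgroup G) := by
        rw [hcard]; ring
    _ ≤ 2 ^ t * (cc σ (⊤ : Subgroup G) * ii σ (F (t + 1))) * cc σ (⊤ : Subgroup G) :=
        Nat.mul_le_mul_right _ (Nat.mul_le_mul_left _ hB)
    _ = cc σ (⊤ : Subgroup G) ^ 2 * (2 ^ t * ii σ (F (t + 1))) := by ring
    _ ≤ cc σ (⊤ : Subgroup G) ^ 2 * (cc σ (F t) ^ 2 * ii σ (F 1)) := Nat.mul_le_mul_left _ hi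
    _ = _ := by ring

end FittingSeries

section Restrict

variable {N : Type*} [Group N]

/-- The restriction of an involutory automorphism to an invariant subgroup. -/
def restr (σ : MulAut N) (hσ : σ * σ = 1) (M : Subgroup N) (hM : SInv σ M) : MulAut M where
  toFun := fun x => ⟨σ x, hM x x.2⟩
  invFun := fun x => ⟨σ x, hM x x.2⟩
  left_inv := fun x => Subtype.ext (invol_apply hσ x)
  right_inv := fun x => Subtype.ext (invol_apply hσ x)
  map_mul' := fun x y => Subtype.ext (map_mul σ _ _)

variable {σ : MulAut N} {hσ : σ * σ = 1} {M : Subgroup N} {hM : SInv σ M}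

lemma restr_sq : restr σ hσ M hM * restr σ hσ M hM = 1 := by
  ext x
  exact invol_apply hσ (x : N)

lemma cc_restr (S : Subgroup M) : cc (restr σ hσ M hM) S = cc σ (S.map M.subtype) :=
  Nat.card_congr
    { toFun := fun x => ⟨x.1, ⟨x.1, x.2.1, rfl⟩, congrArg Subtype.val x.2.2⟩
      invFun := fun x => ⟨⟨x.1, by obtain ⟨y, -, hy⟩ := x.2.1; exact hy ▸ y.2⟩, by
        obtain ⟨y, hyS, hy⟩ := x.2.1
        have : y = ⟨x.1, by exact hy ▸ y.2⟩ := Subtype.ext hy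
        exact this ▸ hyS, Subtype.ext x.2.2⟩
      left_inv := fun _ => rfl
      right_inv := fun _ => rfl }

lemma comSub_restr (h : comSub σ M = M) : comSub (restr σ hσ M hM) ⊤ = ⊤ := by
  apply Subgroup.map_injective M.subtype_injective
  rw [comSub, MonoidHom.map_closure, ← MonoidHom.range_eq_map, Subgroup.range_subtype]
  refine Eq.trans ?_ h
  rw [comSub]
  congr 1
  ext x
  constructor
  · rintro ⟨_, ⟨q, -, rfl⟩, rfl⟩
    exact ⟨q, q.2, rfl⟩
  · rintro ⟨q, hq, rfl⟩
    exact ⟨_, ⟨⟨q, hq⟩, trivial, rfl⟩, rfl⟩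

end Restrict

end OddInvolution

/-! ### The index of the Fitting subgroup -/

namespace OddInvolution

section Final

variable {N : Type*} [Group N]

/-- The image in `N` of the first term of the Fitting series of a normal subgroup lies in the
Fitting subgroup of `N`, as it is characteristic in the normal subgroup. -/
lemma FitLike.map_le_fitting {M : Subgroup N} (hM : M.Normal) {F : ℕ → Subgroup M}
    (hF : FitLike F) : (F 1).map M.subtype ≤ Fitting N := by
  apply le_fitting
  · refine ⟨?_⟩
    rintro _ ⟨x, hx, rfl⟩ n
    exact ⟨_, hF.sinv (MulAut.conjNormal n) 1 x hx, rfl⟩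
  · obtain ⟨n, hn⟩ := hF.nil 0
    refine ⟨n, ?_⟩
    rw [← Subgroup.map_lowerCentralSeries, le_bot_iff.mp (hn.trans hF.zero.le), Subgroup.map_bot]

end Final

end OddInvolution

open OddInvolution in
/-- **Theorem 3, non-nilpotent case.** Let `N` be a finite group of odd order and `α` an
automorphism of `N` of order `2`.  Suppose that `M = [N, α]` (the subgroup generated by all
`n⁻¹ * α n`) has Fitting height `h ≥ 2`.  Then
`[N : F(N)] < |C_{F_{h-2}(M)}(α)|·|C_M(α)|·|C_N(α)| / 2^(h-3)`, and this quantity is at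
most `(2/3)·(|C_N(α)|^3 / 2^(h-2))`. -/
theorem index_fitting_lt_of_fitting_height
    {N : Type*} [Group N] [Finite N] (hN : Odd (Nat.card N))
    (α : MulAut N) (hα : orderOf α = 2)
    (M : Subgroup N) (hM : M = Subgroup.closure {x : N | ∃ n : N, x = n⁻¹ * α n})
    (h : ℕ) (hh : fittingHeight M = h) (h2 : 2 ≤ h)
    (cF cM cN : ℕ)
    (hcF : cF = Nat.card
      {x : N // x ∈ Subgroup.map M.subtype (fittingSeries M (h - 2)).1 ∧ α x = x})
    (hcM : cM = Nat.card {x : N // x ∈ M ∧ α x = x})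
    (hcN : cN = Nat.card {x : N // α x = x}) :
    ((Fitting N).index : ℚ) < (cF * cM * cN : ℚ) / (2 : ℚ) ^ ((h : ℤ) - 3) ∧
      (cF * cM * cN : ℚ) / (2 : ℚ) ^ ((h : ℤ) - 3) ≤
        2 / 3 * ((cN : ℚ) ^ 3 / (2 : ℚ) ^ ((h : ℤ) - 2)) := by
  have hσ : α * α = 1 := by rw [← pow_two, ← hα, pow_orderOf_eq_one]
  have hodd : ∀ Q : Subgroup N, Odd (Nat.card Q) :=
    fun Q => hN.of_dvd_nat (Subgroup.card_subgroup_dvd_card Q)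
  have htopσ : SInv α (⊤ : Subgroup N) := fun _ _ => trivial
  have hMc : M = comSub α ⊤ := by
    rw [hM, comSub]
    simp only [Subgroup.mem_top, true_and]
  have hMσ : SInv α M := hMc ▸ comSub_sinv hσ
  have hMn : M.Normal := ⟨fun x hx n => by
    rw [hMc] at hx ⊢
    exact comSub_normBy n (Subgroup.mem_top n) x hx⟩
  have hMM : comSub α M = M := by
    rw [hMc]; exact comSub_idem hσ (hodd ⊤) htopσ
  have hF := fitLike_fittingSeries (G := M)
  have hset : fittingHeight M = sInf {n : ℕ | (fittingSeries M n).1 = ⊤} := rfl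
  rw [hh] at hset
  have hne : ({n : ℕ | (fittingSeries M n).1 = ⊤}).Nonempty := by
    by_contra hemp
    rw [Set.not_nonempty_iff_eq_empty] at hemp
    rw [hemp, Nat.sInf_empty] at hset
    omega
  obtain ⟨t, rfl⟩ : ∃ t, h = t + 2 := ⟨h - 2, by omega⟩
  have ht : (fittingSeries M (t + 2)).1 = ⊤ := by
    rw [hset]; exact Nat.sInf_mem hne
  have hlt : ∀ i < t + 2, (fittingSeries M i).1 ≠ ⊤ := fun i hi hi' => by
    rw [hset] at hi
    exact Nat.notMem_of_lt_sInf hi hi'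
  obtain ⟨k1, k2⟩ := hF.index_le (hodd M) (restr_sq (hσ := hσ) (hM := hMσ)) (comSub_restr hMM)
    ht hlt
  have eF : cc (restr α hσ M hMσ) (fittingSeries M t).1 = cF := by
    rw [cc_restr, hcF]; rfl
  have eM : cc (restr α hσ M hMσ) ⊤ = cM := by
    rw [cc_restr, ← MonoidHom.range_eq_map, Subgroup.range_subtype, hcM]; rfl
  have eN : cc α (⊤ : Subgroup N) = cN := by
    rw [hcN, cc]
    simp only [Subgroup.mem_top, true_and]
  have eM' : cc α M = cM := by rw [hcM]; rfl
  rw [eF, eM] at k1 k2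
  -- `[N : M] = |C_N(α)| / |C_M(α)|`, since `M` contains all elements inverted by `α`
  have hidx : cN = cM * M.index := by
    have e1 := ii_mul_cc hσ (hodd ⊤) htopσ
    have e2 := ii_mul_cc hσ (hodd M) hMσ
    have e3 := M.index_mul_card
    have e4 : ii α M = ii α (⊤ : Subgroup N) := by
      rw [hMc]; exact ii_comSub (hodd ⊤) htopσ
    rw [Subgroup.card_top, eN] at e1
    rw [eM', e4] at e2
    refine Nat.eq_of_mul_eq_mul_left (ii_pos α (⊤ : Subgroup N)) ?_
    rw [e1, ← e3, ← e2]; ring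
  have hfit : (Fitting N).index ≤ (fittingSeries M 1).1.index * M.index := by
    have h1 : ((fittingSeries M 1).1.map M.subtype).index =
        (fittingSeries M 1).1.index * M.index := by
      rw [Subgroup.index_map_subtype]
    rw [← h1]
    refine Nat.le_of_dvd (Nat.pos_of_ne_zero Subgroup.index_ne_zero_of_finite) ?_
    exact Subgroup.index_dvd_of_le (hF.map_le_fitting hMn)
  have hMpos : 0 < cM := eM' ▸ cc_pos α M
  have hFpos : 0 < cF := eF ▸ cc_pos _ _
  have hNpos : 0 < cN := eN ▸ cc_pos _ _
  have hMN : cM ≤ cN := eM' ▸ eN ▸ cc_mono α le_top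
  have hmain : 2 ^ t * (Fitting N).index ≤ cF * cM * cN := by
    calc 2 ^ t * (Fitting N).index ≤ 2 ^ t * ((fittingSeries M 1).1.index * M.index) :=
          Nat.mul_le_mul_left _ hfit
      _ = 2 ^ t * (fittingSeries M 1).1.index * M.index := by ring
      _ ≤ cM ^ 2 * cF * M.index := Nat.mul_le_mul_right _ k1
      _ = cF * cM * cN := by rw [hidx]; ring
  have e3 : (2 : ℚ) ^ (((t + 2 : ℕ) : ℤ) - 3) = 2 ^ t / 2 := by
    rw [show ((t + 2 : ℕ) : ℤ) - 3 = (t : ℤ) - 1 by push_cast; ring,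
      zpow_sub₀ (by norm_num), zpow_natCast, zpow_one]
  have e2 : (2 : ℚ) ^ (((t + 2 : ℕ) : ℤ) - 2) = 2 ^ t := by
    rw [show ((t + 2 : ℕ) : ℤ) - 2 = (t : ℤ) by push_cast; ring, zpow_natCast]
  have hp : (0 : ℚ) < 2 ^ t := by positivity
  have hmainq : (2 : ℚ) ^ t * (Fitting N).index ≤ cF * cM * cN := by exact_mod_cast hmain
  have hposq : (0 : ℚ) < cF * cM * cN := by
    have := Nat.mul_pos (Nat.mul_pos hFpos hMpos) hNpos
    exact_mod_cast this
  rw [e3, e2]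
  constructor
  · rw [lt_div_iff₀ (by positivity)]
    linarith
  · have hle : 3 * (cF * cM * cN) ≤ cN ^ 3 := by
      calc 3 * (cF * cM * cN) = (3 * cF) * cM * cN := by ring
        _ ≤ cN * cN * cN :=
          Nat.mul_le_mul_right _ (Nat.mul_le_mul (k2.trans hMN) hMN)
        _ = cN ^ 3 := by ring
    have hleq : (3 : ℚ) * (cF * cM * cN) ≤ cN ^ 3 := by exact_mod_cast hle
    rw [div_le_iff₀ (by positivity)]
    have : 2 / 3 * ((cN : ℚ) ^ 3 / 2 ^ t) * (2 ^ t / 2) = cN ^ 3 / 3 := by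
      field_simp
    rw [this]
    linarith
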